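/- Suppose f₁, f₂ : ℝ → ℝ are real-analytic and T-periodic for some T > 0, f₁(t) < f₂(t) for all t, and g ≥ 0. Then every trajectory of the Fermi–Ulam model in the external field has bounded velocity: sup_n vₙ < ∞. -/

import Mathlib

open Filter Topology

/-- A trajectory of the Fermi–Ulam model in an external field with downward
acceleration `g`, lower plate `f₁` and upper plate `f₂`: `t n` are the collision
times with the lower plate, `v n > 0` the velocities just after those collisions,
`tt n` the collision times with the upper plate and `vv n < 0` the velocities
just after those collisions. -/
def IsFUTrajectory (g : ℝ) (f₁ f₂ : ℝ → ℝ) (t v tt vv : ℕ → ℝ) : Prop :=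
  ∀ n : ℕ,
    0 < v n ∧ vv n < 0 ∧
    t n < tt n ∧ tt n < t (n + 1) ∧
    f₂ (tt n) - f₁ (t n) = v n * (tt n - t n) - g / 2 * (tt n - t n) ^ 2 ∧
    (∀ s : ℝ, t n < s →
      f₂ s - f₁ (t n) = v n * (s - t n) - g / 2 * (s - t n) ^ 2 → tt n ≤ s) ∧
    vv n = -(v n) + g * (tt n - t n) + 2 * deriv f₂ (tt n) ∧
    f₂ (tt n) - f₁ (t (n + 1)) =
      -(vv n) * (t (n + 1) - tt n) + g / 2 * (t (n + 1) - tt n) ^ 2 ∧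
    (∀ s : ℝ, tt n < s →
      f₂ (tt n) - f₁ s = -(vv n) * (s - tt n) + g / 2 * (s - tt n) ^ 2 →
      t (n + 1) ≤ s) ∧
    v (n + 1) = v n + g * (t (n + 1) - 2 * tt n + t n)
      + 2 * deriv f₁ (t (n + 1)) - 2 * deriv f₂ (tt n)

section

namespace FU
open Complex MeasureTheory

/-- open horizontal strip -/
def strip (r : ℝ) : Set ℂ := {z | |z.im| < r}

lemma mem_strip {r : ℝ} {z : ℂ} : z ∈ strip r ↔ |z.im| < r := Iff.rfl

lemma isOpen_strip (r : ℝ) : IsOpen (strip r) :=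
  isOpen_lt (continuous_abs.comp continuous_im) continuous_const

lemma strip_mono {r s : ℝ} (h : r ≤ s) : strip r ⊆ strip s := fun _ hz => lt_of_lt_of_le hz h

lemma convex_strip (r : ℝ) : Convex ℝ (strip r) := by
  have : strip r = Complex.imLm ⁻¹' (Set.Ioo (-r) r) := by
    ext z; simp [strip, abs_lt]
  rw [this]
  exact (convex_Ioo _ _).linear_preimage _

lemma ofReal_mem_strip {r : ℝ} (hr : 0 < r) (x : ℝ) : (x : ℂ) ∈ strip r := by
  simp [strip, hr]

lemma add_real_mem_strip {r : ℝ} {z : ℂ} (hz : z ∈ strip r) (x : ℝ) : z + x ∈ strip r := by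
  simpa [strip] using hz

lemma sub_real_mem_strip {r : ℝ} {z : ℂ} (hz : z ∈ strip r) (x : ℝ) : z - x ∈ strip r := by
  simpa [strip] using hz

lemma conj_mem_strip {r : ℝ} {z : ℂ} (hz : z ∈ strip r) : (starRingEnd ℂ) z ∈ strip r := by
  simpa [strip] using hz

lemma add_mem_strip {r s : ℝ} {z w : ℂ} (hz : z ∈ strip r) (hw : ‖w‖ ≤ s) : z + w ∈ strip (r + s) := by
  have h1 := abs_im_le_norm w
  have h2 := abs_add_le z.im w.im
  simp only [strip, Set.mem_ofPred_eq, add_im] at *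
  linarith

lemma closedBall_subset_strip {r κ : ℝ} {z : ℂ} (hz : z ∈ strip (r - κ)) :
    Metric.closedBall z κ ⊆ strip r := by
  intro w hw
  have : z + (w - z) ∈ strip (r - κ + κ) := add_mem_strip hz (by
    simpa [dist_eq_norm] using hw)
  simpa using this

lemma cauchy_strip {f : ℂ → ℂ} {r κ M : ℝ} (hκ : 0 < κ) (hf : DifferentiableOn ℂ f (strip r))
    (hM : ∀ z ∈ strip r, ‖f z‖ ≤ M) {z : ℂ} (hz : z ∈ strip (r - κ)) : ‖deriv f z‖ ≤ M / κ := by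
  have hs := closedBall_subset_strip hz
  refine norm_deriv_le_of_forall_mem_sphere_norm_le hκ ?_ ?_
  · refine DifferentiableOn.diffContOnCl (hf.mono ?_)
    rw [closure_ball _ hκ.ne']; exact hs
  · intro w hw; exact hM w (hs (Metric.sphere_subset_closedBall hw))

lemma eq_of_eq_real {f g : ℂ → ℂ} {r : ℝ} (hr : 0 < r) (hf : DifferentiableOn ℂ f (strip r))
    (hg : DifferentiableOn ℂ g (strip r)) (h : ∀ x : ℝ, f x = g x) {z : ℂ} (hz : z ∈ strip r) :
    f z = g z := by
  refine AnalyticOnNhd.eqOn_of_preconnected_of_frequently_eq (z₀ := 0)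
    (hf.analyticOnNhd (isOpen_strip r)) (hg.analyticOnNhd (isOpen_strip r))
    (convex_strip r).isPreconnected (by simpa [strip] using hr) ?_ hz
  have h0 : Filter.Tendsto (fun x : ℝ => (x : ℂ)) (nhdsWithin 0 {0}ᶜ) (nhdsWithin 0 {0}ᶜ) := by
    refine tendsto_nhdsWithin_iff.2 ⟨?_, ?_⟩
    · have := (continuous_ofReal.tendsto (0:ℝ))
      simp only [ofReal_zero] at this
      exact this.mono_left nhdsWithin_le_nhds
    · filter_upwards [self_mem_nhdsWithin] with x hx
      simpa using hx
  exact h0.frequently (Filter.Frequently.of_forall h)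

/-- holomorphic, one-periodic, real-symmetric on a strip -/
structure Hol (r : ℝ) (f : ℂ → ℂ) : Prop where
  diff : DifferentiableOn ℂ f (strip r)
  per : ∀ z ∈ strip r, f (z + 1) = f z
  conj : ∀ z ∈ strip r, f ((starRingEnd ℂ) z) = (starRingEnd ℂ) (f z)

namespace Hol
variable {r s : ℝ} {f g : ℂ → ℂ}

lemma mono (hf : Hol r f) (h : s ≤ r) : Hol s f :=
  ⟨hf.diff.mono (strip_mono h), fun z hz => hf.per z (strip_mono h hz),
    fun z hz => hf.conj z (strip_mono h hz)⟩

lemma add (hf : Hol r f) (hg : Hol r g) : Hol r (fun z => f z + g z) :=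
  ⟨hf.diff.add hg.diff, fun z hz => by simp only [hf.per z hz, hg.per z hz],
    fun z hz => by simp only [hf.conj z hz, hg.conj z hz, map_add]⟩

lemma sub (hf : Hol r f) (hg : Hol r g) : Hol r (fun z => f z - g z) :=
  ⟨hf.diff.sub hg.diff, fun z hz => by simp only [hf.per z hz, hg.per z hz],
    fun z hz => by simp only [hf.conj z hz, hg.conj z hz, map_sub]⟩

lemma neg (hf : Hol r f) : Hol r (fun z => - f z) :=
  ⟨hf.diff.neg, fun z hz => by simp only [hf.per z hz],
    fun z hz => by simp only [hf.conj z hz, map_neg]⟩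

lemma mul (hf : Hol r f) (hg : Hol r g) : Hol r (fun z => f z * g z) :=
  ⟨hf.diff.mul hg.diff, fun z hz => by simp only [hf.per z hz, hg.per z hz],
    fun z hz => by simp only [hf.conj z hz, hg.conj z hz, map_mul]⟩

lemma inv (hf : Hol r f) (h0 : ∀ z ∈ strip r, f z ≠ 0) : Hol r (fun z => (f z)⁻¹) :=
  ⟨hf.diff.inv h0, fun z hz => by simp only [hf.per z hz],
    fun z hz => by simp only [hf.conj z hz, map_inv₀]⟩

lemma div (hf : Hol r f) (hg : Hol r g) (h0 : ∀ z ∈ strip r, g z ≠ 0) : Hol r (fun z => f z / g z) := by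
  simpa only [div_eq_mul_inv] using hf.mul (hg.inv h0)

lemma const (c : ℝ) : Hol r (fun _ => (c : ℂ)) :=
  ⟨differentiableOn_const _, fun _ _ => rfl, fun _ _ => by simp⟩

lemma shift (hf : Hol r f) (a : ℝ) : Hol r (fun z => f (z + a)) := by
  refine ⟨?_, ?_, ?_⟩
  · refine hf.diff.comp (by fun_prop) (fun z hz => add_real_mem_strip hz a)
  · intro z hz
    rw [← hf.per _ (add_real_mem_strip hz a)]; ring_nf
  · intro z hz
    rw [← hf.conj _ (add_real_mem_strip hz a)]; simp

lemma diffAt (hf : Hol r f) {z : ℂ} (hz : z ∈ strip r) : DifferentiableAt ℂ f z :=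
  hf.diff.differentiableAt ((isOpen_strip r).mem_nhds hz)

lemma deriv (hf : Hol r f) : Hol r (deriv f) := by
  refine ⟨hf.diff.deriv (isOpen_strip r), ?_, ?_⟩
  · intro z hz
    have h1 : (fun w => f (w + 1)) =ᶠ[nhds z] f := by
      filter_upwards [(isOpen_strip r).mem_nhds hz] with w hw using hf.per w hw
    rw [← h1.deriv_eq, deriv_comp_add_const]
  · intro z hz
    have h1 : ((starRingEnd ℂ) ∘ f ∘ (starRingEnd ℂ)) =ᶠ[nhds z] f := by
      filter_upwards [(isOpen_strip r).mem_nhds hz] with w hw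
      simp [hf.conj w hw]
    rw [← h1.deriv_eq, deriv_conj_conj]
    simp

lemma congr (hf : Hol r f) (h : ∀ z ∈ strip r, g z = f z) : Hol r g :=
  ⟨hf.diff.congr h, fun z hz => by
      rw [h z hz, h (z+1) (by simpa using add_real_mem_strip hz 1), hf.per z hz],
    fun z hz => by rw [h z hz, h _ (conj_mem_strip hz), hf.conj z hz]⟩

lemma continuous_real (hf : Hol r f) (hr : 0 < r) : Continuous (fun x : ℝ => f x) := by
  have := hf.diff.continuousOn.comp_continuous (f := fun x : ℝ => (x:ℂ)) continuous_ofReal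
    (fun x => ofReal_mem_strip hr x)
  exact this

lemma real (hf : Hol r f) (hr : 0 < r) (x : ℝ) : (f x).im = 0 := by
  have := hf.conj x (ofReal_mem_strip hr x)
  rw [conj_ofReal] at this
  exact conj_eq_iff_im.1 this.symm

lemma real' (hf : Hol r f) (hr : 0 < r) (x : ℝ) : f x = ((f x).re : ℂ) := by
  apply Complex.ext <;> simp [hf.real hr x]

end Hol

/-- mean over the real period -/
noncomputable def mean (f : ℂ → ℂ) : ℂ := ∫ x in (0:ℝ)..1, f x

lemma mean_shift {r : ℝ} {f : ℂ → ℂ} (hr : 0 < r) (hf : Hol r f) (a : ℝ) :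
    mean (fun z => f (z + a)) = mean f := by
  have hp : Function.Periodic (fun x : ℝ => f x) 1 := fun x => by
    have := hf.per x (ofReal_mem_strip hr x)
    simpa using this
  unfold mean
  have h1 : (∫ x in (0:ℝ)..1, f ((x:ℂ) + a)) = ∫ x in (0:ℝ)..1, (fun x : ℝ => f x) (x + a) := by
    simp
  rw [h1, intervalIntegral.integral_comp_add_right (fun x : ℝ => f x) a]
  have := hp.intervalIntegral_add_eq a 0
  simpa [add_comm] using this

lemma mean_deriv {r : ℝ} {f : ℂ → ℂ} (hr : 0 < r) (hf : Hol r f) : mean (deriv f) = 0 := by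
  unfold mean
  have h : ∀ x ∈ Set.uIcc (0:ℝ) 1, HasDerivAt (fun x : ℝ => f x) (deriv f x) x := fun x _ =>
    (hf.diffAt (ofReal_mem_strip hr x)).hasDerivAt.comp_ofReal
  rw [intervalIntegral.integral_eq_sub_of_hasDerivAt h
    ((hf.deriv.continuous_real hr).intervalIntegrable _ _)]
  have := hf.per 0 (by simpa using ofReal_mem_strip hr 0)
  simp at this
  simp [this]

lemma mean_add {r : ℝ} {f g : ℂ → ℂ} (hr : 0 < r) (hf : Hol r f) (hg : Hol r g) :
    mean (fun z => f z + g z) = mean f + mean g :=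
  intervalIntegral.integral_add ((hf.continuous_real hr).intervalIntegrable _ _)
    ((hg.continuous_real hr).intervalIntegrable _ _)

lemma mean_sub {r : ℝ} {f g : ℂ → ℂ} (hr : 0 < r) (hf : Hol r f) (hg : Hol r g) :
    mean (fun z => f z - g z) = mean f - mean g :=
  intervalIntegral.integral_sub ((hf.continuous_real hr).intervalIntegrable _ _)
    ((hg.continuous_real hr).intervalIntegrable _ _)

lemma mean_const_mul (c : ℂ) (f : ℂ → ℂ) : mean (fun z => c * f z) = c * mean f :=
  intervalIntegral.integral_const_mul _ _

lemma mean_norm_le {r G : ℝ} {f : ℂ → ℂ} (hr : 0 < r) (hG : ∀ z ∈ strip r, ‖f z‖ ≤ G) :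
    ‖mean f‖ ≤ G := by
  have := intervalIntegral.norm_integral_le_of_norm_le_const (a := (0:ℝ)) (b := 1) (C := G)
    (f := fun x : ℝ => f x) (fun x _ => hG x (ofReal_mem_strip hr x))
  simpa [mean] using this

lemma mean_real {r : ℝ} {f : ℂ → ℂ} (hr : 0 < r) (hf : Hol r f) : ((mean f).re : ℂ) = mean f := by
  unfold mean
  have : (fun x : ℝ => f x) = fun x : ℝ => (((f x).re : ℝ) : ℂ) := by
    ext x; exact hf.real' hr x
  rw [this, intervalIntegral.integral_ofReal]
  simp

end FU

end

section

namespace FU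
open Complex MeasureTheory

lemma contour_shift {r : ℝ} {f : ℂ → ℂ} (hf : DifferentiableOn ℂ f (strip r))
    (hp : ∀ z ∈ strip r, f (z + 1) = f z) {y : ℝ} (hy : |y| < r) :
    (∫ x in (0:ℝ)..1, f (x + y * I)) = ∫ x in (0:ℝ)..1, f x := by
  have h := integral_boundary_rect_eq_zero_of_differentiableOn f 0 (1 + y * I) (hf.mono (by
    intro z hz
    rw [mem_reProdIm] at hz
    have h2 := hz.2
    simp at h2
    rw [mem_strip]
    have := Set.abs_sub_left_of_mem_uIcc h2
    simp at this
    exact lt_of_le_of_lt this hy))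
  simp at h
  have h3 : (∫ t in (0:ℝ)..y, f (1 + t * I)) = ∫ t in (0:ℝ)..y, f (t * I) := by
    apply intervalIntegral.integral_congr
    intro t ht
    have ht' := Set.abs_sub_left_of_mem_uIcc ht
    simp at ht'
    have := hp (t * I) (by rw [mem_strip]; simp; linarith)
    simp only
    rw [← this, add_comm]
  rw [h3] at h
  linear_combination -h

/-- Fourier coefficient -/
noncomputable def coef (g : ℂ → ℂ) (k : ℤ) : ℂ :=
  ∫ x in (0:ℝ)..1, exp (-(2 * Real.pi * I * k * x)) * g x

lemma coef_bound {r G : ℝ} {g : ℂ → ℂ} (hr : 0 < r) (hg : Hol r g)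
    (hG : ∀ z ∈ strip r, ‖g z‖ ≤ G) (k : ℤ) :
    ‖coef g k‖ ≤ G * Real.exp (-(2 * Real.pi * r * |(k:ℝ)|)) := by
  have key : ∀ s : ℝ, 0 < s → s < r → ‖coef g k‖ ≤ G * Real.exp (-(2 * Real.pi * s * |(k:ℝ)|)) := by
    intro s hs hsr
    obtain ⟨y, hy, hyk⟩ : ∃ y : ℝ, |y| = s ∧ (k:ℝ) * y = - (s * |(k:ℝ)|) := by
      rcases le_total 0 (k:ℝ) with hk | hk
      · exact ⟨-s, by rw [abs_neg, abs_of_pos hs], by rw [abs_of_nonneg hk]; ring⟩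
      · exact ⟨s, abs_of_pos hs, by rw [abs_of_nonpos hk]; ring⟩
    have h1 := contour_shift (r := r) (f := fun z => exp (-(2 * Real.pi * I * k * z)) * g z)
      (by
        refine DifferentiableOn.mul ?_ hg.diff
        fun_prop)
      (by
        intro z hz
        simp only [hg.per z hz]
        congr 1
        rw [show -(2 * (Real.pi:ℂ) * I * k * (z + 1)) = -(2 * Real.pi * I * k * z) + (-k : ℤ) * (2 * Real.pi * I) by
          push_cast; ring]
        rw [exp_add, exp_int_mul_two_pi_mul_I, mul_one]) (y := y) (by rw [hy]; exact hsr)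
    unfold coef
    rw [← h1]
    have h2 := intervalIntegral.norm_integral_le_of_norm_le_const (a := (0:ℝ)) (b := 1)
      (C := G * Real.exp (-(2 * Real.pi * s * |(k:ℝ)|)))
      (f := fun x : ℝ => exp (-(2 * Real.pi * I * k * (x + y * I))) * g (x + y * I)) ?_
    · simpa using h2
    · intro x _
      rw [norm_mul, mul_comm, norm_exp]
      have : (-(2 * (Real.pi:ℂ) * I * k * (x + y * I))).re = -(2 * Real.pi * s * |(k:ℝ)|) := by
        simp
        linear_combination (2 * Real.pi) * hyk
      rw [this]
      gcongr
      apply hG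
      simp [strip, hy, hsr]
  have hlim : Filter.Tendsto (fun s : ℝ => G * Real.exp (-(2 * Real.pi * s * |(k:ℝ)|)))
      (nhdsWithin r (Set.Iio r)) (nhds (G * Real.exp (-(2 * Real.pi * r * |(k:ℝ)|)))) := by
    have : Continuous (fun s : ℝ => G * Real.exp (-(2 * Real.pi * s * |(k:ℝ)|))) := by fun_prop
    exact (this.tendsto r).mono_left nhdsWithin_le_nhds
  refine ge_of_tendsto hlim ?_
  filter_upwards [Ioo_mem_nhdsLT hr] with s hs using key s hs.1 hs.2

instance fact01 : Fact ((0:ℝ) < 1) := ⟨one_pos⟩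

lemma fourier_sum {r : ℝ} {g : ℂ → ℂ} (hr : 0 < r) (hg : Hol r g)
    (hs : Summable (coef g)) (x : ℝ) :
    HasSum (fun k : ℤ => coef g k * exp (2 * Real.pi * I * k * x)) (g x) := by
  have hp : Function.Periodic (fun x : ℝ => g x) 1 := fun x => by
    have := hg.per x (ofReal_mem_strip hr x)
    simpa using this
  let F : C(AddCircle (1:ℝ), ℂ) := ⟨hp.lift, by
    refine continuous_coinduced_dom.mpr ?_
    exact hg.continuous_real hr⟩
  have hF : ∀ x : ℝ, F (x : AddCircle (1:ℝ)) = g x := fun x => rfl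
  have hc : ∀ k : ℤ, fourierCoeff F k = coef g k := by
    intro k
    rw [fourierCoeff_eq_intervalIntegral _ _ 0]
    simp only [hF, coef]
    simp
    congr 1
    ext x
    rw [← exp_conj]
    simp [show (starRingEnd ℂ) 2 = 2 from by simpa using conj_ofReal 2]
  have := has_pointwise_sum_fourier_series_of_summable (f := F) (by
    rw [show fourierCoeff F = coef g from funext hc]; exact hs) x
  rw [hF] at this
  convert this using 1
  ext k
  rw [hc, smul_eq_mul, fourier_coe_apply]
  congr 2
  simp

lemma exp_int_bound {a κ : ℝ} (ha : 0 < a) (hκ : 0 < κ) (n : ℝ) (hn : 0 < n) (h : a ≥ κ) :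
    n * Real.exp (-(2 * Real.pi * a * n)) ≤ κ⁻¹ ^ 3 * (1 / n ^ 2) := by
  have h1 : (κ * n) ^ 3 ≤ Real.exp (2 * Real.pi * a * n) := by
    have hx : 0 ≤ κ * n := by positivity
    have h3 : κ * n ≤ Real.exp (κ * n) := by linarith [Real.add_one_le_exp (κ * n)]
    calc (κ * n) ^ 3 ≤ (Real.exp (κ * n)) ^ 3 := by gcongr
      _ = Real.exp (3 * (κ * n)) := by rw [← Real.exp_nat_mul]; norm_num
      _ ≤ _ := by
        apply Real.exp_le_exp.2
        have hpi := Real.pi_gt_three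
        have : κ * n ≤ a * n := by gcongr
        nlinarith [mul_pos ha hn]
  rw [Real.exp_neg]
  have h4 : (Real.exp (2 * Real.pi * a * n))⁻¹ ≤ ((κ * n) ^ 3)⁻¹ := by
    apply inv_anti₀ (by positivity) h1
  calc n * (Real.exp (2 * Real.pi * a * n))⁻¹ ≤ n * ((κ * n) ^ 3)⁻¹ := by gcongr
    _ = _ := by field_simp

/-- universal constant -/
noncomputable def Cs : ℝ := 1 + ∑' k : ℤ, 1 / ((k:ℝ)) ^ 2

lemma summable_Cs : Summable (fun k : ℤ => 1 / ((k:ℝ)) ^ 2) :=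
  Real.summable_one_div_int_pow.2 (by norm_num)

lemma Cs_ge_one : 1 ≤ Cs := by
  have : 0 ≤ ∑' k : ℤ, 1 / ((k:ℝ)) ^ 2 := tsum_nonneg (fun k => by positivity)
  unfold Cs; linarith

/-- Diophantine condition -/
def Dio (ω : ℝ) : Prop := ∀ k : ℤ, k ≠ 0 → ω / |(k:ℝ)| ≤ ‖exp (2 * Real.pi * I * k * ω) - 1‖

theorem solve {r G ω κ : ℝ} {g : ℂ → ℂ} (hω : 0 < ω) (hd : Dio ω) (hκ : 0 < κ) (hκr : κ < r)
    (hg : Hol r g) (hG : ∀ z ∈ strip r, ‖g z‖ ≤ G) (hm : mean g = 0) :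
    ∃ w, Hol (r - κ) w ∧ (∀ z ∈ strip (r - κ), ‖w z‖ ≤ Cs * G / (ω * κ ^ 3)) ∧
      ∀ z ∈ strip (r - κ), w (z + ω) - w z = g z := by
  have hr : 0 < r := hκ.trans hκr
  have hG0 : 0 ≤ G := (norm_nonneg _).trans (hG 0 (by simpa using ofReal_mem_strip hr 0))
  set lam : ℤ → ℂ := fun k => exp (2 * Real.pi * I * k * ω) - 1 with hlam
  set wt : ℤ → ℂ → ℂ := fun k z => coef g k / lam k * exp (2 * Real.pi * I * k * z) with hwt
  set b : ℤ → ℝ := fun k => G / (ω * κ ^ 3) * (1 / ((k:ℝ)) ^ 2) with hb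
  have hbs : Summable b := summable_Cs.mul_left _
  have hc0 : coef g 0 = 0 := by simpa [coef, mean] using hm
  have hlam0 : ∀ k : ℤ, k ≠ 0 → lam k ≠ 0 := by
    intro k hk h0
    have := hd k hk
    have h2 : 0 < |(k:ℝ)| := by simpa using hk
    have h3 : 0 < ω / |(k:ℝ)| := by positivity
    have h4 : exp (2 * Real.pi * I * k * ω) - 1 = 0 := h0
    rw [h4] at this
    simp at this
    linarith
  have hwb : ∀ k : ℤ, ∀ z ∈ strip (r - κ), ‖wt k z‖ ≤ b k := by
    intro k z hz
    by_cases hk : k = 0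
    · subst hk; simp [hwt, hb, hc0]
    have h2 : 0 < |(k:ℝ)| := by simpa using hk
    have h5 : ‖exp (2 * Real.pi * I * k * z)‖ ≤ Real.exp (2 * Real.pi * (r - κ) * |(k:ℝ)|) := by
      rw [norm_exp]
      apply Real.exp_le_exp.2
      simp
      have : -((k:ℝ) * z.im) ≤ |(k:ℝ)| * (r - κ) := by
        calc -((k:ℝ) * z.im) ≤ |(k:ℝ) * z.im| := neg_le_abs _
          _ = |(k:ℝ)| * |z.im| := abs_mul _ _
          _ ≤ _ := by gcongr; exact le_of_lt hz
      nlinarith [Real.pi_pos]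
    have h6 := coef_bound hr hg hG k
    simp only [hwt]
    rw [norm_mul, norm_div]
    calc ‖coef g k‖ / ‖lam k‖ * ‖exp (2 * Real.pi * I * k * z)‖
        ≤ (G * Real.exp (-(2 * Real.pi * r * |(k:ℝ)|))) / (ω / |(k:ℝ)|) * Real.exp (2 * Real.pi * (r - κ) * |(k:ℝ)|) := by
          gcongr
          exact hd k hk
      _ = G / ω * (|(k:ℝ)| * Real.exp (-(2 * Real.pi * κ * |(k:ℝ)|))) := by
          rw [show -(2 * Real.pi * κ * |(k:ℝ)|) = -(2 * Real.pi * r * |(k:ℝ)|) + 2 * Real.pi * (r - κ) * |(k:ℝ)| by ring, Real.exp_add]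
          field_simp
      _ ≤ G / ω * (κ⁻¹ ^ 3 * (1 / |(k:ℝ)| ^ 2)) := by
          exact mul_le_mul_of_nonneg_left (exp_int_bound hκ hκ _ h2 le_rfl) (by positivity)
      _ = b k := by
          simp only [hb]; rw [sq_abs]; field_simp
  have hcs : Summable (coef g) := by
    refine Summable.of_norm_bounded (g := fun k : ℤ => G * (r⁻¹ ^ 3 * (1 / ((k:ℝ)) ^ 2))) ?_ ?_
    · exact (summable_Cs.mul_left _).mul_left _
    · intro k
      by_cases hk : k = 0
      · subst hk; simp [hc0]
      have h2 : 1 ≤ |(k:ℝ)| := by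
        have := Int.one_le_abs hk
        exact_mod_cast this
      refine (coef_bound hr hg hG k).trans ?_
      gcongr
      have := exp_int_bound hr hr |(k:ℝ)| (by linarith) le_rfl
      rw [sq_abs] at this
      refine le_trans ?_ this
      have h0 := Real.exp_pos (-(2 * Real.pi * r * |(k:ℝ)|))
      nlinarith
  set w : ℂ → ℂ := fun z => ∑' k, wt k z with hw
  have hwd : DifferentiableOn ℂ w (strip (r - κ)) := by
    refine differentiableOn_tsum_of_summable_norm hbs ?_ (isOpen_strip _) hwb
    intro k
    simp only [hwt]; fun_prop
  have hwbd : ∀ z ∈ strip (r - κ), ‖w z‖ ≤ Cs * G / (ω * κ ^ 3) := by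
    intro z hz
    refine (tsum_of_norm_bounded hbs.hasSum (fun k => hwb k z hz)).trans ?_
    rw [hb, tsum_mul_left]
    have : 0 ≤ G / (ω * κ ^ 3) := by positivity
    unfold Cs
    calc _ ≤ G / (ω * κ ^ 3) * (1 + ∑' k : ℤ, 1 / ((k:ℝ)) ^ 2) := by gcongr; linarith
      _ = _ := by ring
  have hsum : ∀ z ∈ strip (r - κ), HasSum (fun k => wt k z) (w z) := fun z hz =>
    (Summable.of_norm_bounded hbs (fun k => hwb k z hz)).hasSum
  have hper : ∀ z, w (z + 1) = w z := by
    intro z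
    simp only [hw, hwt]
    congr 1; ext k
    congr 1
    rw [show (2 * (Real.pi:ℂ) * I * k * (z + 1)) = (2 * Real.pi * I * k * z) + (k : ℤ) * (2 * Real.pi * I) by ring]
    rw [exp_add, exp_int_mul_two_pi_mul_I, mul_one]
  have hrκ : 0 < r - κ := by linarith
  have heq : ∀ z ∈ strip (r - κ), w (z + ω) - w z = g z := by
    intro z hz
    refine eq_of_eq_real (f := fun z => w (z + ω) - w z) hrκ ?_ (hg.diff.mono (strip_mono (by linarith))) ?_ hz
    · refine DifferentiableOn.sub ?_ hwd
      exact hwd.comp (by fun_prop) (fun z hz => add_real_mem_strip hz ω)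
    · intro x
      have hx := ofReal_mem_strip hrκ x
      have h1 := (hsum _ (add_real_mem_strip hx ω)).sub (hsum _ hx)
      have h2 := fourier_sum hr hg hcs x
      refine h1.unique ?_
      refine h2.congr_fun ?_
      intro k
      by_cases hk : k = 0
      · subst hk; simp [hwt, hc0]
      have := hlam0 k hk
      simp only [hwt]
      rw [mul_add, exp_add]
      field_simp
      rw [mul_assoc]
      congr 1
      simp only [hlam]; ring_nf
  refine ⟨fun z => (w z + (starRingEnd ℂ) (w ((starRingEnd ℂ) z))) / 2, ⟨?_, ?_, ?_⟩, ?_, ?_⟩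
  · refine DifferentiableOn.div_const (hwd.add ?_) _
    intro z hz
    have h1 : DifferentiableAt ℂ w ((starRingEnd ℂ) z) :=
      hwd.differentiableAt ((isOpen_strip _).mem_nhds (conj_mem_strip hz))
    have := h1.conj_conj
    simp only [conj_conj] at this
    exact this.differentiableWithinAt
  · intro z _
    simp only [map_add, map_one, hper]
  · intro z _
    simp only [conj_conj, map_add, map_div₀]
    rw [add_comm, show (starRingEnd ℂ) 2 = 2 from by simpa using conj_ofReal 2]
  · intro z hz
    have h1 := hwbd z hz
    have h2 := hwbd _ (conj_mem_strip hz)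
    rw [norm_div]
    have := norm_add_le (w z) ((starRingEnd ℂ) (w ((starRingEnd ℂ) z)))
    rw [RCLike.norm_conj] at this
    simp only [RCLike.norm_ofNat]
    linarith
  · intro z hz
    have h1 := heq z hz
    have h2 := heq _ (conj_mem_strip hz)
    rw [hg.conj z (strip_mono (by linarith) hz)] at h2
    have h3 := congrArg (starRingEnd ℂ) h2
    simp only [map_sub, conj_conj] at h3
    simp only [map_add, conj_ofReal]
    linear_combination (h1 + h3) / 2

end FU

end

section

namespace FU
open Complex

lemma sqrt2_dio (p m : ℤ) (hm : m ≠ 0) : 1 / (4 * |(m:ℝ)|) ≤ |(p:ℝ) - m * Real.sqrt 2| := by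
  have hm1 : 1 ≤ |(m:ℝ)| := by
    have := Int.one_le_abs hm
    exact_mod_cast this
  by_cases h : 1 ≤ |(p:ℝ) - m * Real.sqrt 2|
  · refine le_trans ?_ h
    rw [div_le_one (by positivity)]; linarith
  push Not at h
  have hs : Real.sqrt 2 ^ 2 = 2 := Real.sq_sqrt (by norm_num)
  have hs0 : 0 ≤ Real.sqrt 2 := Real.sqrt_nonneg 2
  have hs1 : Real.sqrt 2 ≤ 3 / 2 := by nlinarith
  have hne : p ^ 2 - 2 * m ^ 2 ≠ 0 := by
    intro h0
    have h1 : (p:ℝ) ^ 2 = 2 * m ^ 2 := by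
      have : (p ^ 2 : ℤ) = 2 * m ^ 2 := by linarith
      exact_mod_cast this
    apply irrational_sqrt_two
    have hm0 : (m:ℝ) ≠ 0 := by exact_mod_cast hm
    refine ⟨|(p:ℚ)| / |(m:ℚ)|, ?_⟩
    push_cast
    rw [← abs_div, ← Real.sqrt_sq_eq_abs]
    congr 1
    field_simp; linarith
  have h1 : (1:ℝ) ≤ |(p:ℝ) ^ 2 - 2 * m ^ 2| := by
    have := Int.one_le_abs hne
    exact_mod_cast this
  have h2 : (p:ℝ) ^ 2 - 2 * m ^ 2 = (p - m * Real.sqrt 2) * (p + m * Real.sqrt 2) := by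
    linear_combination (-(m:ℝ)^2) * hs * (-1)
  rw [h2, abs_mul] at h1
  have h3 : |(p:ℝ) + m * Real.sqrt 2| ≤ 4 * |(m:ℝ)| := by
    have : (p:ℝ) + m * Real.sqrt 2 = (p - m * Real.sqrt 2) + 2 * (m * Real.sqrt 2) := by ring
    rw [this]
    refine (abs_add_le _ _).trans ?_
    rw [abs_mul 2, abs_mul (m:ℝ), abs_of_nonneg hs0]
    norm_num
    nlinarith
  rw [div_le_iff₀ (by positivity)]
  calc 1 ≤ _ := h1
    _ ≤ _ := by gcongr

lemma norm_exp_sub_one_ge (x : ℝ) (m : ℤ) (h : |x - m| ≤ 1 / 2) :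
    4 * |x - m| ≤ ‖exp (2 * Real.pi * I * x) - 1‖ := by
  have h1 : exp (2 * Real.pi * I * x) = exp (I * ((2 * Real.pi * (x - m) : ℝ) : ℂ)) := by
    rw [← exp_periodic.sub_int_mul_eq (n := m)]
    congr 1; push_cast; ring
  rw [h1, norm_exp_I_mul_ofReal_sub_one, norm_mul]
  have hpi := Real.pi_pos
  have h2 : |2 * Real.pi * (x - m) / 2| ≤ Real.pi / 2 := by
    rw [show 2 * Real.pi * (x - m) / 2 = Real.pi * (x - m) by ring, abs_mul, abs_of_pos hpi]
    nlinarith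
  have h3 := Real.mul_abs_le_abs_sin h2
  rw [show 2 * Real.pi * (x - m) / 2 = Real.pi * (x - m) by ring, abs_mul, abs_of_pos hpi] at h3
  rw [show 2 * Real.pi * (x - m) / 2 = Real.pi * (x - m) by ring]
  have h4 : 2 / Real.pi * (Real.pi * |x - m|) = 2 * |x - m| := by field_simp
  rw [h4] at h3
  simp only [Real.norm_eq_abs]
  norm_num
  linarith

lemma dio_aux (N : ℕ) : Dio (1 / (N + Real.sqrt 2)) := by
  intro k hk
  set ω : ℝ := 1 / (N + Real.sqrt 2) with hω
  have hs : Real.sqrt 2 ^ 2 = 2 := Real.sq_sqrt (by norm_num)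
  have hs0 : 0 ≤ Real.sqrt 2 := Real.sqrt_nonneg 2
  have hs1 : 1 ≤ Real.sqrt 2 := by nlinarith
  have hN : (0:ℝ) ≤ N := Nat.cast_nonneg N
  have hd : 0 < N + Real.sqrt 2 := by linarith
  have hω0 : 0 < ω := by positivity
  have hω1 : ω ≤ 1 := by rw [hω, div_le_one hd]; linarith
  have hk1 : 1 ≤ |(k:ℝ)| := by
    have := Int.one_le_abs hk
    exact_mod_cast this
  set m : ℤ := round ((k:ℝ) * ω) with hm
  have hr : |(k:ℝ) * ω - m| ≤ 1 / 2 := abs_sub_round _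
  have h1 := norm_exp_sub_one_ge ((k:ℝ) * ω) m hr
  rw [show (2 * (Real.pi:ℂ) * I * (((k:ℝ) * ω : ℝ) : ℂ)) = 2 * Real.pi * I * k * ω by push_cast; ring] at h1
  refine le_trans ?_ h1
  by_cases hm0 : m = 0
  · rw [hm0]; simp only [Int.cast_zero, sub_zero]
    rw [abs_mul, abs_of_pos hω0]
    rw [div_le_iff₀ (by positivity)]
    nlinarith [mul_le_mul hk1 hk1 (by norm_num) (by positivity)]
  have h2 := sqrt2_dio (k - m * N) m hm0
  have h3 : (k:ℝ) * ω - m = ω * (((k - m * N : ℤ) : ℝ) - m * Real.sqrt 2) := by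
    push_cast; rw [hω]; field_simp; ring
  have hmk : |(m:ℝ)| ≤ |(k:ℝ)| := by
    have h4 : |(m:ℝ)| ≤ |(k:ℝ)| + 1 / 2 := by
      have : (m:ℝ) = k * ω - (k * ω - m) := by ring
      rw [this]
      refine (abs_sub _ _).trans ?_
      rw [abs_mul, abs_of_pos hω0]
      nlinarith
    by_contra hcon
    push Not at hcon
    have : |k| < |m| := by exact_mod_cast hcon
    have h5 : |k| + 1 ≤ |m| := this
    have h6 : |(k:ℝ)| + 1 ≤ |(m:ℝ)| := by exact_mod_cast h5
    linarith
  rw [h3, abs_mul, abs_of_pos hω0]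
  have hm1 : 0 < |(m:ℝ)| := by simpa using hm0
  calc ω / |(k:ℝ)| ≤ ω / |(m:ℝ)| := by gcongr
    _ = 4 * (ω * (1 / (4 * |(m:ℝ)|))) := by field_simp
    _ ≤ _ := by gcongr

lemma exists_dio (ε : ℝ) (hε : 0 < ε) : ∃ ω : ℝ, 0 < ω ∧ ω < ε ∧ Dio ω := by
  obtain ⟨N, hN⟩ := exists_nat_gt (1 / ε)
  have hs0 : 0 ≤ Real.sqrt 2 := Real.sqrt_nonneg 2
  have h1 : 0 < 1 / ε := by positivity
  refine ⟨1 / (N + Real.sqrt 2), by positivity, ?_, dio_aux N⟩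
  rw [div_lt_comm₀ (by linarith) hε]
  linarith
end FU

end

section

namespace FU
open Complex

/-- holomorphic degree one lifts on the strip -/
structure LHol (r : ℝ) (x : ℂ → ℂ) : Prop where
  diff : DifferentiableOn ℂ x (strip r)
  per : ∀ z ∈ strip r, x (z + 1) = x z + 1
  conj : ∀ z ∈ strip r, x ((starRingEnd ℂ) z) = (starRingEnd ℂ) (x z)

namespace LHol
variable {r s : ℝ} {x y : ℂ → ℂ}

lemma mono (hf : LHol r x) (h : s ≤ r) : LHol s x :=
  ⟨hf.diff.mono (strip_mono h), fun z hz => hf.per z (strip_mono h hz),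
    fun z hz => hf.conj z (strip_mono h hz)⟩

lemma diffAt (hf : LHol r x) {z : ℂ} (hz : z ∈ strip r) : DifferentiableAt ℂ x z :=
  hf.diff.differentiableAt ((isOpen_strip r).mem_nhds hz)

lemma toHol (hf : LHol r x) : Hol r (fun z => x z - z) :=
  ⟨hf.diff.sub differentiableOn_id, fun z hz => by simp only [hf.per z hz]; ring,
    fun z hz => by simp only [hf.conj z hz, map_sub]⟩

lemma ofHol (hf : Hol r (fun z => x z - z)) : LHol r x := by
  refine ⟨?_, ?_, ?_⟩
  · have := hf.diff.add (g := fun z => z) differentiableOn_id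
    refine this.congr ?_
    intro z _; simp
  · intro z hz; have := hf.per z hz; linear_combination this
  · intro z hz; have := hf.conj z hz; simp only [map_sub] at this; linear_combination this

lemma sub (hx : LHol r x) (hy : LHol r y) : Hol r (fun z => x z - y z) := by
  refine (hx.toHol.sub hy.toHol).congr ?_
  intro z _; ring

lemma addHol {f : ℂ → ℂ} (hx : LHol r x) (hf : Hol r f) : LHol r (fun z => x z + f z) := by
  refine ofHol ((hx.toHol.add hf).congr ?_)
  intro z _; ring

lemma shift (hx : LHol r x) (a : ℝ) : LHol r (fun z => x (z + a)) := by
  refine ofHol (((hx.toHol.shift a).add (Hol.const a)).congr ?_)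
  intro z _; ring

lemma shift' (hx : LHol r x) (a : ℝ) : LHol r (fun z => x (z - a)) := by
  have := hx.shift (-a)
  simpa [sub_eq_add_neg] using this

lemma deriv (hx : LHol r x) : Hol r (deriv x) := by
  refine (hx.toHol.deriv.add (Hol.const 1)).congr ?_
  intro z hz
  rw [deriv_fun_sub (hx.diffAt hz) differentiableAt_fun_id]
  simp

end LHol

/-- domain of the generating function -/
def Dom (R d : ℝ) (τ σ : ℂ) : Prop := |τ.im| < R ∧ |σ.im| < R ∧ τ ≠ σ ∧ ‖σ - τ‖ < d

/-- regular two-point function -/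
structure Nice (R d : ℝ) (k : ℂ → ℂ → ℂ) : Prop where
  diff : ∀ (x y : ℂ → ℂ) (z : ℂ), DifferentiableAt ℂ x z → DifferentiableAt ℂ y z →
    Dom R d (x z) (y z) → DifferentiableAt ℂ (fun z => k (x z) (y z)) z
  per : ∀ τ σ, Dom R d τ σ → k (τ + 1) (σ + 1) = k τ σ
  conj : ∀ τ σ, Dom R d τ σ → k ((starRingEnd ℂ) τ) ((starRingEnd ℂ) σ) = (starRingEnd ℂ) (k τ σ)

lemma Nice.hol {R d r : ℝ} {k : ℂ → ℂ → ℂ} {x y : ℂ → ℂ} (hk : Nice R d k) (hx : LHol r x)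
    (hy : LHol r y) (hD : ∀ z ∈ strip r, Dom R d (x z) (y z)) :
    Hol r (fun z => k (x z) (y z)) := by
  refine ⟨?_, ?_, ?_⟩
  · intro z hz
    exact (hk.diff x y z (hx.diffAt hz) (hy.diffAt hz) (hD z hz)).differentiableWithinAt
  · intro z hz
    simp only [hx.per z hz, hy.per z hz]
    exact hk.per _ _ (hD z hz)
  · intro z hz
    simp only [hx.conj z hz, hy.conj z hz]
    exact hk.conj _ _ (hD z hz)

/-- generating function hypotheses -/
structure KH (h h1 h2 h11 h12 h22 : ℂ → ℂ → ℂ) (R d M : ℝ) : Prop where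
  n0 : Nice R d h
  n1 : Nice R d h1
  n2 : Nice R d h2
  n12 : Nice R d h12
  c0 : ∀ (x y : ℂ → ℂ) (x' y' z : ℂ), HasDerivAt x x' z → HasDerivAt y y' z →
    Dom R d (x z) (y z) →
    HasDerivAt (fun z => h (x z) (y z)) (h1 (x z) (y z) * x' + h2 (x z) (y z) * y') z
  c1 : ∀ (x y : ℂ → ℂ) (x' y' z : ℂ), HasDerivAt x x' z → HasDerivAt y y' z →
    Dom R d (x z) (y z) →
    HasDerivAt (fun z => h1 (x z) (y z)) (h11 (x z) (y z) * x' + h12 (x z) (y z) * y') z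
  c2 : ∀ (x y : ℂ → ℂ) (x' y' z : ℂ), HasDerivAt x x' z → HasDerivAt y y' z →
    Dom R d (x z) (y z) →
    HasDerivAt (fun z => h2 (x z) (y z)) (h12 (x z) (y z) * x' + h22 (x z) (y z) * y') z
  b1 : ∀ τ σ, Dom R d τ σ → ‖h1 τ σ - 1 / (σ - τ) ^ 2‖ ≤ M
  b2 : ∀ τ σ, Dom R d τ σ → ‖h2 τ σ + 1 / (σ - τ) ^ 2‖ ≤ M
  b12 : ∀ τ σ, Dom R d τ σ → ‖h12 τ σ + 2 / (σ - τ) ^ 3‖ ≤ M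
  i1 : ∀ (τ : ℂ) (δ : ℝ), |τ.im| < R → 0 < δ → δ < d → ‖h1 τ (τ + δ) - h1 τ (τ - δ)‖ ≤ M * δ
  i2 : ∀ (σ : ℂ) (δ : ℝ), |σ.im| < R → 0 < δ → δ < d → ‖h2 (σ - δ) σ - h2 (σ + δ) σ‖ ≤ M * δ

lemma taylor2 {φ : ℂ → ℂ} {ρ K : ℝ} (hρ : 2 ≤ ρ) (hd : DifferentiableOn ℂ φ (Metric.ball 0 ρ))
    (hb : ∀ s ∈ Metric.ball (0:ℂ) ρ, ‖φ s‖ ≤ K) :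
    ‖φ 1 - φ 0 - deriv φ 0‖ ≤ 64 * K / ρ ^ 2 := by
  have hρ0 : 0 < ρ := by linarith
  have cau : ∀ (ψ : ℂ → ℂ) (a b B : ℝ), 0 < b → DifferentiableOn ℂ ψ (Metric.ball 0 a) →
      (∀ s ∈ Metric.ball (0:ℂ) a, ‖ψ s‖ ≤ B) → ∀ z : ℂ, ‖z‖ + b < a → ‖deriv ψ z‖ ≤ B / b := by
    intro ψ a b B hb hψ hB z hz
    have hs : Metric.closedBall z b ⊆ Metric.ball 0 a := Metric.closedBall_subset_ball' (by
      rw [dist_zero_right]; linarith)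
    refine norm_deriv_le_of_forall_mem_sphere_norm_le hb ?_ ?_
    · refine DifferentiableOn.diffContOnCl (hψ.mono ?_)
      rw [closure_ball _ hb.ne']; exact hs
    · intro w hw; exact hB w (hs (Metric.sphere_subset_closedBall hw))
  have h1 : ∀ z ∈ Metric.ball (0:ℂ) (3 * ρ / 4), ‖deriv φ z‖ ≤ K / (ρ / 8) := by
    intro z hz
    rw [mem_ball_zero_iff] at hz
    exact cau φ ρ (ρ / 8) K (by positivity) hd hb z (by linarith)
  have hd' : DifferentiableOn ℂ (deriv φ) (Metric.ball 0 ρ) := hd.deriv Metric.isOpen_ball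
  have h2 : ∀ z : ℂ, ‖z‖ ≤ ρ / 2 → ‖deriv (deriv φ) z‖ ≤ K / (ρ / 8) / (ρ / 8) := by
    intro z hz
    exact cau (deriv φ) (3 * ρ / 4) (ρ / 8) _ (by positivity)
      (hd'.mono (Metric.ball_subset_ball (by linarith))) h1 z (by linarith)
  have dAt : ∀ z : ℂ, ‖z‖ ≤ 1 → DifferentiableAt ℂ φ z := fun z hz =>
    hd.differentiableAt (Metric.isOpen_ball.mem_nhds (by rw [mem_ball_zero_iff]; linarith))
  have dAt' : ∀ z : ℂ, ‖z‖ ≤ 1 → DifferentiableAt ℂ (deriv φ) z := fun z hz =>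
    hd'.differentiableAt (Metric.isOpen_ball.mem_nhds (by rw [mem_ball_zero_iff]; linarith))
  have hK : 0 ≤ K / (ρ / 8) / (ρ / 8) := (norm_nonneg _).trans (h2 0 (by simp; positivity))
  have h3 : ∀ z ∈ Metric.closedBall (0:ℂ) 1, ‖deriv φ z - deriv φ 0‖ ≤ K / (ρ / 8) / (ρ / 8) := by
    intro z hz
    have hz1 : ‖z‖ ≤ 1 := by simpa using hz
    have := Convex.norm_image_sub_le_of_norm_deriv_le (f := deriv φ) (s := Metric.closedBall (0:ℂ) 1)
      (x := 0) (y := z) (C := K / (ρ / 8) / (ρ / 8))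
      (fun w hw => dAt' w (by simpa using hw)) (fun w hw => h2 w (by
        have : ‖w‖ ≤ 1 := by simpa using hw
        linarith)) (convex_closedBall _ _) (by simp) hz
    rw [sub_zero] at this
    nlinarith
  have h4 := Convex.norm_image_sub_le_of_norm_deriv_le (f := fun z => φ z - z * deriv φ 0)
      (s := Metric.closedBall (0:ℂ) 1)
      (x := 0) (y := 1) (C := K / (ρ / 8) / (ρ / 8))
      (fun w hw => (dAt w (by simpa using hw)).sub (by fun_prop)) (fun w hw => by
        rw [deriv_fun_sub (dAt w (by simpa using hw)) (by fun_prop)]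
        rw [deriv_mul_const (by fun_prop)]
        simpa using h3 w hw) (convex_closedBall _ _) (by simp) (by simp)
  simp at h4
  calc ‖φ 1 - φ 0 - deriv φ 0‖ = ‖φ 1 - deriv φ 0 - φ 0‖ := by congr 1; ring
    _ ≤ _ := h4
    _ = _ := by field_simp; norm_num

lemma remainder {R d M ω β : ℝ} {k k1 k2 : ℂ → ℂ → ℂ} (hω : 0 < ω) (hβ : 0 < β)
    (hR : 0 < R) (hR1 : R ≤ 1) (hωβ : ω * β ≤ R / 16) (hωR : ω ≤ R / 100) (hωd : 2 * ω < d)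
    (hMω : M ≤ 1 / ω ^ 2)
    (c1 : ∀ (x y : ℂ → ℂ) (x' y' z : ℂ), HasDerivAt x x' z → HasDerivAt y y' z →
      Dom R d (x z) (y z) →
      HasDerivAt (fun z => k (x z) (y z)) (k1 (x z) (y z) * x' + k2 (x z) (y z) * y') z)
    (b1 : ∀ τ σ, Dom R d τ σ → ‖k τ σ‖ ≤ 1 / ‖σ - τ‖ ^ 2 + M)
    {τ σ ξ η : ℂ} (hτ : |τ.im| ≤ 11 * R / 16) (hσ : |σ.im| ≤ 11 * R / 16)
    (hl : 3 / 8 * ω ≤ ‖σ - τ‖) (hu : ‖σ - τ‖ ≤ ω)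
    (hξ : ‖ξ‖ ≤ ω * β) (hηξ : ‖η - ξ‖ ≤ ω ^ 2 * β) :
    ‖k (τ + ξ) (σ + η) - k τ σ - (k1 τ σ * ξ + k2 τ σ * η)‖ ≤ 80000 * β ^ 2 / R ^ 2 := by
  set ρ : ℝ := R / (8 * (ω * β)) with hρ
  have hωβ0 : 0 < ω * β := by positivity
  have hρ2 : 2 ≤ ρ := by
    rw [hρ, le_div_iff₀ (by positivity)]; linarith
  have hρe : ρ * (ω * β) = R / 8 := by rw [hρ]; field_simp
  have hD : ∀ s : ℂ, ‖s‖ < ρ → Dom R d (τ + s * ξ) (σ + s * η) ∧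
      ω / 4 ≤ ‖(σ + s * η) - (τ + s * ξ)‖ := by
    intro s hs
    have e1 : ‖s * ξ‖ ≤ R / 8 := by
      rw [norm_mul, ← hρe]; gcongr
    have e2 : ‖s * (η - ξ)‖ ≤ R / 8 * ω := by
      rw [norm_mul, ← hρe]
      calc ‖s‖ * ‖η - ξ‖ ≤ ρ * (ω ^ 2 * β) := by gcongr
        _ = _ := by ring
    have e3 : ‖s * η‖ ≤ R / 8 + R / 8 * ω := by
      have : s * η = s * ξ + s * (η - ξ) := by ring
      rw [this]; exact (norm_add_le _ _).trans (by linarith)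
    have e4 : (σ + s * η) - (τ + s * ξ) = (σ - τ) + s * (η - ξ) := by ring
    have e5 : ‖s * (η - ξ)‖ ≤ ω / 8 := by nlinarith
    have e6 : ω / 4 ≤ ‖(σ + s * η) - (τ + s * ξ)‖ := by
      rw [e4]
      have := norm_sub_le ((σ - τ) + s * (η - ξ)) (s * (η - ξ))
      rw [add_sub_cancel_right] at this
      linarith
    refine ⟨⟨?_, ?_, ?_, ?_⟩, e6⟩
    · have h1 := abs_im_le_norm (s * ξ)
      have h2 := abs_add_le τ.im (s * ξ).im
      rw [add_im]; linarith
    · have h1 := abs_im_le_norm (s * η)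
      have h2 := abs_add_le σ.im (s * η).im
      rw [add_im]
      have : R / 8 * ω ≤ R / 8 * (1 / 100) := by gcongr; linarith
      linarith
    · intro h0
      rw [h0] at e6
      simp at e6; linarith
    · rw [e4]
      have := norm_add_le (σ - τ) (s * (η - ξ))
      linarith
  have hder : ∀ s : ℂ, ‖s‖ < ρ → HasDerivAt (fun s => k (τ + s * ξ) (σ + s * η))
      (k1 (τ + s * ξ) (σ + s * η) * ξ + k2 (τ + s * ξ) (σ + s * η) * η) s := by
    intro s hs
    refine c1 (fun s => τ + s * ξ) (fun s => σ + s * η) ξ η s ?_ ?_ (hD s hs).1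
    · simpa using ((hasDerivAt_id s).mul_const ξ).const_add τ
    · simpa using ((hasDerivAt_id s).mul_const η).const_add σ
  have h := taylor2 (φ := fun s => k (τ + s * ξ) (σ + s * η)) (ρ := ρ) (K := 17 / ω ^ 2) hρ2
    (fun s hs => (hder s (by simpa using hs)).differentiableAt.differentiableWithinAt) (by
      intro s hs
      obtain ⟨h1, h2⟩ := hD s (by simpa using hs)
      refine (b1 _ _ h1).trans ?_
      have : 1 / ‖(σ + s * η) - (τ + s * ξ)‖ ^ 2 ≤ 1 / (ω / 4) ^ 2 := by gcongr
      calc _ ≤ 1 / (ω / 4) ^ 2 + 1 / ω ^ 2 := by gcongr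
        _ = _ := by field_simp; norm_num)
  rw [(hder 0 (by simp; linarith)).deriv] at h
  simp at h
  refine h.trans ?_
  rw [hρ]
  rw [show 64 * (17 / ω ^ 2) / (R / (8 * (ω * β))) ^ 2 = 69632 * β ^ 2 / R ^ 2 by field_simp; norm_num]
  gcongr
  norm_num

lemma inv_bound {ω M : ℝ} {δ H p q : ℂ} (hω : 0 < ω) (hω1 : ω ≤ 1 / 100) (hM : M * ω ≤ 1 / 100)
    (hδ : ‖δ - ω / 2‖ ≤ ω / 40) (hH : ‖H + 2 / δ ^ 3‖ ≤ M) (hp : ‖p - 1‖ ≤ 1 / 50)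
    (hq : ‖q - 1‖ ≤ 1 / 50) :
    p * q * H ≠ 0 ∧ ‖1 / (p * q * H) + ω ^ 3 / 16‖ ≤ ω ^ 3 / 32 := by
  obtain ⟨a, ha⟩ : ∃ a : ℂ, δ = ω / 2 * (1 + a) := ⟨δ / (ω / 2) - 1, by
    have : (ω:ℂ) ≠ 0 := by exact_mod_cast hω.ne'
    field_simp; ring⟩
  have hωc : (ω:ℂ) ≠ 0 := by exact_mod_cast hω.ne'
  have hnω : ‖(ω:ℂ)‖ = ω := by simp [abs_of_pos hω]
  have ha1 : ‖a‖ ≤ 1 / 20 := by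
    have : δ - ω / 2 = ω / 2 * a := by rw [ha]; ring
    rw [this, norm_mul, norm_div, hnω] at hδ
    simp at hδ
    by_contra hcon
    push Not at hcon
    nlinarith
  have hM0 : 0 ≤ M := (norm_nonneg _).trans hH
  have hδ0 : δ ≠ 0 := by
    intro h0
    rw [h0] at hδ
    simp [abs_of_pos hω] at hδ
    linarith
  have hδn : ‖δ‖ ≤ ω := by
    have := norm_add_le (δ - ω / 2) (ω / 2 : ℂ)
    rw [sub_add_cancel, norm_div, hnω] at this
    simp at this
    linarith
  set m : ℂ := H + 2 / δ ^ 3 with hm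
  set b : ℂ := m * δ ^ 3 / 2 with hb
  have hbn : ‖b‖ ≤ 1 / 100 := by
    rw [hb, norm_div, norm_mul, norm_pow]
    simp
    have : ‖m‖ * ‖δ‖ ^ 3 ≤ M * ω ^ 3 := by gcongr
    have : M * ω ^ 3 ≤ 1 / 100 := by
      calc M * ω ^ 3 = (M * ω) * ω ^ 2 := by ring
        _ ≤ 1 / 100 * 1 := by gcongr; nlinarith
        _ = _ := by norm_num
    linarith
  have hHe : H = -(2 / δ ^ 3) * (1 - b) := by
    rw [hb, show H = m - 2 / δ ^ 3 by rw [hm]; ring]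
    field_simp
    ring
  set D : ℂ := p * q * (1 - b) with hDdef
  have hD1 : ‖D - 1‖ ≤ 1 / 10 := by
    have e : D - 1 = (p - 1) + (q - 1) + (p - 1) * (q - 1) - p * q * b := by rw [hDdef]; ring
    have hpn : ‖p‖ ≤ 51 / 50 := by
      have := norm_add_le (p - 1) 1
      simp at this; linarith
    have hqn : ‖q‖ ≤ 51 / 50 := by
      have := norm_add_le (q - 1) 1
      simp at this; linarith
    rw [e]
    have t1 : ‖(p - 1) * (q - 1)‖ ≤ 1 / 50 * (1 / 50) := by rw [norm_mul]; gcongr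
    have t2 : ‖p * q * b‖ ≤ 51 / 50 * (51 / 50) * (1 / 100) := by
      rw [norm_mul, norm_mul]; gcongr
    have := norm_sub_le ((p - 1) + (q - 1) + (p - 1) * (q - 1)) (p * q * b)
    have := norm_add₃_le (a := p - 1) (b := q - 1) (c := (p - 1) * (q - 1))
    linarith
  have hDn : 9 / 10 ≤ ‖D‖ := by
    have := norm_sub_le D (D - 1)
    simp at this
    linarith
  have hD0 : D ≠ 0 := by
    intro h0; rw [h0] at hDn; simp at hDn; linarith
  have hA : p * q * H = -(2 / δ ^ 3) * D := by rw [hHe, hDdef]; ring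
  refine ⟨?_, ?_⟩
  · rw [hA]
    refine mul_ne_zero (neg_ne_zero.2 (div_ne_zero two_ne_zero (pow_ne_zero _ hδ0))) hD0
  · have e : 1 / (p * q * H) + ω ^ 3 / 16 = (ω ^ 3 / 16) * ((D - (1 + a) ^ 3) / D) := by
      have h1a : (1 + a) ≠ 0 := by
        intro h0; rw [ha, h0] at hδ0; simp at hδ0
      rw [hA, ha]; field_simp; ring
    rw [e, norm_mul, norm_div, norm_div, norm_pow, hnω]
    have e2 : D - (1 + a) ^ 3 = (D - 1) - (3 * a + 3 * a ^ 2 + a ^ 3) := by ring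
    have n2 : ‖D - (1 + a) ^ 3‖ ≤ 3 / 10 := by
      rw [e2]
      have t1 : ‖3 * a‖ ≤ 3 * (1 / 20) := by rw [norm_mul]; simp; linarith
      have t2 : ‖3 * a ^ 2‖ ≤ 3 * (1 / 20) ^ 2 := by
        rw [norm_mul, norm_pow]; simp only [RCLike.norm_ofNat]; gcongr
      have t3 : ‖a ^ 3‖ ≤ (1 / 20) ^ 3 := by rw [norm_pow]; gcongr
      have := norm_sub_le (D - 1) (3 * a + 3 * a ^ 2 + a ^ 3)
      have := norm_add₃_le (a := 3 * a) (b := 3 * a ^ 2) (c := a ^ 3)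
      norm_num at *
      linarith
    have : ‖D - (1 + a) ^ 3‖ / ‖D‖ ≤ 1 / 2 := by
      rw [div_le_iff₀ (by linarith)]; linarith
    simp only [RCLike.norm_ofNat]
    calc ω ^ 3 / 16 * (‖D - (1 + a) ^ 3‖ / ‖D‖) ≤ ω ^ 3 / 16 * (1 / 2) := by gcongr
      _ = _ := by ring

end FU

end

section

namespace FU
open Complex

lemma near_one {p : ℂ} (hp : ‖p - 1‖ ≤ 1 / 50) : ‖p‖ ≤ 51 / 50 := by
  have := norm_add_le (p - 1) 1
  simp at this; linarith

lemma near_inv {ω : ℝ} {A : ℂ} (hω : 0 < ω) (h : ‖1 / A + ω ^ 3 / 16‖ ≤ ω ^ 3 / 32) :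
    ‖1 / A‖ ≤ 3 * ω ^ 3 / 32 := by
  have := norm_sub_le (1 / A + ω ^ 3 / 16) ((ω:ℂ) ^ 3 / 16)
  rw [add_sub_cancel_right] at this
  have h2 : ‖(ω:ℂ) ^ 3 / 16‖ = ω ^ 3 / 16 := by
    rw [norm_div, norm_pow, norm_real, Real.norm_of_nonneg hω.le]; simp
  linarith

lemma linsolve {ω κ r e : ℝ} {p q E1 E2 A B : ℂ → ℂ} (hω : 0 < ω) (hω1 : ω ≤ 1 / 100)
    (hd : Dio ω) (hκ : 0 < κ) (hκ1 : κ ≤ 1) (hκr : 2 * κ < r) (he : 0 < e)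
    (hp : Hol r p) (hq : Hol r q) (hE1 : Hol r E1) (hE2 : Hol r E2) (hA : Hol r A) (hB : Hol r B)
    (np : ∀ z ∈ strip r, ‖p z - 1‖ ≤ 1 / 50) (nq : ∀ z ∈ strip r, ‖q z - 1‖ ≤ 1 / 50)
    (n1 : ∀ z ∈ strip r, ‖E1 z‖ ≤ e) (n2 : ∀ z ∈ strip r, ‖E2 z‖ ≤ e)
    (A0 : ∀ z ∈ strip r, A z ≠ 0) (B0 : ∀ z ∈ strip r, B z ≠ 0)
    (nA : ∀ z ∈ strip r, ‖1 / A z + ω ^ 3 / 16‖ ≤ ω ^ 3 / 32)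
    (nB : ∀ z ∈ strip r, ‖1 / B z + ω ^ 3 / 16‖ ≤ ω ^ 3 / 32)
    (hm : mean (fun z => p z * E1 z + q z * E2 z) = 0) :
    ∃ w zz, Hol (r - 2 * κ) w ∧ Hol (r - 2 * κ) zz ∧
      (∀ z ∈ strip (r - 2 * κ), ‖w z‖ ≤ 3 * Cs ^ 2 * ω * e / κ ^ 6) ∧
      (∀ z ∈ strip (r - 2 * κ), ‖zz z - w z‖ ≤ 2 * Cs * ω ^ 2 * e / κ ^ 3) ∧
      (∀ z ∈ strip (r - 2 * κ), p z * E1 z + A z * (zz z - w z) + B (z - ω) * (zz (z - ω) - w z) = 0) ∧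
      (∀ z ∈ strip (r - 2 * κ), q z * E2 z + A z * (w z - zz z) + B z * (w (z + ω) - zz z) = 0) := by
  have hK := Cs_ge_one
  have hr : 0 < r := by linarith
  have hr1 : 0 < r - κ := by linarith
  set X : ℝ := Cs * e / (ω * κ ^ 3) with hX
  have hX0 : 0 < X := by positivity
  have heX : 100 * e ≤ X := by
    rw [hX, le_div_iff₀ (by positivity)]
    have : ω * κ ^ 3 ≤ 1 / 100 * 1 := by gcongr; exact pow_le_one₀ hκ.le hκ1
    nlinarith
  have hpE : Hol r (fun z => p z * E1 z + q z * E2 z) := (hp.mul hE1).add (hq.mul hE2)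
  have hqEn : ∀ z ∈ strip r, ‖q z * E2 z‖ ≤ X / 50 := by
    intro z hz
    rw [norm_mul]
    calc _ ≤ 51 / 50 * e := by gcongr; exacts [near_one (nq z hz), n2 z hz]
      _ ≤ _ := by linarith
  have hGn : ∀ z ∈ strip r, ‖-(p (z + ω) * E1 (z + ω) + q (z + ω) * E2 (z + ω))‖ ≤ 3 * e := by
    intro z hz
    have hz' := add_real_mem_strip hz ω
    rw [norm_neg]
    refine (norm_add_le _ _).trans ?_
    rw [norm_mul, norm_mul]
    have t1 : ‖p (z + ω)‖ * ‖E1 (z + ω)‖ ≤ 51 / 50 * e := by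
      gcongr; exacts [near_one (np _ hz'), n1 _ hz']
    have t2 : ‖q (z + ω)‖ * ‖E2 (z + ω)‖ ≤ 51 / 50 * e := by
      gcongr; exacts [near_one (nq _ hz'), n2 _ hz']
    linarith
  have hGm : mean (fun z => -(p (z + ω) * E1 (z + ω) + q (z + ω) * E2 (z + ω))) = 0 := by
    have h1 := mean_shift hr hpE ω
    have h2 := mean_const_mul (-1) (fun z => p (z + ω) * E1 (z + ω) + q (z + ω) * E2 (z + ω))
    rw [h1, hm] at h2
    simpa using h2
  obtain ⟨Q0, hQ0, nQ0, eQ0⟩ := solve hω hd hκ (by linarith : κ < r) (hpE.shift ω).neg hGn hGm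
  have nQ0' : ∀ z ∈ strip (r - κ), ‖Q0 z‖ ≤ 3 * X := by
    intro z hz
    refine (nQ0 z hz).trans (le_of_eq ?_)
    rw [hX]; ring
  have hs1 : strip (r - κ) ⊆ strip r := strip_mono (by linarith)
  have hs2 : strip (r - 2 * κ) ⊆ strip (r - κ) := strip_mono (by linarith)
  have hA1 := hA.mono (by linarith : r - κ ≤ r)
  have hB1 := hB.mono (by linarith : r - κ ≤ r)
  have hqE := (hq.mul hE2).mono (by linarith : r - κ ≤ r)
  have iA : Hol (r - κ) (fun z => (A z)⁻¹) := hA1.inv (fun z hz => A0 z (hs1 hz))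
  have iB : Hol (r - κ) (fun z => (B z)⁻¹) := hB1.inv (fun z hz => B0 z (hs1 hz))
  have niA : ∀ z ∈ strip r, ‖(A z)⁻¹‖ ≤ 3 * ω ^ 3 / 32 := fun z hz => by
    simpa using near_inv hω (nA z hz)
  have niB : ∀ z ∈ strip r, ‖(B z)⁻¹‖ ≤ 3 * ω ^ 3 / 32 := fun z hz => by
    simpa using near_inv hω (nB z hz)
  -- the averaging constant
  set μ : ℂ := mean (fun z => (A z)⁻¹ + (B z)⁻¹) with hμ
  have hμH := iA.add iB
  have hμn : ω ^ 3 / 16 ≤ ‖μ‖ := by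
    have h1 : mean (fun z => ((A z)⁻¹ + (B z)⁻¹) + ((ω ^ 3 / 8 : ℝ) : ℂ)) = μ + ((ω ^ 3 / 8 : ℝ) : ℂ) := by
      rw [mean_add hr1 hμH (Hol.const _)]
      simp [mean, hμ]
    have h2 : ‖μ + ((ω ^ 3 / 8 : ℝ) : ℂ)‖ ≤ ω ^ 3 / 16 := by
      rw [← h1]
      refine mean_norm_le hr1 ?_
      intro z hz
      have e : (A z)⁻¹ + (B z)⁻¹ + ((ω ^ 3 / 8 : ℝ) : ℂ)
        = (1 / A z + ω ^ 3 / 16) + (1 / B z + ω ^ 3 / 16) := by push_cast; ring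
      rw [e]
      have := norm_add_le (1 / A z + ω ^ 3 / 16) (1 / B z + ω ^ 3 / 16)
      have := nA z (hs1 hz)
      have := nB z (hs1 hz)
      linarith
    have h3 := norm_sub_le (μ + ((ω ^ 3 / 8 : ℝ) : ℂ)) μ
    rw [add_sub_cancel_left, norm_real, Real.norm_of_nonneg (by positivity)] at h3
    linarith
  have hμ0 : μ ≠ 0 := by
    intro h0; rw [h0, norm_zero] at hμn
    have : 0 < ω ^ 3 / 16 := by positivity
    linarith
  have hμr := mean_real hr1 hμH
  set N : ℂ → ℂ := fun z => (Q0 z + q z * E2 z) * (A z)⁻¹ + Q0 z * (B z)⁻¹ with hN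
  have hNH : Hol (r - κ) N := ((hQ0.add hqE).mul iA).add (hQ0.mul iB)
  have hNr := mean_real hr1 hNH
  have hNn : ‖mean N‖ ≤ 151 / 50 * X * (3 * ω ^ 3 / 32) + 3 * X * (3 * ω ^ 3 / 32) := by
    refine mean_norm_le hr1 ?_
    intro z hz
    refine (norm_add_le _ _).trans ?_
    rw [norm_mul, norm_mul]
    have t1 : ‖Q0 z + q z * E2 z‖ ≤ 151 / 50 * X := by
      have := norm_add_le (Q0 z) (q z * E2 z)
      have := nQ0' z hz
      have := hqEn z (hs1 hz)
      linarith
    have := niA z (hs1 hz)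
    have := niB z (hs1 hz)
    have := nQ0' z hz
    gcongr
  set c : ℝ := - (mean N).re / μ.re with hc
  have hcc : (c : ℂ) = - mean N / μ := by
    rw [hc]; push_cast; rw [hNr, hμr]
  have hcn : |c| ≤ 10 * X := by
    have : |c| = ‖(c:ℂ)‖ := by simp
    rw [this, hcc, norm_div, norm_neg, div_le_iff₀ (by linarith [show 0 < ω ^ 3 / 16 by positivity])]
    have : 0 < X * ω ^ 3 := by positivity
    nlinarith
  have hQH : Hol (r - κ) (fun z => Q0 z + c) := hQ0.add (Hol.const c)
  have hPH : Hol (r - κ) (fun z => Q0 z + c + q z * E2 z) := hQH.add hqE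
  have nQ : ∀ z ∈ strip (r - κ), ‖Q0 z + c‖ ≤ 13 * X := by
    intro z hz
    have := norm_add_le (Q0 z) c
    have := nQ0' z hz
    rw [norm_real, Real.norm_eq_abs] at *
    linarith
  have nP : ∀ z ∈ strip (r - κ), ‖Q0 z + c + q z * E2 z‖ ≤ 14 * X := by
    intro z hz
    have := norm_add_le (Q0 z + c) (q z * E2 z)
    have := nQ z hz
    have := hqEn z (hs1 hz)
    linarith
  have hPA := hPH.mul iA
  have hQB := hQH.mul iB
  have nPA : ∀ z ∈ strip (r - κ), ‖(Q0 z + c + q z * E2 z) * (A z)⁻¹‖ ≤ 14 * X * (3 * ω ^ 3 / 32) := by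
    intro z hz
    rw [norm_mul]
    have := niA z (hs1 hz)
    have := nP z hz
    gcongr
  have nQB : ∀ z ∈ strip (r - κ), ‖(Q0 z + c) * (B z)⁻¹‖ ≤ 13 * X * (3 * ω ^ 3 / 32) := by
    intro z hz
    rw [norm_mul]
    have := niB z (hs1 hz)
    have := nQ z hz
    gcongr
  have hXω : X * ω ^ 3 = Cs * ω ^ 2 * e / κ ^ 3 := by rw [hX]; field_simp
  have nS : ∀ z ∈ strip (r - κ), ‖(Q0 z + c + q z * E2 z) * (A z)⁻¹ + (Q0 z + c) * (B z)⁻¹‖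
      ≤ 3 * (X * ω ^ 3) := by
    intro z hz
    have := norm_add_le ((Q0 z + c + q z * E2 z) * (A z)⁻¹) ((Q0 z + c) * (B z)⁻¹)
    have := nPA z hz
    have := nQB z hz
    have : 0 < X * ω ^ 3 := by positivity
    linarith
  have hSm : mean (fun z => (Q0 z + c + q z * E2 z) * (A z)⁻¹ + (Q0 z + c) * (B z)⁻¹) = 0 := by
    have e : (fun z => (Q0 z + c + q z * E2 z) * (A z)⁻¹ + (Q0 z + c) * (B z)⁻¹)
      = fun z => N z + c * ((A z)⁻¹ + (B z)⁻¹) := by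
      ext z; simp only [hN]; ring
    rw [e, mean_add hr1 hNH ((Hol.const c).mul hμH), mean_const_mul, ← hμ, hcc]
    field_simp; ring
  obtain ⟨w, hw, nw, ew⟩ := solve hω hd hκ (by linarith : κ < r - κ) (hPA.add hQB) nS hSm
  rw [show r - κ - κ = r - 2 * κ by ring] at hw nw ew
  refine ⟨w, fun z => w z + (Q0 z + c + q z * E2 z) * (A z)⁻¹, hw,
    hw.add (hPA.mono (by linarith)), ?_, ?_, ?_, ?_⟩
  · intro z hz
    refine (nw z hz).trans (le_of_eq ?_)
    rw [hXω]; field_simp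
  · intro z hz
    simp only [add_sub_cancel_left]
    refine (nPA z (hs2 hz)).trans ?_
    have : 0 < X * ω ^ 3 := by positivity
    calc 14 * X * (3 * ω ^ 3 / 32) ≤ 2 * (X * ω ^ 3) := by linarith
      _ = _ := by rw [hXω]; ring
  · intro z hz
    have hz' : z - ω ∈ strip (r - 2 * κ) := sub_real_mem_strip hz ω
    have h1 := ew (z - ω) hz'
    have h2 := eQ0 (z - ω) (hs2 hz')
    have a0 := A0 z (hs1 (hs2 hz))
    have b0 := B0 (z - ω) (hs1 (hs2 hz'))
    simp only [sub_add_cancel] at h1 h2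
    simp only [add_sub_cancel_left]
    have h3 : w (z - ω) + (Q0 (z - ω) + c + q (z - ω) * E2 (z - ω)) * (A (z - ω))⁻¹ - w z
      = - ((Q0 (z - ω) + c) * (B (z - ω))⁻¹) := by linear_combination -h1
    rw [h3]
    field_simp
    linear_combination h2
  · intro z hz
    have h1 := ew z hz
    have a0 := A0 z (hs1 (hs2 hz))
    have b0 := B0 z (hs1 (hs2 hz))
    have h3 : w (z + ω) - (w z + (Q0 z + c + q z * E2 z) * (A z)⁻¹) = (Q0 z + c) * (B z)⁻¹ := by
      linear_combination h1
    rw [h3, sub_add_cancel_left]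
    field_simp
    ring

end FU

end

section

namespace FU
open Complex

/-- parameter constraints -/
structure Par (ω R d M : ℝ) : Prop where
  hω : 0 < ω
  hR : 0 < R
  hR1 : R ≤ 1
  hωR : ω ≤ R / 100
  hωd : 2 * ω < d
  hM0 : 0 ≤ M
  hM : M * ω ≤ 1 / 100

lemma Par.hω1 {ω R d M : ℝ} (P : Par ω R d M) : ω ≤ 1 / 100 := by
  have := P.hωR; have := P.hR1; linarith

lemma Par.hMω {ω R d M : ℝ} (P : Par ω R d M) : M ≤ 1 / ω ^ 2 := by
  have := P.hω
  rw [le_div_iff₀ (by positivity)]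
  have := P.hM; have := P.hω1
  nlinarith

/-- approximate solution -/
structure St (h1 h2 : ℂ → ℂ → ℂ) (ω r a e : ℝ) (x y : ℂ → ℂ) : Prop where
  hx : LHol r x
  hy : LHol r y
  ux : ∀ z ∈ strip r, ‖x z - z‖ ≤ a
  uy : ∀ z ∈ strip r, ‖y z - x z - ω / 2‖ ≤ ω * a
  dx : ∀ z ∈ strip r, ‖deriv x z - 1‖ ≤ a
  dy : ∀ z ∈ strip r, ‖deriv y z - deriv x z‖ ≤ ω * a
  e1 : ∀ z ∈ strip r, ‖h1 (x z) (y z) - h1 (x z) (y (z - ω))‖ ≤ e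
  e2 : ∀ z ∈ strip r, ‖h2 (x z) (y z) - h2 (x (z + ω)) (y z)‖ ≤ e

lemma shift_bound {r ω C : ℝ} {f : ℂ → ℂ} (hω : 0 ≤ ω) (hf : DifferentiableOn ℂ f (strip r))
    (hC : ∀ z ∈ strip r, ‖deriv f z‖ ≤ C) {z : ℂ} (hz : z ∈ strip r) :
    ‖f (z + ω) - f z‖ ≤ C * ω := by
  have := Convex.norm_image_sub_le_of_norm_deriv_le (f := f) (s := strip r) (x := z) (y := z + ω) (C := C)
    (fun w hw => hf.differentiableAt ((isOpen_strip r).mem_nhds hw)) hC (convex_strip r) hz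
    (add_real_mem_strip hz ω)
  simpa [abs_of_nonneg hω] using this

section geo
variable {h1 h2 : ℂ → ℂ → ℂ} {ω r a e R d M : ℝ} {x y : ℂ → ℂ}

lemma St.xs (P : Par ω R d M) (S : St h1 h2 ω r a e x y) {z : ℂ} (hz : z ∈ strip r) :
    ‖x (z + ω) - x z - ω‖ ≤ ω * a := by
  have := shift_bound (C := a) P.hω.le S.hx.toHol.diff (fun z hz => by
    rw [deriv_fun_sub (S.hx.diffAt hz) differentiableAt_fun_id]
    simpa using S.dx z hz) hz
  rw [mul_comm]
  refine le_trans (le_of_eq ?_) this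
  congr 1; ring

lemma St.d2 (P : Par ω R d M) (S : St h1 h2 ω r a e x y) {z : ℂ} (hz : z ∈ strip r) :
    ‖x (z + ω) - y z - ω / 2‖ ≤ ω * (2 * a) := by
  have e : x (z + ω) - y z - ω / 2 = (x (z + ω) - x z - ω) - (y z - x z - ω / 2) := by ring
  rw [e]
  refine (norm_sub_le _ _).trans ?_
  linarith [S.xs P hz, S.uy z hz]

lemma St.d3 (P : Par ω R d M) (S : St h1 h2 ω r a e x y) {z : ℂ} (hz : z ∈ strip r) :
    ‖x z - y (z - ω) - ω / 2‖ ≤ ω * (2 * a) := by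
  have := S.d2 P (sub_real_mem_strip hz ω)
  simpa using this

lemma half_bounds {ω b : ℝ} {δ : ℂ} (hω : 0 < ω) (hb : b ≤ 1 / 50) (h : ‖δ - ω / 2‖ ≤ ω * b) :
    3 / 8 * ω ≤ ‖δ‖ ∧ ‖δ‖ ≤ ω := by
  have h2 : ‖(ω:ℂ) / 2‖ = ω / 2 := by simp [abs_of_pos hω]
  have h3 := norm_sub_le δ (δ - ω / 2)
  have h4 := norm_add_le (δ - ω / 2) (ω / 2)
  rw [sub_sub_cancel, h2] at h3
  rw [sub_add_cancel, h2] at h4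
  constructor <;> nlinarith

lemma St.imx (S : St h1 h2 ω r a e x y) (hr : r ≤ R / 2) (ha : a ≤ R / 8) {z : ℂ}
    (hz : z ∈ strip r) : |(x z).im| ≤ 10 * R / 16 := by
  have h1 := S.ux z hz
  have h2 := abs_im_le_norm (x z - z)
  have h3 := abs_add_le (x z - z).im z.im
  rw [sub_im, sub_add_cancel] at h3
  rw [mem_strip] at hz
  rw [sub_im] at h2
  linarith

lemma St.imy (P : Par ω R d M) (S : St h1 h2 ω r a e x y) (hr : r ≤ R / 2) (ha : a ≤ R / 8)
    (ha1 : a ≤ 1 / 100) {z : ℂ} (hz : z ∈ strip r) : |(y z).im| ≤ 11 * R / 16 := by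
  have h1 := S.imx hr ha hz
  have h2 := S.uy z hz
  have h3 := (half_bounds P.hω (by linarith) h2).2
  have h4 := abs_im_le_norm (y z - x z)
  have h5 := abs_add_le (y z - x z).im (x z).im
  rw [sub_im, sub_add_cancel] at h5
  rw [sub_im] at h4
  have := P.hωR
  have := P.hR
  linarith

lemma dom_of {τ σ : ℂ} (P : Par ω R d M) (hτ : |τ.im| ≤ 11 * R / 16) (hσ : |σ.im| ≤ 11 * R / 16)
    (hl : 3 / 8 * ω ≤ ‖σ - τ‖) (hu : ‖σ - τ‖ ≤ ω) : Dom R d τ σ := by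
  have := P.hR; have := P.hω; have := P.hωd
  refine ⟨by linarith, by linarith, ?_, by linarith⟩
  intro h; rw [h] at hl; simp at hl; linarith

/-- all geometric information on the three pairs -/
lemma St.pairs (P : Par ω R d M) (S : St h1 h2 ω r a e x y) (hr : r ≤ R / 2) (ha : a ≤ R / 8)
    (ha1 : a ≤ 1 / 100) {z : ℂ} (hz : z ∈ strip r) :
    (3 / 8 * ω ≤ ‖y z - x z‖ ∧ ‖y z - x z‖ ≤ ω) ∧
    (3 / 8 * ω ≤ ‖y (z - ω) - x z‖ ∧ ‖y (z - ω) - x z‖ ≤ ω) ∧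
    (3 / 8 * ω ≤ ‖y z - x (z + ω)‖ ∧ ‖y z - x (z + ω)‖ ≤ ω) ∧
    Dom R d (x z) (y z) ∧ Dom R d (x z) (y (z - ω)) ∧ Dom R d (x (z + ω)) (y z) := by
  have i1 := half_bounds P.hω (by linarith) (S.uy z hz)
  have i2 := half_bounds P.hω (by linarith) (S.d3 P hz)
  have i3 := half_bounds P.hω (by linarith) (S.d2 P hz)
  rw [norm_sub_rev] at i2 i3
  have mx : ∀ z ∈ strip r, |(x z).im| ≤ 11 * R / 16 := fun z hz => by
    have := S.imx hr ha hz
    have := P.hR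
    linarith
  have my : ∀ z ∈ strip r, |(y z).im| ≤ 11 * R / 16 := fun z hz => S.imy P hr ha ha1 hz
  have hzp := add_real_mem_strip hz ω
  have hzm := sub_real_mem_strip hz ω
  exact ⟨i1, i2, i3, dom_of P (mx z hz) (my z hz) i1.1 i1.2,
    dom_of P (mx z hz) (my _ hzm) i2.1 i2.2, dom_of P (mx _ hzp) (my z hz) i3.1 i3.2⟩

lemma St.np (S : St h1 h2 ω r a e x y) (ha1 : a ≤ 1 / 100) {z : ℂ} (hz : z ∈ strip r) :
    ‖deriv x z - 1‖ ≤ 1 / 50 := (S.dx z hz).trans (by linarith)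

lemma St.nq (P : Par ω R d M) (S : St h1 h2 ω r a e x y) (ha0 : 0 ≤ a) (ha1 : a ≤ 1 / 100) {z : ℂ}
    (hz : z ∈ strip r) : ‖deriv y z - 1‖ ≤ 1 / 50 := by
  have e : deriv y z - 1 = (deriv y z - deriv x z) + (deriv x z - 1) := by ring
  rw [e]
  have := norm_add_le (deriv y z - deriv x z) (deriv x z - 1)
  have := S.dx z hz
  have := S.dy z hz
  have := P.hω1; have := P.hω
  nlinarith

end geo

section step
variable {h h1 h2 h11 h12 h22 : ℂ → ℂ → ℂ} {ω r a e R d M : ℝ} {x y : ℂ → ℂ}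

lemma hasDeriv_sp {r : ℝ} {x : ℂ → ℂ} (hx : LHol r x) (ω : ℝ) {z : ℂ} (hz : z ∈ strip r) :
    HasDerivAt (fun z => x (z + ω)) (deriv x (z + ω)) z := by
  have := (hx.diffAt (add_real_mem_strip hz ω)).hasDerivAt.comp_add_const z (ω:ℂ)
  exact this

lemma hasDeriv_sm {r : ℝ} {x : ℂ → ℂ} (hx : LHol r x) (ω : ℝ) {z : ℂ} (hz : z ∈ strip r) :
    HasDerivAt (fun z => x (z - ω)) (deriv x (z - ω)) z := by
  have := (hx.diffAt (sub_real_mem_strip hz ω)).hasDerivAt.comp_sub_const z (ω:ℂ)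
  exact this

lemma mean_zero (K : KH h h1 h2 h11 h12 h22 R d M) (P : Par ω R d M) (S : St h1 h2 ω r a e x y)
    (hr0 : 0 < r) (hr : r ≤ R / 2) (ha : a ≤ R / 8) (ha1 : a ≤ 1 / 100) :
    mean (fun z => deriv x z * (h1 (x z) (y z) - h1 (x z) (y (z - ω))) +
      deriv y z * (h2 (x z) (y z) - h2 (x (z + ω)) (y z))) = 0 := by
  have pr := fun z (hz : z ∈ strip r) => (S.pairs P hr ha ha1 hz).2.2.2
  have hΦ : Hol r (fun z => h (x z) (y z) - h (x (z + ω)) (y z)) :=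
    (K.n0.hol S.hx S.hy (fun z hz => (pr z hz).1)).sub
      (K.n0.hol (S.hx.shift ω) S.hy (fun z hz => (pr z hz).2.2))
  have hΨ : Hol r (fun z => deriv x z * h1 (x z) (y (z - ω))) :=
    S.hx.deriv.mul (K.n1.hol S.hx (S.hy.shift' ω) (fun z hz => (pr z hz).2.1))
  have hΨs := mean_shift hr0 hΨ ω
  have hd := mean_deriv hr0 hΦ
  have key : ∀ z ∈ strip r, deriv x z * (h1 (x z) (y z) - h1 (x z) (y (z - ω))) +
      deriv y z * (h2 (x z) (y z) - h2 (x (z + ω)) (y z)) =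
      (deriv (fun z => h (x z) (y z) - h (x (z + ω)) (y z)) z) +
      (deriv x (z + ω) * h1 (x (z + ω)) (y (z + ω - ω)) - deriv x z * h1 (x z) (y (z - ω))) := by
    intro z hz
    have dx := (S.hx.diffAt hz).hasDerivAt
    have dy := (S.hy.diffAt hz).hasDerivAt
    have d1 := K.c0 x y _ _ z dx dy (pr z hz).1
    have d2 := K.c0 (fun z => x (z + ω)) y _ _ z (hasDeriv_sp S.hx ω hz) dy (pr z hz).2.2
    rw [(d1.fun_sub d2).deriv, add_sub_cancel_right]
    ring
  have e : mean (fun z => deriv x z * (h1 (x z) (y z) - h1 (x z) (y (z - ω))) +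
      deriv y z * (h2 (x z) (y z) - h2 (x (z + ω)) (y z))) =
      mean (fun z => (deriv (fun z => h (x z) (y z) - h (x (z + ω)) (y z)) z) +
      (deriv x (z + ω) * h1 (x (z + ω)) (y (z + ω - ω)) - deriv x z * h1 (x z) (y (z - ω)))) := by
    unfold mean
    congr 1
    ext t
    exact key t (ofReal_mem_strip hr0 t)
  rw [e, mean_add hr0 hΦ.deriv ((hΨ.shift ω).sub hΨ), mean_sub hr0 (hΨ.shift ω) hΨ, hd, hΨs]
  simp

end step
end FU

end

section

namespace FU
open Complex

section step
variable {h h1 h2 h11 h12 h22 : ℂ → ℂ → ℂ} {ω r a e R d M : ℝ} {x y : ℂ → ℂ}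

lemma KH.b1' (K : KH h h1 h2 h11 h12 h22 R d M) (τ σ : ℂ) (hD : Dom R d τ σ) :
    ‖h1 τ σ‖ ≤ 1 / ‖σ - τ‖ ^ 2 + M := by
  have := norm_add_le (h1 τ σ - 1 / (σ - τ) ^ 2) (1 / (σ - τ) ^ 2)
  rw [sub_add_cancel] at this
  have h2 : ‖1 / (σ - τ) ^ 2‖ = 1 / ‖σ - τ‖ ^ 2 := by simp
  linarith [K.b1 τ σ hD]

lemma KH.b2' (K : KH h h1 h2 h11 h12 h22 R d M) (τ σ : ℂ) (hD : Dom R d τ σ) :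
    ‖h2 τ σ‖ ≤ 1 / ‖σ - τ‖ ^ 2 + M := by
  have := norm_sub_le (h2 τ σ + 1 / (σ - τ) ^ 2) (1 / (σ - τ) ^ 2)
  rw [add_sub_cancel_right] at this
  have h2 : ‖1 / (σ - τ) ^ 2‖ = 1 / ‖σ - τ‖ ^ 2 := by simp
  linarith [K.b2 τ σ hD]

/-- correction fields -/
lemma newton_fields (K : KH h h1 h2 h11 h12 h22 R d M) (P : Par ω R d M) (S : St h1 h2 ω r a e x y)
    (hdio : Dio ω) {κ : ℝ} (hκ : 0 < κ) (hκ1 : κ ≤ 1) (hκr : 3 * κ < r)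
    (hr : r ≤ R / 2) (ha0 : 0 ≤ a) (ha : a ≤ R / 8) (ha1 : a ≤ 1 / 100) (he : 0 < e) :
    ∃ w zz, Hol (r - 2 * κ) w ∧ Hol (r - 2 * κ) zz ∧
      (∀ z ∈ strip (r - 2 * κ), ‖w z‖ ≤ 3 * Cs ^ 2 * ω * e / κ ^ 6) ∧
      (∀ z ∈ strip (r - 2 * κ), ‖zz z - w z‖ ≤ 2 * Cs * ω ^ 2 * e / κ ^ 3) ∧
      (∀ z ∈ strip (r - 2 * κ), ‖h1 (x z) (y z) - h1 (x z) (y (z - ω)) +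
        (h11 (x z) (y z) * (deriv x z * w z) + h12 (x z) (y z) * (deriv y z * zz z)) -
        (h11 (x z) (y (z - ω)) * (deriv x z * w z) +
          h12 (x z) (y (z - ω)) * (deriv y (z - ω) * zz (z - ω)))‖ ≤ e / κ * ‖w z‖) ∧
      (∀ z ∈ strip (r - 2 * κ), ‖h2 (x z) (y z) - h2 (x (z + ω)) (y z) +
        (h12 (x z) (y z) * (deriv x z * w z) + h22 (x z) (y z) * (deriv y z * zz z)) -
        (h12 (x (z + ω)) (y z) * (deriv x (z + ω) * w (z + ω)) +
          h22 (x (z + ω)) (y z) * (deriv y z * zz z))‖ ≤ e / κ * ‖zz z‖) := by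
  have pr := fun z (hz : z ∈ strip r) => (S.pairs P hr ha ha1 hz).2.2.2
  have hr0 : 0 < r := by linarith
  have np := fun z (hz : z ∈ strip r) => S.np ha1 hz
  have nq := fun z (hz : z ∈ strip r) => S.nq P ha0 ha1 hz
  have hE1 : Hol r (fun z => h1 (x z) (y z) - h1 (x z) (y (z - ω))) :=
    (K.n1.hol S.hx S.hy (fun z hz => (pr z hz).1)).sub
      (K.n1.hol S.hx (S.hy.shift' ω) (fun z hz => (pr z hz).2.1))
  have hE2 : Hol r (fun z => h2 (x z) (y z) - h2 (x (z + ω)) (y z)) :=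
    (K.n2.hol S.hx S.hy (fun z hz => (pr z hz).1)).sub
      (K.n2.hol (S.hx.shift ω) S.hy (fun z hz => (pr z hz).2.2))
  have hA : Hol r (fun z => deriv x z * deriv y z * h12 (x z) (y z)) :=
    (S.hx.deriv.mul S.hy.deriv).mul (K.n12.hol S.hx S.hy (fun z hz => (pr z hz).1))
  have hB : Hol r (fun z => deriv x (z + ω) * deriv y z * (- h12 (x (z + ω)) (y z))) :=
    ((S.hx.deriv.shift ω).mul S.hy.deriv).mul
      (K.n12.hol (S.hx.shift ω) S.hy (fun z hz => (pr z hz).2.2)).neg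
  have iA : ∀ z ∈ strip r, _ := fun z hz => inv_bound (δ := y z - x z) (H := h12 (x z) (y z))
    (p := deriv x z) (q := deriv y z) P.hω P.hω1 P.hM ((S.uy z hz).trans (by
      have := P.hω; nlinarith)) (K.b12 _ _ (pr z hz).1) (np z hz) (nq z hz)
  have iB : ∀ z ∈ strip r, _ := fun z hz => inv_bound (δ := x (z + ω) - y z)
    (H := - h12 (x (z + ω)) (y z))
    (p := deriv x (z + ω)) (q := deriv y z) P.hω P.hω1 P.hM ((S.d2 P hz).trans (by
      have := P.hω; nlinarith)) (by
      have := K.b12 _ _ (pr z hz).2.2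
      rw [← norm_neg] at this
      refine le_trans (le_of_eq ?_) this
      congr 1
      rw [show (y z - x (z + ω)) ^ 3 = - (x (z + ω) - y z) ^ 3 by ring, div_neg]
      ring) (np _ (add_real_mem_strip hz ω)) (nq z hz)
  obtain ⟨w, zz, hw, hzz, nw, nzz, q1, q2⟩ := linsolve P.hω P.hω1 hdio hκ hκ1 (by linarith) he
    S.hx.deriv S.hy.deriv hE1 hE2 hA hB np nq S.e1 S.e2 (fun z hz => (iA z hz).1)
    (fun z hz => (iB z hz).1) (fun z hz => (iA z hz).2) (fun z hz => (iB z hz).2)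
    (mean_zero K P S hr0 hr ha ha1)
  have hs1 : strip (r - 2 * κ) ⊆ strip (r - κ) := strip_mono (by linarith)
  have hs0 : strip (r - κ) ⊆ strip r := strip_mono (by linarith)
  have ne0 : ∀ p : ℂ, ‖p - 1‖ ≤ 1 / 50 → p ≠ 0 := by
    intro p hp h0
    rw [h0] at hp
    norm_num at hp
  refine ⟨w, zz, hw, hzz, nw, nzz, ?_, ?_⟩
  · intro z hz
    have hz0 := hs0 (hs1 hz)
    have dx := (S.hx.diffAt hz0).hasDerivAt
    have dy := (S.hy.diffAt hz0).hasDerivAt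
    have d1 := K.c1 x y _ _ z dx dy (pr z hz0).1
    have d2 := K.c1 x (fun z => y (z - ω)) _ _ z dx (hasDeriv_sm S.hy ω hz0) (pr z hz0).2.1
    have c := cauchy_strip hκ hE1.diff S.e1 (hs1 hz)
    rw [(d1.fun_sub d2).deriv] at c
    have := q1 z hz
    simp only [sub_add_cancel] at this
    have key : h1 (x z) (y z) - h1 (x z) (y (z - ω)) +
        (h11 (x z) (y z) * (deriv x z * w z) + h12 (x z) (y z) * (deriv y z * zz z)) -
        (h11 (x z) (y (z - ω)) * (deriv x z * w z) +
          h12 (x z) (y (z - ω)) * (deriv y (z - ω) * zz (z - ω))) =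
        (h11 (x z) (y z) * deriv x z + h12 (x z) (y z) * deriv y z -
          (h11 (x z) (y (z - ω)) * deriv x z + h12 (x z) (y (z - ω)) * deriv y (z - ω))) * w z := by
      refine mul_left_cancel₀ (ne0 _ (np z hz0)) ?_
      linear_combination this
    rw [key, norm_mul]
    gcongr
  · intro z hz
    have hz0 := hs0 (hs1 hz)
    have dx := (S.hx.diffAt hz0).hasDerivAt
    have dy := (S.hy.diffAt hz0).hasDerivAt
    have d1 := K.c2 x y _ _ z dx dy (pr z hz0).1
    have d2 := K.c2 (fun z => x (z + ω)) y _ _ z (hasDeriv_sp S.hx ω hz0) dy (pr z hz0).2.2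
    have c := cauchy_strip hκ hE2.diff S.e2 (hs1 hz)
    rw [(d1.fun_sub d2).deriv] at c
    have := q2 z hz
    have key : h2 (x z) (y z) - h2 (x (z + ω)) (y z) +
        (h12 (x z) (y z) * (deriv x z * w z) + h22 (x z) (y z) * (deriv y z * zz z)) -
        (h12 (x (z + ω)) (y z) * (deriv x (z + ω) * w (z + ω)) +
          h22 (x (z + ω)) (y z) * (deriv y z * zz z)) =
        (h12 (x z) (y z) * deriv x z + h22 (x z) (y z) * deriv y z -
          (h12 (x (z + ω)) (y z) * deriv x (z + ω) + h22 (x (z + ω)) (y z) * deriv y z)) * zz z := by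
      refine mul_left_cancel₀ (ne0 _ (nq z hz0)) ?_
      linear_combination this
    rw [key, norm_mul]
    gcongr

set_option maxHeartbeats 2000000 in
lemma newton (K : KH h h1 h2 h11 h12 h22 R d M) (P : Par ω R d M) (S : St h1 h2 ω r a e x y)
    (hdio : Dio ω) {κ β : ℝ} (hκ : 0 < κ) (hκ1 : κ ≤ 1) (hκr : 3 * κ < r)
    (hr : r ≤ R / 2) (ha0 : 0 ≤ a) (ha : a ≤ R / 8) (ha1 : a ≤ 1 / 100) (he : 0 < e)
    (hβ : β = 10 * Cs ^ 2 * e / κ ^ 7) (hβR : β ≤ R / 16) :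
    ∃ x' y', St h1 h2 ω (r - 3 * κ) (a + β) (2 * 10 ^ 7 * Cs ^ 4 * e ^ 2 / (R ^ 2 * κ ^ 14)) x' y' ∧
      ∀ z ∈ strip (r - 3 * κ), ‖x' z - x z‖ ≤ β ∧ ‖y' z - y z‖ ≤ 2 * β := by
  obtain ⟨w, zz, hw, hzz, nw, nzz, q1, q2⟩ := newton_fields K P S hdio hκ hκ1 hκr hr ha0 ha ha1 he
  have hω := P.hω; have hω1 := P.hω1; have hR := P.hR; have hR1 := P.hR1; have hωR := P.hωR
  have hK := Cs_ge_one
  have hs1 : strip (r - 3 * κ) ⊆ strip (r - 2 * κ) := strip_mono (by linarith)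
  have hs0 : strip (r - 2 * κ) ⊆ strip r := strip_mono (by linarith)
  have hs2 : strip (r - 3 * κ) ⊆ strip r := hs1.trans hs0
  have hrr : r - 2 * κ - κ = r - 3 * κ := by ring
  have np := fun z (hz : z ∈ strip r) => S.np ha1 hz
  have nq := fun z (hz : z ∈ strip r) => S.nq P ha0 ha1 hz
  set X : ℝ := Cs ^ 2 * e / κ ^ 6 with hX
  have hX0 : 0 < X := by positivity
  have hXβ : X / κ = β / 10 := by rw [hX, hβ]; field_simp
  have hXβ' : X ≤ β / 10 := by
    rw [← hXβ, le_div_iff₀ hκ]; nlinarith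
  have hβ0 : 0 < β := by linarith
  have hβ2 : β ^ 2 = 100 * Cs ^ 4 * e ^ 2 / κ ^ 14 := by rw [hβ]; field_simp; norm_num
  have nw' : ∀ z ∈ strip (r - 2 * κ), ‖w z‖ ≤ 3 * (ω * X) := by
    intro z hz; refine (nw z hz).trans (le_of_eq ?_); rw [hX]; ring
  have nzw : ∀ z ∈ strip (r - 2 * κ), ‖zz z - w z‖ ≤ 2 * (ω ^ 2 * X) := by
    intro z hz; refine (nzz z hz).trans ?_
    have : Cs * e / κ ^ 3 ≤ X := by
      rw [hX]
      have h3 : κ ^ 6 ≤ κ ^ 3 := pow_le_pow_of_le_one hκ.le hκ1 (by norm_num)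
      have : Cs ≤ Cs ^ 2 := by nlinarith
      gcongr
    calc 2 * Cs * ω ^ 2 * e / κ ^ 3 = 2 * (ω ^ 2 * (Cs * e / κ ^ 3)) := by ring
      _ ≤ _ := by gcongr
  have nzz' : ∀ z ∈ strip (r - 2 * κ), ‖zz z‖ ≤ 4 * (ω * X) := by
    intro z hz
    have := norm_add_le (zz z - w z) (w z)
    rw [sub_add_cancel] at this
    have h1 := nzw z hz
    have h2 := nw' z hz
    have : 2 * (ω ^ 2 * X) ≤ ω * X := by nlinarith [mul_pos hω hX0]
    linarith
  have hξ : Hol (r - 2 * κ) (fun z => deriv x z * w z) := (S.hx.deriv.mono (by linarith)).mul hw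
  have hη : Hol (r - 2 * κ) (fun z => deriv y z * zz z) := (S.hy.deriv.mono (by linarith)).mul hzz
  have hηξ := hη.sub hξ
  have nξ : ∀ z ∈ strip (r - 2 * κ), ‖deriv x z * w z‖ ≤ 4 * (ω * X) := by
    intro z hz
    rw [norm_mul]
    have h1 := near_one (np z (hs0 hz))
    have h2 := nw' z hz
    calc _ ≤ 51 / 50 * (3 * (ω * X)) := by gcongr
      _ ≤ _ := by nlinarith [mul_pos hω hX0]
  have nηξ : ∀ z ∈ strip (r - 2 * κ), ‖deriv y z * zz z - deriv x z * w z‖ ≤ 3 * (ω ^ 2 * X) := by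
    intro z hz
    rw [show deriv y z * zz z - deriv x z * w z =
      deriv y z * (zz z - w z) + (deriv y z - deriv x z) * w z by ring]
    refine (norm_add_le _ _).trans ?_
    rw [norm_mul, norm_mul]
    have t1 : ‖deriv y z‖ * ‖zz z - w z‖ ≤ 51 / 50 * (2 * (ω ^ 2 * X)) := by
      gcongr; exacts [near_one (nq z (hs0 hz)), nzw z hz]
    have t2 : ‖deriv y z - deriv x z‖ * ‖w z‖ ≤ (ω * (1 / 100)) * (3 * (ω * X)) := by
      gcongr
      · exact (S.dy z (hs0 hz)).trans (by gcongr)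
      · exact nw' z hz
    have : 0 < ω ^ 2 * X := by positivity
    nlinarith
  have nξ' : ∀ z ∈ strip (r - 3 * κ), ‖deriv (fun z => deriv x z * w z) z‖ ≤ 4 / 10 * (ω * β) := by
    intro z hz
    refine (cauchy_strip hκ hξ.diff nξ (by rwa [hrr])).trans (le_of_eq ?_)
    rw [show 4 * (ω * X) / κ = 4 * ω * (X / κ) by ring, hXβ]; ring
  have nηξ' : ∀ z ∈ strip (r - 3 * κ), ‖deriv (fun z => deriv y z * zz z - deriv x z * w z) z‖
      ≤ 3 / 10 * (ω ^ 2 * β) := by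
    intro z hz
    refine (cauchy_strip hκ hηξ.diff nηξ (by rwa [hrr])).trans (le_of_eq ?_)
    rw [show 3 * (ω ^ 2 * X) / κ = 3 * ω ^ 2 * (X / κ) by ring, hXβ]; ring
  have nξs : ∀ z ∈ strip (r - 3 * κ), ‖deriv x (z + ω) * w (z + ω) - deriv x z * w z‖
      ≤ 4 / 10 * (ω ^ 2 * β) := by
    intro z hz
    refine (shift_bound hω.le (hξ.diff.mono hs1) nξ' hz).trans (le_of_eq ?_)
    ring
  have hωβ : 0 < ω * β := by positivity
  have hω2β : ω ^ 2 * β ≤ ω * β := by nlinarith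
  have hωββ : ω * β ≤ β := by nlinarith
  have nξ2 : ∀ z ∈ strip (r - 3 * κ), ‖deriv x z * w z‖ ≤ ω * β := by
    intro z hz
    refine (nξ z (hs1 hz)).trans ?_
    nlinarith
  have nηξ2 : ∀ z ∈ strip (r - 3 * κ), ‖deriv y z * zz z - deriv x z * w z‖ ≤ 3 / 10 * (ω ^ 2 * β) := by
    intro z hz
    refine (nηξ z (hs1 hz)).trans ?_
    have := pow_pos hω 2
    nlinarith
  have hω2β0 : 0 < ω ^ 2 * β := by positivity
  have pr := fun z (hz : z ∈ strip r) => S.pairs P hr ha ha1 hz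
  have imx : ∀ z ∈ strip r, |(x z).im| ≤ 11 * R / 16 := fun z hz =>
    (S.imx hr ha hz).trans (by linarith)
  have imy : ∀ z ∈ strip r, |(y z).im| ≤ 11 * R / 16 := fun z hz => S.imy P hr ha ha1 hz
  have hωβR : ω * β ≤ R / 16 := by linarith
  have sx := S.hx.mono (by linarith : r - 3 * κ ≤ r)
  have sy := S.hy.mono (by linarith : r - 3 * κ ≤ r)
  have hfin : ∀ q : ℝ, q ≤ 80000 * β ^ 2 / R ^ 2 + 80000 * β ^ 2 / R ^ 2 + e / κ * (4 * (ω * X)) →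
      q ≤ 2 * 10 ^ 7 * Cs ^ 4 * e ^ 2 / (R ^ 2 * κ ^ 14) := by
    intro q hq
    refine hq.trans ?_
    have t1 : e / κ * (4 * (ω * X)) ≤ 4 * (Cs ^ 4 * e ^ 2 / (R ^ 2 * κ ^ 14)) := by
      calc e / κ * (4 * (ω * X)) ≤ e / κ * (4 * (1 * X)) := by gcongr; linarith
        _ = 4 * (Cs ^ 2 * e ^ 2 / (κ ^ 7)) := by rw [hX]; field_simp
        _ ≤ _ := by
          have h3 : κ ^ 14 ≤ κ ^ 7 := pow_le_pow_of_le_one hκ.le hκ1 (by norm_num)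
          have h4 : R ^ 2 * κ ^ 14 ≤ κ ^ 7 := by
            have : R ^ 2 ≤ 1 := pow_le_one₀ hR.le hR1
            have := pow_pos hκ 14
            nlinarith
          have : Cs ^ 2 ≤ Cs ^ 4 := pow_le_pow_right₀ hK (by norm_num)
          gcongr
    have t2 : 80000 * β ^ 2 / R ^ 2 = 8000000 * (Cs ^ 4 * e ^ 2 / (R ^ 2 * κ ^ 14)) := by
      rw [hβ2]; field_simp; norm_num
    have t3 : 0 < Cs ^ 4 * e ^ 2 / (R ^ 2 * κ ^ 14) := by positivity
    rw [t2, show 2 * 10 ^ 7 * Cs ^ 4 * e ^ 2 / (R ^ 2 * κ ^ 14)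
      = 2 * 10 ^ 7 * (Cs ^ 4 * e ^ 2 / (R ^ 2 * κ ^ 14)) by ring]
    linarith
  refine ⟨fun z => x z + deriv x z * w z, fun z => y z + deriv y z * zz z,
    ⟨?_, ?_, ?_, ?_, ?_, ?_, ?_, ?_⟩, ?_⟩
  · exact sx.addHol (hξ.mono (by linarith))
  · exact sy.addHol (hη.mono (by linarith))
  · intro z hz
    rw [show x z + deriv x z * w z - z = (x z - z) + deriv x z * w z by ring]
    have := norm_add_le (x z - z) (deriv x z * w z)
    have := S.ux z (hs2 hz)
    have := nξ2 z hz
    linarith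
  · intro z hz
    rw [show y z + deriv y z * zz z - (x z + deriv x z * w z) - ω / 2
      = (y z - x z - ω / 2) + (deriv y z * zz z - deriv x z * w z) by ring]
    have := norm_add_le (y z - x z - ω / 2) (deriv y z * zz z - deriv x z * w z)
    have := S.uy z (hs2 hz)
    have := nηξ2 z hz
    linarith
  · intro z hz
    rw [deriv_fun_add (S.hx.diffAt (hs2 hz)) (hξ.diffAt (hs1 hz)), add_sub_right_comm]
    have := norm_add_le (deriv x z - 1) (deriv (fun z => deriv x z * w z) z)
    have := S.dx z (hs2 hz)
    have := nξ' z hz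
    linarith
  · intro z hz
    rw [deriv_fun_add (S.hx.diffAt (hs2 hz)) (hξ.diffAt (hs1 hz)),
      deriv_fun_add (S.hy.diffAt (hs2 hz)) (hη.diffAt (hs1 hz))]
    have e1 := nηξ' z hz
    rw [deriv_fun_sub (hη.diffAt (hs1 hz)) (hξ.diffAt (hs1 hz))] at e1
    rw [add_sub_add_comm]
    have := norm_add_le (deriv y z - deriv x z)
      (deriv (fun z => deriv y z * zz z) z - deriv (fun z => deriv x z * w z) z)
    have := S.dy z (hs2 hz)
    linarith
  · intro z hz
    apply hfin
    have hz0 := hs2 hz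
    have hzm := sub_real_mem_strip hz ω
    have r1 := remainder hω hβ0 hR hR1 hωβR hωR P.hωd P.hMω K.c1 K.b1' (imx z hz0) (imy z hz0)
      (pr z hz0).1.1 (pr z hz0).1.2 (nξ2 z hz) (η := deriv y z * zz z) (by
        linarith [nηξ2 z hz])
    have r2 := remainder hω hβ0 hR hR1 hωβR hωR P.hωd P.hMω K.c1 K.b1' (imx z hz0)
      (imy _ (sub_real_mem_strip hz0 ω))
      (pr z hz0).2.1.1 (pr z hz0).2.1.2 (nξ2 z hz) (η := deriv y (z - ω) * zz (z - ω)) (by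
        have t1 := nηξ2 _ hzm
        have t2 := nξs _ hzm
        rw [sub_add_cancel] at t2
        rw [show deriv y (z - ω) * zz (z - ω) - deriv x z * w z =
          (deriv y (z - ω) * zz (z - ω) - deriv x (z - ω) * w (z - ω)) -
          (deriv x z * w z - deriv x (z - ω) * w (z - ω)) by ring]
        refine (norm_sub_le _ _).trans ?_
        linarith)
    have q := (q1 z (hs1 hz)).trans (b := e / κ * ‖w z‖) (c := e / κ * (4 * (ω * X))) (by
      gcongr; linarith [nw' z (hs1 hz), mul_pos hω hX0])
    refine le_trans ?_ (add_le_add (add_le_add r1 r2) q)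
    refine le_trans (le_of_eq ?_) (norm_add_le _ _)|>.trans (add_le_add_left (norm_sub_le _ _) _)
    congr 1
    ring
  · intro z hz
    apply hfin
    have hz0 := hs2 hz
    have hzp := add_real_mem_strip hz ω
    have r1 := remainder hω hβ0 hR hR1 hωβR hωR P.hωd P.hMω K.c2 K.b2' (imx z hz0) (imy z hz0)
      (pr z hz0).1.1 (pr z hz0).1.2 (nξ2 z hz) (η := deriv y z * zz z) (by
        linarith [nηξ2 z hz])
    have r2 := remainder hω hβ0 hR hR1 hωβR hωR P.hωd P.hMω K.c2 K.b2'
      (imx _ (add_real_mem_strip hz0 ω)) (imy _ hz0)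
      (pr z hz0).2.2.1.1 (pr z hz0).2.2.1.2 (nξ2 _ hzp) (η := deriv y z * zz z) (by
        have t1 := nηξ2 _ hz
        have t2 := nξs _ hz
        rw [show deriv y z * zz z - deriv x (z + ω) * w (z + ω) =
          (deriv y z * zz z - deriv x z * w z) -
          (deriv x (z + ω) * w (z + ω) - deriv x z * w z) by ring]
        refine (norm_sub_le _ _).trans ?_
        linarith)
    have q := (q2 z (hs1 hz)).trans (b := e / κ * ‖zz z‖) (c := e / κ * (4 * (ω * X))) (by
      gcongr; exact nzz' z (hs1 hz))
    refine le_trans ?_ (add_le_add (add_le_add r1 r2) q)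
    refine le_trans (le_of_eq ?_) (norm_add_le _ _)|>.trans (add_le_add_left (norm_sub_le _ _) _)
    congr 1
    ring
  · intro z hz
    simp only [add_sub_cancel_left]
    have h1 := nξ2 z hz
    have h2 := nηξ2 z hz
    have := norm_add_le (deriv y z * zz z - deriv x z * w z) (deriv x z * w z)
    rw [sub_add_cancel] at this
    constructor <;> linarith

end step
end FU

end

section

namespace FU
open Complex Filter Topology

lemma dep_choice {α : Type*} (Q : ℕ → α → Prop) (Rl : ℕ → α → α → Prop) (a0 : α) (h0 : Q 0 a0)
    (step : ∀ n a, Q n a → ∃ b, Q (n + 1) b ∧ Rl n a b) :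
    ∃ s : ℕ → α, s 0 = a0 ∧ ∀ n, Q n (s n) ∧ Rl n (s n) (s (n + 1)) := by
  choose nxt hn hr using step
  let S : (n : ℕ) → {a // Q n a} := fun n => Nat.rec ⟨a0, h0⟩ (fun n p => ⟨nxt n p.1 p.2, hn n p.1 p.2⟩) n
  exact ⟨fun n => (S n).1, rfl, fun n => ⟨(S n).2, hr n (S n).1 (S n).2⟩⟩

lemma St.mono' {h1 h2 : ℂ → ℂ → ℂ} {ω r a e r' a' e' : ℝ} {x y : ℂ → ℂ} (hω : 0 < ω)
    (S : St h1 h2 ω r a e x y) (hr : r' ≤ r) (ha : a ≤ a') (he : e ≤ e') : St h1 h2 ω r' a' e' x y := by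
  have hs := strip_mono hr
  refine ⟨S.hx.mono hr, S.hy.mono hr, fun z hz => (S.ux z (hs hz)).trans ha,
    fun z hz => (S.uy z (hs hz)).trans (by gcongr), fun z hz => (S.dx z (hs hz)).trans ha,
    fun z hz => (S.dy z (hs hz)).trans (by gcongr), fun z hz => (S.e1 z (hs hz)).trans he,
    fun z hz => (S.e2 z (hs hz)).trans he⟩

section
variable {h h1 h2 h11 h12 h22 : ℂ → ℂ → ℂ} {ω r a e R d M : ℝ} {x y : ℂ → ℂ}

lemma start_step (K : KH h h1 h2 h11 h12 h22 R d M) (P : Par ω R d M) :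
    St h1 h2 ω (R / 2) 0 ((M + 1) * ω) (fun z => z) (fun z => z + ω / 2) := by
  have hω := P.hω
  have hM0 := P.hM0
  have hR := P.hR
  have hd := P.hωd
  refine ⟨⟨differentiableOn_id, fun _ _ => rfl, fun _ _ => rfl⟩,
    ⟨by fun_prop, fun _ _ => by ring, fun _ _ => by simp [map_ofNat (starRingEnd ℂ) 2]⟩, ?_, ?_, ?_, ?_, ?_, ?_⟩
  · intro z _; simp
  · intro z _; simp
  · intro z _; simp
  · intro z _; simp
  · intro z hz
    rw [mem_strip] at hz
    have := K.i1 z (ω / 2) (by linarith) (by linarith) (by linarith)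
    push_cast at this
    rw [show z - (ω:ℂ) + ω / 2 = z - ω / 2 by ring]
    refine this.trans ?_
    nlinarith
  · intro z hz
    rw [mem_strip] at hz
    have := K.i2 (z + (ω / 2 : ℝ)) (ω / 2) (by simp; linarith) (by linarith) (by linarith)
    push_cast at this
    rw [show z + (ω:ℂ) / 2 - ω / 2 = z by ring, show z + (ω:ℂ) / 2 + ω / 2 = z + ω by ring] at this
    refine this.trans ?_
    nlinarith

lemma iter (K : KH h h1 h2 h11 h12 h22 R d M) (P : Par ω R d M) (hdio : Dio ω) {e : ℝ} (he : 0 < e)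
    {β : ℝ} (hβ : β = 10 * Cs ^ 2 * e / (R / 16) ^ 7) (hβR : 2 * β ≤ R / 100)
    (hsm : 2 * 10 ^ 7 * Cs ^ 4 * e * 2 ^ 14 / (R ^ 2 * (R / 16) ^ 14) ≤ 1)
    {x0 y0 : ℂ → ℂ} (h0 : St h1 h2 ω (R / 2) 0 e x0 y0) :
    ∃ s : ℕ → (ℂ → ℂ) × (ℂ → ℂ), ∀ n,
      St h1 h2 ω (R / 8) (R / 100) (e * (1 / 2) ^ n) (s n).1 (s n).2 ∧
      ∀ z ∈ strip (R / 8), ‖(s (n + 1)).1 z - (s n).1 z‖ ≤ 2 * β * (1 / 2) ^ n ∧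
        ‖(s (n + 1)).2 z - (s n).2 z‖ ≤ 2 * β * (1 / 2) ^ n := by
  have hω := P.hω; have hR := P.hR; have hR1 := P.hR1
  have hK := Cs_ge_one
  have hβ0 : 0 < β := by rw [hβ]; positivity
  obtain ⟨s, _, hs⟩ := dep_choice (α := (ℂ → ℂ) × (ℂ → ℂ))
    (fun n p => St h1 h2 ω (R / 8 + 3 * R / 8 * (1 / 2) ^ n) (2 * β * (1 - (1 / 2) ^ n))
      (e * ((1 / 2) ^ n) ^ 14) p.1 p.2)
    (fun n p q => ∀ z ∈ strip (R / 8), ‖q.1 z - p.1 z‖ ≤ 2 * β * (1 / 2) ^ n ∧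
        ‖q.2 z - p.2 z‖ ≤ 2 * β * (1 / 2) ^ n) (x0, y0) (by
      have : R / 8 + 3 * R / 8 = R / 2 := by ring
      simpa [this] using h0) (by
      intro n p hp
      set q : ℝ := (1 / 2) ^ n with hq
      have hq0 : 0 < q := by positivity
      have hq1 : q ≤ 1 := pow_le_one₀ (by norm_num) (by norm_num)
      have hqs : (1 / 2 : ℝ) ^ (n + 1) = q / 2 := by rw [pow_succ]; ring
      have hκ : 10 * Cs ^ 2 * (e * q ^ 14) / (R / 16 * q) ^ 7 = β * q ^ 7 := by
        rw [hβ]; field_simp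
      have hq7 : q ^ 7 ≤ q := by
        calc q ^ 7 ≤ q ^ 1 := pow_le_pow_of_le_one hq0.le hq1 (by norm_num)
          _ = q := pow_one q
      have hβq : β * q ^ 7 ≤ β * q := by gcongr
      have hβq1 : β * q ≤ β := by nlinarith
      obtain ⟨x', y', S', hc⟩ := newton K P hp hdio (κ := R / 16 * q) (β := β * q ^ 7)
        (by positivity) (by nlinarith) (by nlinarith) (by nlinarith)
        (by have : 0 ≤ 1 - q := by linarith
            positivity) (by nlinarith) (by nlinarith) (by positivity) hκ.symm (by linarith)
      have hr' : R / 8 + 3 * R / 8 * q - 3 * (R / 16 * q) = R / 8 + 3 * R / 8 * (q / 2) := by ring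
      rw [hr'] at S' hc
      refine ⟨(x', y'), ?_, ?_⟩
      · rw [hqs]
        refine S'.mono' hω le_rfl (by nlinarith) ?_
        have hid : 2 * 10 ^ 7 * Cs ^ 4 * (e * q ^ 14) ^ 2 / (R ^ 2 * (R / 16 * q) ^ 14) =
          (2 * 10 ^ 7 * Cs ^ 4 * e * 2 ^ 14 / (R ^ 2 * (R / 16) ^ 14)) * (e * (q / 2) ^ 14) := by
          field_simp
        rw [hid]
        exact mul_le_of_le_one_left (by positivity) hsm
      · intro z hz
        have := hc z (strip_mono (by nlinarith) hz)
        constructor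
        · refine this.1.trans ?_
          have : 0 < β * q := by positivity
          linarith
        · refine this.2.trans ?_
          linarith)
  refine ⟨s, fun n => ⟨(hs n).1.mono' hω ?_ ?_ ?_, (hs n).2⟩⟩
  · have : 0 < (1 / 2 : ℝ) ^ n := by positivity
    nlinarith
  · have : 0 < (1 / 2 : ℝ) ^ n := by positivity
    nlinarith
  · have hq0 : 0 < (1 / 2 : ℝ) ^ n := by positivity
    have hq1 : (1 / 2 : ℝ) ^ n ≤ 1 := pow_le_one₀ (by norm_num) (by norm_num)
    have : ((1 / 2 : ℝ) ^ n) ^ 14 ≤ ((1 / 2 : ℝ) ^ n) ^ 1 := pow_le_pow_of_le_one hq0.le hq1 (by norm_num)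
    rw [pow_one] at this
    gcongr

/-- real invariant curve from the sequence -/
lemma kam_limit (P : Par ω R d M) {e β : ℝ}
    (ct1 : ∀ τ σ, Dom R d τ σ → ContinuousAt (fun p : ℂ × ℂ => h1 p.1 p.2) (τ, σ))
    (ct2 : ∀ τ σ, Dom R d τ σ → ContinuousAt (fun p : ℂ × ℂ => h2 p.1 p.2) (τ, σ))
    {s : ℕ → (ℂ → ℂ) × (ℂ → ℂ)} (hs : ∀ n,
      St h1 h2 ω (R / 8) (R / 100) (e * (1 / 2) ^ n) (s n).1 (s n).2 ∧
      ∀ z ∈ strip (R / 8), ‖(s (n + 1)).1 z - (s n).1 z‖ ≤ 2 * β * (1 / 2) ^ n ∧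
        ‖(s (n + 1)).2 z - (s n).2 z‖ ≤ 2 * β * (1 / 2) ^ n) :
    ∃ x y : ℝ → ℝ, (∀ θ, x (θ + 1) = x θ + 1) ∧ (∀ θ, y (θ + 1) = y θ + 1) ∧
      (∀ θ θ', θ ≤ θ' → |x θ' - x θ - (θ' - θ)| ≤ 1 / 50 * (θ' - θ)) ∧
      (∀ θ θ', θ ≤ θ' → |y θ' - y θ - (θ' - θ)| ≤ 1 / 50 * (θ' - θ)) ∧
      (∀ θ, |y θ - x θ - ω / 2| ≤ ω / 100) ∧
      (∀ θ, h1 (x θ) (y θ) = h1 (x θ) (y (θ - ω))) ∧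
      (∀ θ, h2 (x θ) (y θ) = h2 (x (θ + ω)) (y θ)) := by
  have hω := P.hω; have hR := P.hR; have hR1 := P.hR1
  have hR8 : 0 < R / 8 := by positivity
  have mem := fun θ : ℝ => ofReal_mem_strip hR8 θ
  have key : ∀ f : ℕ → ℂ → ℂ, (∀ n, LHol (R / 8) (f n)) → (∀ n, ∀ z ∈ strip (R / 8), ‖deriv (f n) z - 1‖ ≤ 1 / 50) →
      (∀ n, ∀ z ∈ strip (R / 8), ‖f (n + 1) z - f n z‖ ≤ 2 * β * (1 / 2) ^ n) →
      ∃ X : ℝ → ℝ, (∀ θ : ℝ, Tendsto (fun n => f n θ) atTop (𝓝 (X θ : ℂ))) ∧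
      (∀ θ, X (θ + 1) = X θ + 1) ∧
      (∀ θ θ', θ ≤ θ' → |X θ' - X θ - (θ' - θ)| ≤ 1 / 50 * (θ' - θ)) := by
    intro f hf hd hc
    have hlim : ∀ θ : ℝ, ∃ l : ℂ, Tendsto (fun n => f n θ) atTop (𝓝 l) := by
      intro θ
      have : CauchySeq (fun n => f n θ) := cauchySeq_of_le_geometric (1 / 2) (2 * β) (by norm_num) (by
        intro n
        rw [dist_eq_norm, norm_sub_rev]
        exact hc n θ (mem θ))
      exact cauchySeq_tendsto_of_complete this
    choose L hL using hlim
    have hre : ∀ θ, ((L θ).re : ℂ) = L θ := by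
      intro θ
      have him : ∀ n, (f n θ).im = 0 := by
        intro n
        have := (hf n).conj θ (mem θ)
        rw [conj_ofReal] at this
        exact conj_eq_iff_im.1 this.symm
      have h2 := (continuous_im.tendsto (L θ)).comp (hL θ)
      have : (L θ).im = 0 := by
        refine tendsto_nhds_unique h2 ?_
        simp [Function.comp_def, him]
      apply Complex.ext <;> simp [this]
    refine ⟨fun θ => (L θ).re, fun θ => by rw [hre]; exact hL θ, ?_, ?_⟩
    · intro θ
      have h1 := hL (θ + 1)
      have h2 := (hL θ).add_const (1:ℂ)
      have : L (θ + 1) = L θ + 1 := by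
        refine tendsto_nhds_unique h1 (h2.congr ?_)
        intro n
        have := (hf n).per θ (mem θ)
        push_cast
        rw [this]
      simp [this]
    · intro θ θ' hθ
      have hb : ∀ n, ‖f n θ' - f n θ - (θ' - θ)‖ ≤ 1 / 50 * (θ' - θ) := by
        intro n
        have := shift_bound (C := 1 / 50) (ω := θ' - θ) (by linarith) (hf n).toHol.diff (fun z hz => by
          rw [deriv_fun_sub ((hf n).diffAt hz) differentiableAt_fun_id]
          simpa using hd n z hz) (mem θ)
        push_cast at this
        rw [add_sub_cancel] at this
        refine le_trans (le_of_eq ?_) this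
        congr 1; ring
      have hl := (((hL θ').sub (hL θ)).sub_const ((θ':ℂ) - θ)).norm
      have := le_of_tendsto' hl hb
      rw [← hre θ', ← hre θ] at this
      norm_cast at this
  have hnq : ∀ n, ∀ z ∈ strip (R / 8), ‖deriv (s n).2 z - 1‖ ≤ 1 / 50 := fun n z hz =>
    ((hs n).1.mono' hω le_rfl le_rfl le_rfl).nq P (by positivity) (by linarith) hz
  obtain ⟨X, hX, pX, lX⟩ := key (fun n => (s n).1) (fun n => (hs n).1.hx) (fun n z hz =>
    ((hs n).1.dx z hz).trans (by linarith)) (fun n z hz => ((hs n).2 z hz).1)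
  obtain ⟨Y, hY, pY, lY⟩ := key (fun n => (s n).2) (fun n => (hs n).1.hy) hnq
    (fun n z hz => ((hs n).2 z hz).2)
  have hXY : ∀ θ, |Y θ - X θ - ω / 2| ≤ ω / 100 := by
    intro θ
    have hl := (((hY θ).sub (hX θ)).sub_const ((ω:ℂ) / 2)).norm
    have := le_of_tendsto' hl (fun n => (hs n).1.uy θ (mem θ))
    have e : ((Y θ : ℂ) - X θ - ω / 2) = ((Y θ - X θ - ω / 2 : ℝ) : ℂ) := by push_cast; ring
    rw [e, norm_real, Real.norm_eq_abs] at this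
    nlinarith
  have dom : ∀ a b : ℝ, |b - a| ≤ ω → a ≠ b → Dom R d a b := by
    intro a b h1 h2
    refine ⟨by simpa using hR, by simpa using hR, by exact_mod_cast h2, ?_⟩
    have : ‖(b:ℂ) - a‖ = |b - a| := by rw [← ofReal_sub, norm_real, Real.norm_eq_abs]
    rw [this]; linarith [P.hωd]
  have he0 : Tendsto (fun n : ℕ => e * (1 / 2 : ℝ) ^ n) atTop (𝓝 0) := by
    have := (tendsto_pow_atTop_nhds_zero_of_lt_one (r := (1 / 2 : ℝ)) (by norm_num) (by norm_num)).const_mul e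
    simpa using this
  refine ⟨X, Y, pX, pY, lX, lY, hXY, ?_, ?_⟩
  · intro θ
    have b1 := abs_le.1 (hXY θ)
    have b2 := abs_le.1 (hXY (θ - ω))
    have b3 := abs_le.1 (lX (θ - ω) θ (by linarith))
    have D1 := dom (X θ) (Y θ) (by rw [abs_le]; constructor <;> linarith) (by linarith [b1.1] : X θ < Y θ).ne
    have D2 := dom (X θ) (Y (θ - ω)) (by rw [abs_le]; constructor <;> linarith)
      (by linarith [b2.2, b3.1] : Y (θ - ω) < X θ).ne'
    have t1 := (ct1 _ _ D1).tendsto.comp ((hX θ).prodMk_nhds (hY θ))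
    have t2 := (ct1 _ _ D2).tendsto.comp ((hX θ).prodMk_nhds (hY (θ - ω)))
    have t3 := (t1.sub t2).norm
    have := le_of_tendsto_of_tendsto' t3 he0 (fun n => by
      have := (hs n).1.e1 θ (mem θ)
      simpa using this)
    exact sub_eq_zero.1 (norm_le_zero_iff.1 this)
  · intro θ
    have b1 := abs_le.1 (hXY θ)
    have b3 := abs_le.1 (lX θ (θ + ω) (by linarith))
    have D1 := dom (X θ) (Y θ) (by rw [abs_le]; constructor <;> linarith) (by linarith [b1.1] : X θ < Y θ).ne
    have D2 := dom (X (θ + ω)) (Y θ) (by rw [abs_le]; constructor <;> linarith)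
      (by linarith [b1.2, b3.1] : Y θ < X (θ + ω)).ne'
    have t1 := (ct2 _ _ D1).tendsto.comp ((hX θ).prodMk_nhds (hY θ))
    have t2 := (ct2 _ _ D2).tendsto.comp ((hX (θ + ω)).prodMk_nhds (hY θ))
    have t3 := (t1.sub t2).norm
    have := le_of_tendsto_of_tendsto' t3 he0 (fun n => by
      have := (hs n).1.e2 θ (mem θ)
      simpa using this)
    exact sub_eq_zero.1 (norm_le_zero_iff.1 this)

theorem kam (K : KH h h1 h2 h11 h12 h22 R d M) (hR : 0 < R) (hR1 : R ≤ 1) (hd : 0 < d) (hM : 0 ≤ M)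
    (ct1 : ∀ τ σ, Dom R d τ σ → ContinuousAt (fun p : ℂ × ℂ => h1 p.1 p.2) (τ, σ))
    (ct2 : ∀ τ σ, Dom R d τ σ → ContinuousAt (fun p : ℂ × ℂ => h2 p.1 p.2) (τ, σ))
    (ε : ℝ) (hε : 0 < ε) :
    ∃ ω, 0 < ω ∧ ω < ε ∧ 
    ∃ x y : ℝ → ℝ, (∀ θ, x (θ + 1) = x θ + 1) ∧ (∀ θ, y (θ + 1) = y θ + 1) ∧
      (∀ θ θ', θ ≤ θ' → |x θ' - x θ - (θ' - θ)| ≤ 1 / 50 * (θ' - θ)) ∧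
      (∀ θ θ', θ ≤ θ' → |y θ' - y θ - (θ' - θ)| ≤ 1 / 50 * (θ' - θ)) ∧
      (∀ θ, |y θ - x θ - ω / 2| ≤ ω / 100) ∧
      (∀ θ, h1 (x θ) (y θ) = h1 (x θ) (y (θ - ω))) ∧
      (∀ θ, h2 (x θ) (y θ) = h2 (x (θ + ω)) (y θ)) := by
  have hK := Cs_ge_one
  set c1 : ℝ := 10 * Cs ^ 2 * (M + 1) / (R / 16) ^ 7 with hc1
  set c2 : ℝ := 2 * 10 ^ 7 * Cs ^ 4 * (M + 1) * 2 ^ 14 / (R ^ 2 * (R / 16) ^ 14) with hc2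
  have hc10 : 0 < c1 := by positivity
  have hc20 : 0 < c2 := by positivity
  obtain ⟨ω, hω, hωlt, hdio⟩ := exists_dio (min ε (min (R / 100) (min (d / 2) (min (1 / (100 * (M + 1)))
    (min (R / 100 / (2 * c1)) (1 / c2)))))) (by positivity)
  simp only [lt_min_iff] at hωlt
  obtain ⟨l1, l2, l3, l4, l5, l6⟩ := hωlt
  rw [lt_div_iff₀ (by positivity)] at l4 l5 l6
  have P : Par ω R d M := ⟨hω, hR, hR1, l2.le, by linarith, hM, by nlinarith⟩
  obtain ⟨s, hs⟩ := iter K P hdio (e := (M + 1) * ω) (by positivity) rfl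
    (by
      have : 10 * Cs ^ 2 * ((M + 1) * ω) / (R / 16) ^ 7 = c1 * ω := by rw [hc1]; ring
      rw [this]; linarith)
    (by
      have : 2 * 10 ^ 7 * Cs ^ 4 * ((M + 1) * ω) * 2 ^ 14 / (R ^ 2 * (R / 16) ^ 14) = c2 * ω := by
        rw [hc2]; ring
      rw [this]; linarith) (start_step K P)
  exact ⟨ω, hω, l1, kam_limit P ct1 ct2 hs⟩

end
end FU

end

section

namespace FU
open Complex Filter Topology

/-- local complex extension of a real-analytic function -/
lemma local_ext {f : ℝ → ℝ} {x : ℝ} (hf : AnalyticAt ℝ f x) :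
    ∃ ρ > 0, ∃ F : ℂ → ℂ, DifferentiableOn ℂ F (Metric.ball (x:ℂ) ρ) ∧
      ∀ t : ℝ, |t - x| < ρ → F t = f t := by
  obtain ⟨p, r, hp⟩ := hf
  let q : FormalMultilinearSeries ℂ ℂ ℂ := fun n =>
    ContinuousMultilinearMap.mkPiRing ℂ (Fin n) ((p.coeff n : ℝ) : ℂ)
  have hqr : r ≤ q.radius := by
    refine hp.r_le.trans (FormalMultilinearSeries.radius_le_of_le ?_)
    intro n
    have e1 : ‖p n‖ = ‖p.coeff n‖ := FormalMultilinearSeries.norm_apply_eq_norm_coef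
    simp only [q, ContinuousMultilinearMap.norm_mkPiRing, norm_real]
    rw [e1]
  have hq0 : 0 < q.radius := hp.r_pos.trans_le hqr
  have hq := q.hasFPowerSeriesOnBall hq0
  obtain ⟨ρ, hρ0, hρr⟩ := ENNReal.lt_iff_exists_nnreal_btwn.1 hp.r_pos
  have hρ0' : (0:ℝ) < ρ := by exact_mod_cast hρ0
  refine ⟨ρ, hρ0', fun z => q.sum (z - x), ?_, ?_⟩
  · have h1 := hq.differentiableOn
    refine h1.comp (by fun_prop) ?_
    intro z hz
    rw [Metric.mem_ball, dist_eq_norm] at hz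
    rw [Metric.mem_eball, edist_zero_right]
    refine lt_of_lt_of_le ?_ (hρr.le.trans hqr)
    rw [enorm_eq_nnnorm]
    exact_mod_cast hz
  · intro t ht
    have hmem : t - x ∈ Metric.eball (0:ℝ) r := by
      rw [Metric.mem_eball, edist_zero_right]
      refine lt_of_lt_of_le ?_ hρr.le
      rw [enorm_eq_nnnorm]
      have : ‖t - x‖ < ρ := ht
      exact_mod_cast this
    have h1 := hp.hasSum hmem
    rw [add_sub_cancel] at h1
    have h2 := (hasSum_ofReal (f := fun n => (p n) fun _ => (t - x)) (x := f t)).2 h1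
    have h3 : q.sum ((t:ℂ) - x) = f t := by
      refine HasSum.tsum_eq ?_
      refine h2.congr_fun ?_
      intro n
      simp [q]
    exact h3

lemma glue {f : ℝ → ℝ} {ρ : ℝ} (hρ : 0 < ρ) (hloc : ∀ x : ℝ, ∃ F : ℂ → ℂ,
      DifferentiableOn ℂ F (Metric.ball (x:ℂ) ρ) ∧ ∀ t : ℝ, |t - x| < ρ → F t = f t) :
    ∃ F : ℂ → ℂ, DifferentiableOn ℂ F (strip ρ) ∧ ∀ t : ℝ, F t = f t := by
  choose G hG hGf using hloc
  refine ⟨fun z => G z.re z, ?_, fun t => by simpa using hGf t t (by simpa using hρ)⟩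
  intro z hz
  have hzb : ∀ w ∈ strip ρ, w ∈ Metric.ball (w.re : ℂ) ρ := by
    intro w hw
    rw [Metric.mem_ball, dist_eq_norm]
    have : w - w.re = w.im * I := by
      apply Complex.ext <;> simp
    rw [this, norm_mul, norm_I, mul_one, norm_real]
    exact hw
  refine DifferentiableAt.differentiableWithinAt ?_
  have h1 := (hG z.re).differentiableAt (Metric.isOpen_ball.mem_nhds (hzb z hz))
  refine h1.congr_of_eventuallyEq ?_
  have n1 : Metric.ball (z.re:ℂ) ρ ∈ 𝓝 z := Metric.isOpen_ball.mem_nhds (hzb z hz)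
  have n2 : {w : ℂ | |w.re - z.re| < ρ} ∈ 𝓝 z := by
    refine IsOpen.mem_nhds ?_ (by simpa using hρ)
    exact isOpen_lt (by fun_prop) continuous_const
  filter_upwards [n1, n2, (isOpen_strip ρ).mem_nhds hz] with w hw1 hw2 hw3
  have hc : Convex ℝ (Metric.ball (w.re:ℂ) ρ ∩ Metric.ball (z.re:ℂ) ρ) :=
    (convex_ball _ _).inter (convex_ball _ _)
  have mb : ∀ a b : ℝ, (a:ℂ) ∈ Metric.ball (b:ℂ) ρ ↔ |a - b| < ρ := by
    intro a b
    rw [Metric.mem_ball, dist_eq_norm, ← ofReal_sub, norm_real, Real.norm_eq_abs]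
  refine AnalyticOnNhd.eqOn_of_preconnected_of_frequently_eq (z₀ := (z.re:ℂ))
    (((hG w.re).mono Set.inter_subset_left).analyticOnNhd (Metric.isOpen_ball.inter Metric.isOpen_ball))
    (((hG z.re).mono Set.inter_subset_right).analyticOnNhd (Metric.isOpen_ball.inter Metric.isOpen_ball))
    hc.isPreconnected ⟨(mb _ _).2 (by rw [abs_sub_comm]; exact hw2), (mb _ _).2 (by simpa using hρ)⟩ ?_
    ⟨hzb w hw3, hw1⟩
  have h0 : Filter.Tendsto (fun x : ℝ => (x : ℂ)) (nhdsWithin z.re {z.re}ᶜ) (nhdsWithin (z.re:ℂ) {(z.re:ℂ)}ᶜ) := by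
    refine tendsto_nhdsWithin_iff.2 ⟨(continuous_ofReal.tendsto _).mono_left nhdsWithin_le_nhds, ?_⟩
    filter_upwards [self_mem_nhdsWithin] with a ha
    simpa using ha
  refine h0.frequently (Eventually.frequently ?_)
  have o1 : {a : ℝ | |a - w.re| < ρ} ∈ 𝓝 z.re :=
    (isOpen_lt (by fun_prop) continuous_const).mem_nhds (by
      show |z.re - w.re| < ρ
      rw [abs_sub_comm]; exact hw2)
  have o2 : {a : ℝ | |a - z.re| < ρ} ∈ 𝓝 z.re :=
    (isOpen_lt (by fun_prop) continuous_const).mem_nhds (by simpa using hρ)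
  filter_upwards [mem_nhdsWithin_of_mem_nhds o1, mem_nhdsWithin_of_mem_nhds o2] with a ha1 ha2
  rw [hGf _ _ ha1, hGf _ _ ha2]

/-- global extension of a periodic real-analytic function -/
lemma ext_periodic {f : ℝ → ℝ} (hf : ∀ x, AnalyticAt ℝ f x) (hp : Function.Periodic f 1) :
    ∃ r > 0, ∃ F : ℂ → ℂ, Hol r F ∧ ∀ t : ℝ, F t = f t := by
  choose ρ hρ G hG hGf using fun x => local_ext (hf x)
  obtain ⟨δ, hδ, hleb⟩ := lebesgue_number_lemma_of_metric (s := (fun x : ℝ => (x:ℂ)) '' Set.Icc 0 1)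
    (c := fun x : ℝ => Metric.ball (x:ℂ) (ρ x)) (isCompact_Icc.image continuous_ofReal)
    (fun x => Metric.isOpen_ball) (by
      rintro _ ⟨x, _, rfl⟩
      exact Set.mem_iUnion.2 ⟨x, Metric.mem_ball_self (hρ x)⟩)
  obtain ⟨F, hF, hFf⟩ := glue (f := f) hδ (by
    intro x
    obtain ⟨i, hi⟩ := hleb ((Int.fract x : ℝ) : ℂ) ⟨Int.fract x, ⟨Int.fract_nonneg x, (Int.fract_lt_one x).le⟩, rfl⟩
    refine ⟨fun z => G i (z - (⌊x⌋ : ℝ)), ?_, ?_⟩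
    · refine (hG i).comp (by fun_prop) ?_
      intro z hz
      apply hi
      rw [Metric.mem_ball, dist_eq_norm] at hz ⊢
      rw [Int.fract]
      refine lt_of_le_of_lt (le_of_eq ?_) hz
      congr 1; push_cast; ring
    · intro t ht
      have hm : ((t - ⌊x⌋ : ℝ) : ℂ) ∈ Metric.ball (i:ℂ) (ρ i) := by
        apply hi
        rw [Metric.mem_ball, dist_eq_norm, ← ofReal_sub, norm_real, Real.norm_eq_abs, Int.fract]
        refine lt_of_le_of_lt (le_of_eq ?_) ht
        congr 1; ring
      rw [Metric.mem_ball, dist_eq_norm, ← ofReal_sub, norm_real, Real.norm_eq_abs] at hm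
      have := hGf i _ hm
      simp only
      rw [← ofReal_sub, this]
      have h2 := hp.sub_int_mul_eq ⌊x⌋ (x := t)
      simp only [mul_one] at h2
      rw [h2])
  refine ⟨δ, hδ, F, ⟨hF, ?_, ?_⟩, hFf⟩
  · intro z hz
    refine eq_of_eq_real hδ (f := fun z => F (z + 1)) ?_ hF ?_ hz
    · refine hF.comp (by fun_prop) ?_
      intro z hz
      simpa using add_real_mem_strip hz 1
    · intro x
      have := hFf (x + 1)
      push_cast at this
      rw [this, hp x, hFf]
  · intro z hz
    have h1 := eq_of_eq_real hδ (f := fun z => (starRingEnd ℂ) (F ((starRingEnd ℂ) z))) (g := F) ?_ hF ?_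
      hz
    · rw [← h1]; simp
    · intro w hw
      have := (hF.differentiableAt ((isOpen_strip δ).mem_nhds (conj_mem_strip hw)))
      have h2 := this.hasDerivAt.conj_conj
      simp only [conj_conj] at h2
      exact h2.differentiableAt.differentiableWithinAt
    · intro x
      simp [hFf]

lemma Hol.bdd {r s : ℝ} {f : ℂ → ℂ} (hf : Hol r f) (hs : s < r) :
    ∃ C, ∀ z ∈ strip s, ‖f z‖ ≤ C := by
  have hK : IsCompact (Set.Icc (0:ℝ) 1 ×ℂ Set.Icc (-s) s) := isCompact_Icc.reProdIm isCompact_Icc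
  have hsub : Set.Icc (0:ℝ) 1 ×ℂ Set.Icc (-s) s ⊆ strip r := by
    intro z hz
    have h2 := hz.2
    rw [mem_strip]
    exact lt_of_le_of_lt (abs_le.2 h2) hs
  obtain ⟨C, hC⟩ := hK.exists_bound_of_continuousOn (hf.diff.continuousOn.mono hsub)
  refine ⟨C, fun z hz => ?_⟩
  have hshift : ∀ n : ℤ, ∀ z ∈ strip r, f (z - n) = f z := by
    have hnat : ∀ n : ℕ, ∀ z ∈ strip r, f (z + n) = f z := by
      intro n
      induction n with
      | zero => intro z _; simp
      | succ n ih =>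
        intro z hz
        have := hf.per (z + n) (by simpa using add_real_mem_strip hz n)
        push_cast
        rw [← add_assoc, this, ih z hz]
    intro n z hz
    rcases Int.eq_nat_or_neg n with ⟨m, rfl | rfl⟩
    · have := hnat m (z - m) (by simpa using sub_real_mem_strip hz m)
      simp only [sub_add_cancel] at this
      simp [this]
    · simpa using hnat m z hz
  rw [← hshift ⌊z.re⌋ z (strip_mono hs.le hz)]
  apply hC
  constructor
  · simp only [Set.mem_preimage, sub_re, intCast_re]
    exact ⟨Int.fract_nonneg _, (Int.fract_lt_one _).le⟩
  · simpa [Set.mem_Icc, ← abs_le] using (le_of_lt hz : |z.im| ≤ s)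

end FU

end

section

namespace FU
open Complex Filter Topology

lemma analytic_of_deriv {τ k : ℝ → ℝ} {x : ℝ} (hk : AnalyticAt ℝ k x)
    (hτ : ∀ t, HasDerivAt τ (k t) t) : AnalyticAt ℝ τ x := by
  obtain ⟨ρ, hρ, K, hK, hKk⟩ := local_ext hk
  obtain ⟨P, hP0, hP⟩ := hK.isExactOn_ball.with_val_at (x:ℂ) (τ x : ℂ)
  have hPd : DifferentiableOn ℂ P (Metric.ball (x:ℂ) ρ) := fun z hz =>
    (hP z hz).differentiableAt.differentiableWithinAt
  have hPa : AnalyticAt ℂ P ((x:ℝ):ℂ) :=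
    hPd.analyticAt (Metric.isOpen_ball.mem_nhds (Metric.mem_ball_self hρ))
  have h1 : AnalyticAt ℝ (fun t : ℝ => (P t).re) x := by
    have a1 : AnalyticAt ℝ P (ofRealCLM x) := hPa.restrictScalars
    have a2 := a1.comp (ofRealCLM.analyticAt x)
    exact (reCLM.analyticAt _).comp a2
  refine h1.congr ?_
  have mb : ∀ a : ℝ, (a:ℂ) ∈ Metric.ball (x:ℂ) ρ ↔ a ∈ Metric.ball x ρ := by
    intro a
    rw [Metric.mem_ball, dist_eq_norm, ← ofReal_sub, norm_real, Metric.mem_ball, dist_eq_norm]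
  filter_upwards [Metric.ball_mem_nhds x hρ] with t ht
  have hd : ∀ s ∈ Metric.ball x ρ, HasDerivWithinAt (fun t : ℝ => (P t).re - τ t) 0 (Metric.ball x ρ) s := by
    intro s hs
    have d2 : HasDerivAt (fun t : ℝ => (P t).re) (k s) s := by
      have h0 := hP s ((mb s).2 hs)
      rw [hKk s (by simpa [Real.dist_eq] using hs)] at h0
      have := h0.real_of_complex
      rwa [ofReal_re] at this
    simpa using (d2.fun_sub (hτ s)).hasDerivWithinAt
  have := Convex.norm_image_sub_le_of_norm_hasDerivWithin_le (C := 0) hd (by simp) (convex_ball x ρ)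
    (Metric.mem_ball_self hρ) ht
  simp [hP0] at this
  linarith

lemma time_change {T : ℝ} (hT : 0 < T) {l : ℝ → ℝ} (hl : ∀ x, AnalyticAt ℝ l x)
    (hp : Function.Periodic l T) (hpos : ∀ t, 0 < l t) :
    ∃ c > 0, ∃ X : ℝ → ℝ, (∀ θ, AnalyticAt ℝ X θ) ∧ (∀ θ, HasDerivAt X (c * l (X θ) ^ 2) θ) ∧
      (∀ θ, X (θ + 1) = X θ + T) ∧ StrictMono X ∧ Function.Surjective X := by
  set k : ℝ → ℝ := fun t => (l t ^ 2)⁻¹ with hk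
  have hka : ∀ x, AnalyticAt ℝ k x := fun x => ((hl x).pow 2).inv (pow_ne_zero 2 (hpos x).ne')
  have hkc : Continuous k := continuous_iff_continuousAt.2 fun x => (hka x).continuousAt
  have hkp : Function.Periodic k T := fun t => by simp only [hk, hp t]
  have hk0 : ∀ t, 0 < k t := fun t => by have := hpos t; simp only [hk]; positivity
  have hki : ∀ a b, IntervalIntegrable k MeasureTheory.volume a b := fun a b => hkc.intervalIntegrable a b
  set c : ℝ := ∫ t in (0:ℝ)..T, k t with hc
  have hc0 : 0 < c := intervalIntegral.intervalIntegral_pos_of_pos (hki 0 T) hk0 hT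
  set τ : ℝ → ℝ := fun t => (∫ s in (0:ℝ)..t, k s) / c with hτ
  have hτd : ∀ t, HasDerivAt τ (k t / c) t := fun t =>
    (hkc.integral_hasStrictDerivAt 0 t).hasDerivAt.div_const c
  have hτp : ∀ t, τ (t + T) = τ t + 1 := by
    intro t
    simp only [hτ]
    rw [← intervalIntegral.integral_add_adjacent_intervals (hki 0 t) (hki t (t + T)),
      hkp.intervalIntegral_add_eq t 0, zero_add, ← hc]
    field_simp
  have hτm : StrictMono τ := strictMono_of_deriv_pos (fun t => by
    rw [(hτd t).deriv]; exact div_pos (hk0 t) hc0)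
  have hτc : Continuous τ := continuous_iff_continuousAt.2 fun x => (hτd x).continuousAt
  have hτ0 : τ 0 = 0 := by simp [hτ]
  have hτs : Function.Surjective τ := by
    have hper : Function.Periodic (fun t => τ t - t / T) T := fun t => by
      simp only [hτp]; field_simp; ring
    have hn : ∀ n : ℤ, τ (n * T) = n := by
      intro n
      have := hper.int_mul n 0
      simp only [zero_add, hτ0] at this
      rw [mul_div_cancel_right₀ _ hT.ne', zero_div] at this
      linarith
    intro y
    have := intermediate_value_Icc (f := τ) (a := ⌊y⌋ * T) (b := (⌊y⌋ + 1 : ℤ) * T)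
      (by push_cast; nlinarith) hτc.continuousOn
    rw [hn, hn] at this
    obtain ⟨t, _, ht⟩ := this ⟨Int.floor_le y, by push_cast; exact (Int.lt_floor_add_one y).le⟩
    exact ⟨t, ht⟩
  set e := (hτm.orderIsoOfSurjective τ hτs).toHomeomorph.toOpenPartialHomeomorph with he
  set X : ℝ → ℝ := ⇑e.symm with hX
  have heτ : ∀ t, e t = τ t := fun t => rfl
  have hXτ : ∀ t, X (τ t) = t := fun t => e.left_inv (x := t) trivial
  have hτX : ∀ θ, τ (X θ) = θ := fun θ => e.right_inv (x := θ) trivial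
  have hτa : ∀ t, AnalyticAt ℝ τ t := fun t =>
    analytic_of_deriv (k := fun t => k t / c) ((hka t).div analyticAt_const hc0.ne') hτd
  refine ⟨c, hc0, X, ?_, ?_, ?_, ?_, ?_⟩
  · intro θ
    have hne : k (X θ) / c ≠ 0 := (div_pos (hk0 _) hc0).ne'
    refine e.analyticAt_symm (i := ContinuousLinearEquiv.unitsEquivAut ℝ (Units.mk0 _ hne))
      (show θ ∈ e.target from trivial) (hτa (X θ)) ?_
    have h1 := (hτd (X θ)).hasFDerivAt.fderiv
    refine (show fderiv ℝ (⇑e) (e.symm θ) = fderiv ℝ τ (X θ) from rfl).trans (h1.trans ?_)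
    ext
    simp
  · intro θ
    have hne : k (X θ) / c ≠ 0 := (div_pos (hk0 _) hc0).ne'
    have := e.hasDerivAt_symm (a := θ) (show θ ∈ e.target from trivial) hne (hτd (X θ))
    have he : (k (X θ) / c)⁻¹ = c * l (X θ) ^ 2 := by
      simp only [hk]
      have := (hpos (X θ)).ne'
      field_simp
    rw [he] at this
    exact this
  · intro θ
    apply hτm.injective
    rw [hτX, hτp, hτX]
  · intro a b hab
    by_contra hcon
    have := hτm.monotone (not_lt.1 hcon)
    rw [hτX, hτX] at this
    linarith
  · intro t
    exact ⟨τ t, hXτ t⟩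

end FU

end

section

namespace FU
open Complex Filter Topology

lemma hda_congr {f g : ℂ → ℂ} {a b x : ℂ} (h : HasDerivAt f a x) (hf : ∀ z, g z = f z)
    (hab : b = a) : HasDerivAt g b x := by
  obtain rfl : g = f := funext hf
  rw [hab]; exact h

lemma remov {U : Set ℂ} (hU : IsOpen U) {a : ℂ} (ha : a ∈ U) {f : ℂ → ℂ} {M : ℝ}
    (hd : DifferentiableOn ℂ f (U \ {a})) (hb : ∀ z ∈ U, z ≠ a → ‖f z‖ ≤ M) :
    ∃ G : ℂ → ℂ, DifferentiableOn ℂ G U ∧ (∀ z, z ≠ a → G z = f z) ∧ ∀ z ∈ U, ‖G z‖ ≤ M := by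
  have h := differentiableOn_update_limUnder_of_bddAbove (hU.mem_nhds ha) hd
    ⟨M, by rintro _ ⟨z, ⟨hz, hz'⟩, rfl⟩; exact hb z hz hz'⟩
  refine ⟨_, h, fun z hz => Function.update_of_ne hz _ _, ?_⟩
  set G := Function.update f a (limUnder (𝓝[≠] a) f) with hG
  have hGf : ∀ z, z ≠ a → G z = f z := fun z hz => Function.update_of_ne hz _ _
  intro z hz
  by_cases hza : z = a
  · subst hza
    have hc : ContinuousAt G z := (h.differentiableAt (hU.mem_nhds hz)).continuousAt
    refine le_of_tendsto ((hc.norm.tendsto).mono_left (nhdsWithin_le_nhds (s := {z}ᶜ))) ?_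
    filter_upwards [self_mem_nhdsWithin, mem_nhdsWithin_of_mem_nhds (hU.mem_nhds hz)] with w hw hw'
    rw [hGf w hw]; exact hb w hw' hw
  · rw [hGf z hza]; exact hb z hz hza

lemma punct_cauchy {U : Set ℂ} (hU : IsOpen U) {a : ℂ} (ha : a ∈ U) {f : ℂ → ℂ} {M ρ : ℝ}
    (hρ : 0 < ρ)
    (hd : DifferentiableOn ℂ f (U \ {a})) (hb : ∀ z ∈ U, z ≠ a → ‖f z‖ ≤ M)
    {z : ℂ} (hz : z ≠ a) (hB : Metric.closedBall z ρ ⊆ U) : ‖deriv f z‖ ≤ M / ρ := by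
  obtain ⟨G, hG, hGf, hGb⟩ := remov hU ha hd hb
  have he : G =ᶠ[𝓝 z] f := by
    filter_upwards [isOpen_ne.mem_nhds hz] with w hw using hGf w hw
  rw [← he.deriv_eq]
  refine norm_deriv_le_of_forall_mem_sphere_norm_le hρ ?_ ?_
  · refine DifferentiableOn.diffContOnCl (hG.mono ?_)
    rw [closure_ball _ hρ.ne']; exact hB
  · intro w hw; exact hGb w (hB (Metric.sphere_subset_closedBall hw))

lemma punct_lip {a : ℂ} {f : ℂ → ℂ} {M s : ℝ} (hs : 0 < s)
    (hd : DifferentiableOn ℂ f (Metric.ball a s \ {a}))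
    (hb : ∀ z ∈ Metric.ball a s, z ≠ a → ‖f z‖ ≤ M)
    {u w : ℂ} (hu : u ∈ Metric.ball a (s/2)) (hw : w ∈ Metric.ball a (s/2)) (hua : u ≠ a)
    (hwa : w ≠ a) : ‖f u - f w‖ ≤ M / (s/2) * ‖u - w‖ := by
  obtain ⟨G, hG, hGf, hGb⟩ := remov Metric.isOpen_ball (Metric.mem_ball_self hs) hd hb
  rw [← hGf u hua, ← hGf w hwa]
  refine Convex.norm_image_sub_le_of_norm_deriv_le (s := Metric.ball a (s/2)) ?_ ?_
    (convex_ball a (s/2)) hw hu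
  · intro z hz
    exact hG.differentiableAt (Metric.isOpen_ball.mem_nhds
      (Metric.ball_subset_ball (by linarith) hz))
  · intro z hz
    have hB : Metric.closedBall z (s/2) ⊆ Metric.ball a s := Metric.closedBall_subset_ball' (by
      rw [Metric.mem_ball] at hz; linarith)
    refine norm_deriv_le_of_forall_mem_sphere_norm_le (by linarith) ?_ ?_
    · refine DifferentiableOn.diffContOnCl (hG.mono ?_)
      rw [closure_ball _ (by linarith)]; exact hB
    · intro w hw; exact hGb w (hB (Metric.sphere_subset_closedBall hw))

lemma Dom.mono {R R' d d' : ℝ} {τ σ : ℂ} (h : Dom R d τ σ) (hR : R ≤ R') (hd : d ≤ d') :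
    Dom R' d' τ σ :=
  ⟨h.1.trans_le hR, h.2.1.trans_le hR, h.2.2.1, h.2.2.2.trans_le hd⟩

lemma Nice.mono {R R' d d' : ℝ} {k : ℂ → ℂ → ℂ} (h : Nice R' d' k) (hR : R ≤ R') (hd : d ≤ d') :
    Nice R d k :=
  ⟨fun x y z hx hy hD => h.diff x y z hx hy (hD.mono hR hd),
   fun τ σ hD => h.per τ σ (hD.mono hR hd), fun τ σ hD => h.conj τ σ (hD.mono hR hd)⟩

lemma KH_of {h h1 h2 h11 h12 h22 : ℂ → ℂ → ℂ} {R d M : ℝ} (hR : 0 < R) (hd : 0 < d)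
    (n0 : Nice R d h) (n1 : Nice R d h1) (n2 : Nice R d h2) (n12 : Nice R d h12)
    (c0 : ∀ (x y : ℂ → ℂ) (x' y' z : ℂ), HasDerivAt x x' z → HasDerivAt y y' z →
      Dom R d (x z) (y z) →
      HasDerivAt (fun z => h (x z) (y z)) (h1 (x z) (y z) * x' + h2 (x z) (y z) * y') z)
    (c1 : ∀ (x y : ℂ → ℂ) (x' y' z : ℂ), HasDerivAt x x' z → HasDerivAt y y' z →
      Dom R d (x z) (y z) →
      HasDerivAt (fun z => h1 (x z) (y z)) (h11 (x z) (y z) * x' + h12 (x z) (y z) * y') z)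
    (c2 : ∀ (x y : ℂ → ℂ) (x' y' z : ℂ), HasDerivAt x x' z → HasDerivAt y y' z →
      Dom R d (x z) (y z) →
      HasDerivAt (fun z => h2 (x z) (y z)) (h12 (x z) (y z) * x' + h22 (x z) (y z) * y') z)
    (hb : ∀ τ σ, Dom R d τ σ → ‖h τ σ - 1 / (σ - τ)‖ ≤ M) :
    ∃ d' M', 0 < d' ∧ d' ≤ d ∧ 0 ≤ M' ∧ KH h h1 h2 h11 h12 h22 (R/4) d' M' := by
  set ρ := min d R / 4 with hρ
  have hρ0 : 0 < ρ := by rw [hρ]; have := lt_min hd hR; linarith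
  have hρd : ρ ≤ d / 4 := by rw [hρ]; have := min_le_left d R; linarith
  have hρR : ρ ≤ R / 4 := by rw [hρ]; have := min_le_right d R; linarith
  have hM : 0 ≤ M := by
    refine (norm_nonneg _).trans (hb 0 ((d/2 : ℝ) : ℂ) ⟨by simpa, by simpa, ?_, ?_⟩)
    · intro h; have := congrArg re h; simp at this; linarith
    · rw [sub_zero, norm_real, Real.norm_eq_abs, abs_of_pos] <;> linarith
  have ic : ∀ (R0 : ℝ) (z w : ℂ), |z.im| < R0 → ‖w - z‖ ≤ ρ → |w.im| < R0 + R / 4 := by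
    intro R0 z w hz hw
    have := abs_im_le_norm (w - z)
    have h2 := abs_add_le z.im (w - z).im
    have h3 : z.im + (w - z).im = w.im := by simp
    rw [h3] at h2
    linarith
  -- open sets
  have oU : ∀ (a : ℂ) (R0 d0 : ℝ), IsOpen (strip R0 ∩ Metric.ball a d0) := fun a R0 d0 =>
    (isOpen_strip R0).inter Metric.isOpen_ball
  have cB : ∀ (a z : ℂ) (R0 d0 R1 d1 : ℝ), R0 + R / 4 ≤ R1 → d0 + d / 4 ≤ d1 → |z.im| < R0 →
      ‖z - a‖ < d0 → Metric.closedBall z ρ ⊆ strip R1 ∩ Metric.ball a d1 := by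
    intro a z R0 d0 R1 d1 hR1 hd1 hz hza w hw
    rw [Metric.mem_closedBall, dist_eq_norm] at hw
    refine ⟨(ic R0 z w hz hw).trans_le hR1, ?_⟩
    rw [Metric.mem_ball, dist_eq_norm]
    have := norm_add_le (w - z) (z - a)
    rw [sub_add_sub_cancel] at this
    linarith
  -- derivatives in one variable
  have e1 : ∀ τ σ, Dom R d τ σ →
      HasDerivAt (fun z => h z σ - 1 / (σ - z)) (h1 τ σ - 1 / (σ - τ) ^ 2) τ := by
    intro τ σ hD
    have hne : σ - τ ≠ 0 := sub_ne_zero.2 hD.2.2.1.symm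
    have a := c0 (fun z => z) (fun _ => σ) 1 0 τ (hasDerivAt_id τ) (hasDerivAt_const _ _) hD
    have b := ((hasDerivAt_id τ).const_sub σ).inv hne
    refine hda_congr (a.sub b) (fun z => by simp) ?_
    simp only [id, Pi.pow_apply]; field_simp; try push_cast; try ring
  have e2 : ∀ τ σ, Dom R d τ σ →
      HasDerivAt (fun z => h τ z - 1 / (z - τ)) (h2 τ σ + 1 / (σ - τ) ^ 2) σ := by
    intro τ σ hD
    have hne : σ - τ ≠ 0 := sub_ne_zero.2 hD.2.2.1.symm
    have a := c0 (fun _ => τ) (fun z => z) 0 1 σ (hasDerivAt_const _ _) (hasDerivAt_id σ) hD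
    have b := ((hasDerivAt_id σ).sub_const τ).inv hne
    refine hda_congr (a.sub b) (fun z => by simp) ?_
    simp only [id, Pi.pow_apply]; field_simp; try push_cast; try ring
  have e12 : ∀ τ σ, Dom R d τ σ →
      HasDerivAt (fun z => h1 τ z - 1 / (z - τ) ^ 2) (h12 τ σ + 2 / (σ - τ) ^ 3) σ := by
    intro τ σ hD
    have hne : σ - τ ≠ 0 := sub_ne_zero.2 hD.2.2.1.symm
    have a := c1 (fun _ => τ) (fun z => z) 0 1 σ (hasDerivAt_const _ _) (hasDerivAt_id σ) hD
    have b := (((hasDerivAt_id σ).sub_const τ).pow 2).inv (pow_ne_zero 2 hne)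
    refine hda_congr (a.sub b) (fun z => by simp) ?_
    simp only [id, Pi.pow_apply]; field_simp; try push_cast; try ring
  have e21 : ∀ τ σ, Dom R d τ σ →
      DifferentiableAt ℂ (fun z => h2 z σ + 1 / (σ - z) ^ 2) τ := by
    intro τ σ hD
    have hne : σ - τ ≠ 0 := sub_ne_zero.2 hD.2.2.1.symm
    have a := c2 (fun z => z) (fun _ => σ) 1 0 τ (hasDerivAt_id τ) (hasDerivAt_const _ _) hD
    refine a.differentiableAt.add ?_
    refine DifferentiableAt.div (by fun_prop) (by fun_prop) (pow_ne_zero 2 hne)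
  have B1 : ∀ τ σ, Dom (R/2) (d/2) τ σ → ‖h1 τ σ - 1 / (σ - τ) ^ 2‖ ≤ M / ρ := by
    intro τ σ hD
    have hDom : ∀ z ∈ strip R ∩ Metric.ball σ d, z ≠ σ → Dom R d z σ := fun z hz hzs =>
      ⟨hz.1, hD.2.1.trans (by linarith), hzs, by
        have := hz.2; rwa [Metric.mem_ball, dist_comm, dist_eq_norm] at this⟩
    have := punct_cauchy (oU σ R d) (a := σ) ⟨hD.2.1.trans (by linarith), Metric.mem_ball_self hd⟩
      (f := fun z => h z σ - 1 / (σ - z)) (M := M) hρ0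
      (fun z hz => (e1 z σ (hDom z hz.1 hz.2)).differentiableAt.differentiableWithinAt)
      (fun z hz hzs => hb z σ (hDom z hz hzs)) hD.2.2.1
      (cB σ τ (R/2) (d/2) R d (by linarith) (by linarith) hD.1
        (by rw [norm_sub_rev]; exact hD.2.2.2))
    rwa [(e1 τ σ (hD.mono (by linarith) (by linarith))).deriv] at this
  have B2 : ∀ τ σ, Dom (R/2) (d/2) τ σ → ‖h2 τ σ + 1 / (σ - τ) ^ 2‖ ≤ M / ρ := by
    intro τ σ hD
    have hDom : ∀ z ∈ strip R ∩ Metric.ball τ d, z ≠ τ → Dom R d τ z := fun z hz hzs =>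
      ⟨hD.1.trans (by linarith), hz.1, hzs.symm, by
        have := hz.2; rwa [Metric.mem_ball, dist_eq_norm] at this⟩
    have := punct_cauchy (oU τ R d) (a := τ) ⟨hD.1.trans (by linarith), Metric.mem_ball_self hd⟩
      (f := fun z => h τ z - 1 / (z - τ)) (M := M) hρ0
      (fun z hz => (e2 τ z (hDom z hz.1 hz.2)).differentiableAt.differentiableWithinAt)
      (fun z hz hzs => hb τ z (hDom z hz hzs)) hD.2.2.1.symm
      (cB τ σ (R/2) (d/2) R d (by linarith) (by linarith) hD.2.1 hD.2.2.2)
    rwa [(e2 τ σ (hD.mono (by linarith) (by linarith))).deriv] at this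
  have B12 : ∀ τ σ, Dom (R/4) (d/4) τ σ → ‖h12 τ σ + 2 / (σ - τ) ^ 3‖ ≤ M / ρ / ρ := by
    intro τ σ hD
    have hDom : ∀ z ∈ strip (R/2) ∩ Metric.ball τ (d/2), z ≠ τ → Dom (R/2) (d/2) τ z :=
      fun z hz hzs => ⟨hD.1.trans (by linarith), hz.1, hzs.symm, by
        have := hz.2; rwa [Metric.mem_ball, dist_eq_norm] at this⟩
    have := punct_cauchy (oU τ (R/2) (d/2)) (a := τ)
      ⟨hD.1.trans (by linarith), Metric.mem_ball_self (by linarith)⟩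
      (f := fun z => h1 τ z - 1 / (z - τ) ^ 2) (M := M / ρ) hρ0
      (fun z hz => (e12 τ z ((hDom z hz.1 hz.2).mono (by linarith)
        (by linarith))).differentiableAt.differentiableWithinAt)
      (fun z hz hzs => B1 τ z (hDom z hz hzs)) hD.2.2.1.symm
      (cB τ σ (R/4) (d/4) (R/2) (d/2) (by linarith) (by linarith) hD.2.1 hD.2.2.2)
    rwa [(e12 τ σ (hD.mono (by linarith) (by linarith))).deriv] at this
  have hball : ∀ (a z : ℂ), |a.im| < R/4 → z ∈ Metric.ball a ρ → |z.im| < R/2 ∧ ‖z - a‖ < d/2 := by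
    intro a z ha hz
    rw [Metric.mem_ball, dist_eq_norm] at hz
    exact ⟨(ic (R/4) a z ha hz.le).trans_le (by linarith), by linarith⟩
  have hm : ∀ (a : ℂ) (δ : ℝ), 0 < δ → δ < ρ/2 → a + δ ∈ Metric.ball a (ρ/2) ∧
      a - δ ∈ Metric.ball a (ρ/2) ∧ a + δ ≠ a ∧ a - δ ≠ a := by
    intro a δ h0 h1
    refine ⟨?_, ?_, by simp [h0.ne'], by simp [sub_eq_self, h0.ne']⟩
    · simpa [Metric.mem_ball, dist_eq_norm, abs_of_pos h0] using h1
    · simpa [Metric.mem_ball, dist_eq_norm, abs_of_pos h0] using h1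
  have hn : ∀ (a : ℂ) (δ : ℝ), 0 < δ → ‖a + δ - (a - δ)‖ = 2 * δ := by
    intro a δ h0
    have : a + δ - (a - δ) = ((2 * δ : ℝ) : ℂ) := by push_cast; ring
    rw [this, norm_real, Real.norm_eq_abs, abs_of_pos (by linarith)]
  set M' := M / ρ + M / ρ / ρ + M / ρ / (ρ/2) * 2 with hM'
  have p1 : 0 ≤ M / ρ := by positivity
  have p2 : 0 ≤ M / ρ / ρ := by positivity
  have p3 : 0 ≤ M / ρ / (ρ/2) * 2 := by positivity
  refine ⟨ρ / 2, M', by linarith, by linarith, by positivity, ?_⟩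
  have q1 : R / 4 ≤ R := by linarith
  have q2 : ρ / 2 ≤ d := by linarith
  refine ⟨n0.mono q1 q2, n1.mono q1 q2, n2.mono q1 q2, n12.mono q1 q2,
    fun x y x' y' z hx hy hD => c0 x y x' y' z hx hy (hD.mono q1 q2),
    fun x y x' y' z hx hy hD => c1 x y x' y' z hx hy (hD.mono q1 q2),
    fun x y x' y' z hx hy hD => c2 x y x' y' z hx hy (hD.mono q1 q2), ?_, ?_, ?_, ?_, ?_⟩
  · intro τ σ hD
    exact (B1 τ σ (hD.mono (by linarith) (by linarith))).trans (by linarith)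
  · intro τ σ hD
    exact (B2 τ σ (hD.mono (by linarith) (by linarith))).trans (by linarith)
  · intro τ σ hD
    exact (B12 τ σ (hD.mono (by linarith) (by linarith))).trans (by linarith)
  · intro τ δ hτ h0 hδ
    obtain ⟨m1, m2, m3, m4⟩ := hm τ δ h0 hδ
    have hDom : ∀ z ∈ Metric.ball τ ρ, z ≠ τ → Dom (R/2) (d/2) τ z := fun z hz hzs =>
      ⟨hτ.trans (by linarith), (hball τ z hτ hz).1, hzs.symm, (hball τ z hτ hz).2⟩
    have := punct_lip (a := τ) (f := fun z => h1 τ z - 1 / (z - τ) ^ 2) (M := M / ρ) hρ0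
      (fun z hz => (e12 τ z ((hDom z hz.1 hz.2).mono (by linarith)
        (by linarith))).differentiableAt.differentiableWithinAt)
      (fun z hz hzs => B1 τ z (hDom z hz hzs)) m1 m2 m3 m4
    rw [hn τ δ h0] at this
    have e : h1 τ (τ + δ) - 1 / (τ + δ - τ) ^ 2 - (h1 τ (τ - δ) - 1 / (τ - δ - τ) ^ 2) =
      h1 τ (τ + δ) - h1 τ (τ - δ) := by ring
    simp only [e] at this
    refine this.trans ?_
    rw [← mul_assoc]
    exact mul_le_mul_of_nonneg_right (by linarith) h0.le
  · intro σ δ hσ h0 hδ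
    obtain ⟨m1, m2, m3, m4⟩ := hm σ δ h0 hδ
    have hDom : ∀ z ∈ Metric.ball σ ρ, z ≠ σ → Dom (R/2) (d/2) z σ := fun z hz hzs =>
      ⟨(hball σ z hσ hz).1, hσ.trans (by linarith), hzs, by
        rw [norm_sub_rev]; exact (hball σ z hσ hz).2⟩
    have := punct_lip (a := σ) (f := fun z => h2 z σ + 1 / (σ - z) ^ 2) (M := M / ρ) hρ0
      (fun z hz => (e21 z σ ((hDom z hz.1 hz.2).mono (by linarith)
        (by linarith))).differentiableWithinAt)
      (fun z hz hzs => B2 z σ (hDom z hz hzs)) m2 m1 m4 m3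
    rw [norm_sub_rev (σ - δ), hn σ δ h0] at this
    have e : h2 (σ - δ) σ + 1 / (σ - (σ - δ)) ^ 2 - (h2 (σ + δ) σ + 1 / (σ - (σ + δ)) ^ 2) =
      h2 (σ - δ) σ - h2 (σ + δ) σ := by ring
    simp only [e] at this
    refine this.trans ?_
    rw [← mul_assoc]
    exact mul_le_mul_of_nonneg_right (by linarith) h0.le

end FU

end

section

namespace FU
open Complex Filter Topology

/-- generating function -/
noncomputable def hh (c g : ℂ) (p P X : ℂ → ℂ) (τ σ : ℂ) : ℂ :=
  2 * c * ((P σ - p τ) ^ 2 * (X σ - X τ)⁻¹ / 2 - g / 2 * (p τ + P σ) * (X σ - X τ)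
    - g ^ 2 * (X σ - X τ) ^ 3 / 24)

noncomputable def hh1 (c g : ℂ) (p p1 P X Y : ℂ → ℂ) (τ σ : ℂ) : ℂ :=
  2 * c * (-((P σ - p τ) * p1 τ * (X σ - X τ)⁻¹)
    + (P σ - p τ) ^ 2 * Y τ * (X σ - X τ)⁻¹ ^ 2 / 2
    - g / 2 * (p1 τ * (X σ - X τ) - (p τ + P σ) * Y τ) + g ^ 2 * (X σ - X τ) ^ 2 * Y τ / 8)

noncomputable def hh2 (c g : ℂ) (p P P1 X Y : ℂ → ℂ) (τ σ : ℂ) : ℂ :=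
  2 * c * ((P σ - p τ) * P1 σ * (X σ - X τ)⁻¹
    - (P σ - p τ) ^ 2 * Y σ * (X σ - X τ)⁻¹ ^ 2 / 2
    - g / 2 * (P1 σ * (X σ - X τ) + (p τ + P σ) * Y σ) - g ^ 2 * (X σ - X τ) ^ 2 * Y σ / 8)

noncomputable def hh12 (c g : ℂ) (p p1 P P1 X Y : ℂ → ℂ) (τ σ : ℂ) : ℂ :=
  2 * c * (-(P1 σ * p1 τ * (X σ - X τ)⁻¹)
    + (P σ - p τ) * p1 τ * Y σ * (X σ - X τ)⁻¹ ^ 2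
    + (P σ - p τ) * P1 σ * Y τ * (X σ - X τ)⁻¹ ^ 2
    - (P σ - p τ) ^ 2 * Y τ * Y σ * (X σ - X τ)⁻¹ ^ 3
    - g / 2 * (p1 τ * Y σ - P1 σ * Y τ) + g ^ 2 * (X σ - X τ) * Y τ * Y σ / 4)

noncomputable def hh11 (c g : ℂ) (p p1 p2 P X Y Y1 : ℂ → ℂ) (τ σ : ℂ) : ℂ :=
  2 * c * (p1 τ ^ 2 * (X σ - X τ)⁻¹ - (P σ - p τ) * p2 τ * (X σ - X τ)⁻¹
    - 2 * ((P σ - p τ) * p1 τ * Y τ * (X σ - X τ)⁻¹ ^ 2)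
    + (P σ - p τ) ^ 2 * Y1 τ * (X σ - X τ)⁻¹ ^ 2 / 2
    + (P σ - p τ) ^ 2 * Y τ ^ 2 * (X σ - X τ)⁻¹ ^ 3
    - g / 2 * (p2 τ * (X σ - X τ) - 2 * p1 τ * Y τ - (p τ + P σ) * Y1 τ)
    - g ^ 2 * (X σ - X τ) * Y τ ^ 2 / 4 + g ^ 2 * (X σ - X τ) ^ 2 * Y1 τ / 8)

noncomputable def hh22 (c g : ℂ) (p P P1 P2 X Y Y1 : ℂ → ℂ) (τ σ : ℂ) : ℂ :=
  2 * c * (P1 σ ^ 2 * (X σ - X τ)⁻¹ + (P σ - p τ) * P2 σ * (X σ - X τ)⁻¹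
    - 2 * ((P σ - p τ) * P1 σ * Y σ * (X σ - X τ)⁻¹ ^ 2)
    - (P σ - p τ) ^ 2 * Y1 σ * (X σ - X τ)⁻¹ ^ 2 / 2
    + (P σ - p τ) ^ 2 * Y σ ^ 2 * (X σ - X τ)⁻¹ ^ 3
    - g / 2 * (P2 σ * (X σ - X τ) + 2 * P1 σ * Y σ + (p τ + P σ) * Y1 σ)
    - g ^ 2 * (X σ - X τ) * Y σ ^ 2 / 4 - g ^ 2 * (X σ - X τ) ^ 2 * Y1 σ / 8)

section chain
variable {c g : ℂ} {p P X p1 P1 p2 P2 Y Y1 x y : ℂ → ℂ} {x' y' z : ℂ}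

lemma hda_inv {D : ℂ → ℂ} {D' z : ℂ} (h : HasDerivAt D D' z) (h0 : D z ≠ 0) :
    HasDerivAt (fun z => (D z)⁻¹) (-D' * (D z)⁻¹ ^ 2) z :=
  hda_congr (h.inv h0) (fun _ => rfl) (by field_simp)

lemma chain0 (hx : HasDerivAt x x' z) (hy : HasDerivAt y y' z)
    (hp : HasDerivAt p (p1 (x z)) (x z)) (hP : HasDerivAt P (P1 (y z)) (y z))
    (hXx : HasDerivAt X (Y (x z)) (x z)) (hXy : HasDerivAt X (Y (y z)) (y z))
    (h0 : X (y z) - X (x z) ≠ 0) :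
    HasDerivAt (fun z => hh c g p P X (x z) (y z))
      (hh1 c g p p1 P X Y (x z) (y z) * x' + hh2 c g p P P1 X Y (x z) (y z) * y') z := by
  have da := hp.comp z hx
  have dA := hP.comp z hy
  have dD := (hXy.comp z hy).sub (hXx.comp z hx)
  have di := hda_inv dD h0
  have key := (((((dA.sub da).pow 2).mul di).div_const 2).sub
    (((da.add dA).const_mul (g/2)).mul dD)).sub (((dD.pow 3).const_mul (g^2)).div_const 24)
  refine hda_congr (key.const_mul (2*c)) (fun w => ?_) ?_
  · simp [hh]
  · simp only [hh1, hh2, Pi.add_apply, Pi.sub_apply, Pi.mul_apply, Pi.pow_apply, Function.comp_apply]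
    generalize (X (y z) - X (x z))⁻¹ = i
    push_cast; ring

lemma chain1 (hx : HasDerivAt x x' z) (hy : HasDerivAt y y' z)
    (hp : HasDerivAt p (p1 (x z)) (x z)) (hP : HasDerivAt P (P1 (y z)) (y z))
    (hp1 : HasDerivAt p1 (p2 (x z)) (x z)) (hY : HasDerivAt Y (Y1 (x z)) (x z))
    (hXx : HasDerivAt X (Y (x z)) (x z)) (hXy : HasDerivAt X (Y (y z)) (y z))
    (h0 : X (y z) - X (x z) ≠ 0) :
    HasDerivAt (fun z => hh1 c g p p1 P X Y (x z) (y z))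
      (hh11 c g p p1 p2 P X Y Y1 (x z) (y z) * x' + hh12 c g p p1 P P1 X Y (x z) (y z) * y') z := by
  have da := hp.comp z hx
  have da1 := hp1.comp z hx
  have dy := hY.comp z hx
  have dA := hP.comp z hy
  have dD := (hXy.comp z hy).sub (hXx.comp z hx)
  have di := hda_inv dD h0
  have key := (((((dA.sub da).mul da1).mul di).neg.add
    (((((dA.sub da).pow 2).mul dy).mul (di.pow 2)).div_const 2)).sub
    (((da1.mul dD).sub ((da.add dA).mul dy)).const_mul (g/2))).add
    ((((dD.pow 2).const_mul (g^2)).mul dy).div_const 8)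
  refine hda_congr (key.const_mul (2*c)) (fun w => ?_) ?_
  · simp [hh1]
  · simp only [hh11, hh12, Pi.add_apply, Pi.sub_apply, Pi.mul_apply, Pi.pow_apply, Function.comp_apply]
    generalize (X (y z) - X (x z))⁻¹ = i
    push_cast; ring

lemma chain2 (hx : HasDerivAt x x' z) (hy : HasDerivAt y y' z)
    (hp : HasDerivAt p (p1 (x z)) (x z)) (hP : HasDerivAt P (P1 (y z)) (y z))
    (hP1 : HasDerivAt P1 (P2 (y z)) (y z)) (hY : HasDerivAt Y (Y1 (y z)) (y z))
    (hXx : HasDerivAt X (Y (x z)) (x z)) (hXy : HasDerivAt X (Y (y z)) (y z))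
    (h0 : X (y z) - X (x z) ≠ 0) :
    HasDerivAt (fun z => hh2 c g p P P1 X Y (x z) (y z))
      (hh12 c g p p1 P P1 X Y (x z) (y z) * x' + hh22 c g p P P1 P2 X Y Y1 (x z) (y z) * y') z := by
  have da := hp.comp z hx
  have dA1 := hP1.comp z hy
  have dy := hY.comp z hy
  have dA := hP.comp z hy
  have dD := (hXy.comp z hy).sub (hXx.comp z hx)
  have di := hda_inv dD h0
  have key := (((((dA.sub da).mul dA1).mul di).sub
    (((((dA.sub da).pow 2).mul dy).mul (di.pow 2)).div_const 2)).sub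
    (((dA1.mul dD).add ((da.add dA).mul dy)).const_mul (g/2))).sub
    ((((dD.pow 2).const_mul (g^2)).mul dy).div_const 8)
  refine hda_congr (key.const_mul (2*c)) (fun w => ?_) ?_
  · simp [hh2]
  · simp only [hh22, hh12, Pi.add_apply, Pi.sub_apply, Pi.mul_apply, Pi.pow_apply, Function.comp_apply]
    generalize (X (y z) - X (x z))⁻¹ = i
    push_cast; ring

lemma diff12 (hx : DifferentiableAt ℂ x z) (hy : DifferentiableAt ℂ y z)
    (hp : DifferentiableAt ℂ p (x z)) (hP : DifferentiableAt ℂ P (y z))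
    (hp1 : DifferentiableAt ℂ p1 (x z)) (hP1 : DifferentiableAt ℂ P1 (y z))
    (hYx : DifferentiableAt ℂ Y (x z)) (hYy : DifferentiableAt ℂ Y (y z))
    (hXx : DifferentiableAt ℂ X (x z)) (hXy : DifferentiableAt ℂ X (y z))
    (h0 : X (y z) - X (x z) ≠ 0) :
    DifferentiableAt ℂ (fun z => hh12 c g p p1 P P1 X Y (x z) (y z)) z := by
  have da : DifferentiableAt ℂ (fun z => p (x z)) z := hp.comp z hx
  have da1 : DifferentiableAt ℂ (fun z => p1 (x z)) z := hp1.comp z hx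
  have dA : DifferentiableAt ℂ (fun z => P (y z)) z := hP.comp z hy
  have dA1 : DifferentiableAt ℂ (fun z => P1 (y z)) z := hP1.comp z hy
  have dYx : DifferentiableAt ℂ (fun z => Y (x z)) z := hYx.comp z hx
  have dYy : DifferentiableAt ℂ (fun z => Y (y z)) z := hYy.comp z hy
  have dXx : DifferentiableAt ℂ (fun z => X (x z)) z := hXx.comp z hx
  have dXy : DifferentiableAt ℂ (fun z => X (y z)) z := hXy.comp z hy
  have di : DifferentiableAt ℂ (fun z => (X (y z) - X (x z))⁻¹) z := (dXy.sub dXx).inv h0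
  unfold hh12
  fun_prop

lemma cont1 {τ σ : ℂ} 
    (hp : ContinuousAt p τ) (hP : ContinuousAt P σ) (hp1 : ContinuousAt p1 τ)
    (hY : ContinuousAt Y τ) (hXx : ContinuousAt X τ) (hXy : ContinuousAt X σ)
    (h0 : X σ - X τ ≠ 0) :
    ContinuousAt (fun q : ℂ × ℂ => hh1 c g p p1 P X Y q.1 q.2) (τ, σ) := by
  have da : ContinuousAt (fun q : ℂ × ℂ => p q.1) (τ, σ) := ContinuousAt.comp (f := Prod.fst) hp continuousAt_fst
  have da1 : ContinuousAt (fun q : ℂ × ℂ => p1 q.1) (τ, σ) := ContinuousAt.comp (f := Prod.fst) hp1 continuousAt_fst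
  have dY : ContinuousAt (fun q : ℂ × ℂ => Y q.1) (τ, σ) := ContinuousAt.comp (f := Prod.fst) hY continuousAt_fst
  have dXx : ContinuousAt (fun q : ℂ × ℂ => X q.1) (τ, σ) := ContinuousAt.comp (f := Prod.fst) hXx continuousAt_fst
  have dA : ContinuousAt (fun q : ℂ × ℂ => P q.2) (τ, σ) := ContinuousAt.comp (f := Prod.snd) hP continuousAt_snd
  have dXy : ContinuousAt (fun q : ℂ × ℂ => X q.2) (τ, σ) := ContinuousAt.comp (f := Prod.snd) hXy continuousAt_snd
  have di : ContinuousAt (fun q : ℂ × ℂ => (X q.2 - X q.1)⁻¹) (τ, σ) := (dXy.sub dXx).inv₀ h0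
  unfold hh1
  fun_prop

lemma cont2 {τ σ : ℂ} 
    (hp : ContinuousAt p τ) (hP : ContinuousAt P σ) (hP1 : ContinuousAt P1 σ)
    (hY : ContinuousAt Y σ) (hXx : ContinuousAt X τ) (hXy : ContinuousAt X σ)
    (h0 : X σ - X τ ≠ 0) :
    ContinuousAt (fun q : ℂ × ℂ => hh2 c g p P P1 X Y q.1 q.2) (τ, σ) := by
  have da : ContinuousAt (fun q : ℂ × ℂ => p q.1) (τ, σ) := ContinuousAt.comp (f := Prod.fst) hp continuousAt_fst
  have dA1 : ContinuousAt (fun q : ℂ × ℂ => P1 q.2) (τ, σ) := ContinuousAt.comp (f := Prod.snd) hP1 continuousAt_snd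
  have dY : ContinuousAt (fun q : ℂ × ℂ => Y q.2) (τ, σ) := ContinuousAt.comp (f := Prod.snd) hY continuousAt_snd
  have dXx : ContinuousAt (fun q : ℂ × ℂ => X q.1) (τ, σ) := ContinuousAt.comp (f := Prod.fst) hXx continuousAt_fst
  have dA : ContinuousAt (fun q : ℂ × ℂ => P q.2) (τ, σ) := ContinuousAt.comp (f := Prod.snd) hP continuousAt_snd
  have dXy : ContinuousAt (fun q : ℂ × ℂ => X q.2) (τ, σ) := ContinuousAt.comp (f := Prod.snd) hXy continuousAt_snd
  have di : ContinuousAt (fun q : ℂ × ℂ => (X q.2 - X q.1)⁻¹) (τ, σ) := (dXy.sub dXx).inv₀ h0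
  unfold hh2
  fun_prop
end chain

end FU

end

section

namespace FU
open Complex Filter Topology

structure CS (c T r : ℝ) (p P X : ℂ → ℂ) : Prop where
  hp : Hol r p
  hP : Hol r P
  hX : ∀ z ∈ strip r, HasDerivAt X (c * (P z - p z) ^ 2) z
  per : ∀ z ∈ strip r, X (z + 1) = X z + T
  conj : ∀ z ∈ strip r, X ((starRingEnd ℂ) z) = (starRingEnd ℂ) (X z)

noncomputable def YY (c : ℝ) (p P : ℂ → ℂ) : ℂ → ℂ := fun z => c * (P z - p z) ^ 2

lemma CS.holY {c T r : ℝ} {p P X : ℂ → ℂ} (S : CS c T r p P X) : Hol r (YY c p P) := by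
  have h := S.hP.sub S.hp
  refine ((Hol.const c).mul (h.mul h)).congr fun z _ => ?_
  simp only [YY]; ring

lemma lip_strip {f f' : ℂ → ℂ} {r C : ℝ} (hf : ∀ z ∈ strip r, HasDerivAt f (f' z) z)
    (hC : ∀ z ∈ strip r, ‖f' z‖ ≤ C) {z w : ℂ} (hz : z ∈ strip r) (hw : w ∈ strip r) :
    ‖f w - f z‖ ≤ C * ‖w - z‖ :=
  Convex.norm_image_sub_le_of_norm_hasDerivWithin_le (fun z hz => (hf z hz).hasDerivWithinAt) hC
    (convex_strip r) hz hw

lemma second_strip {f f' f'' : ℂ → ℂ} {r C : ℝ} (hf : ∀ z ∈ strip r, HasDerivAt f (f' z) z)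
    (hf' : ∀ z ∈ strip r, HasDerivAt f' (f'' z) z) (hC0 : 0 ≤ C)
    (hC : ∀ z ∈ strip r, ‖f'' z‖ ≤ C) {z w : ℂ} (hz : z ∈ strip r) (hw : w ∈ strip r) :
    ‖f w - f z - f' z * (w - z)‖ ≤ C * ‖w - z‖ ^ 2 := by
  have hseg : segment ℝ z w ⊆ strip r := (convex_strip r).segment_subset hz hw
  have := Convex.norm_image_sub_le_of_norm_hasDerivWithin_le (f := fun u => f u - f' z * u)
    (f' := fun u => f' u - f' z * 1) (C := C * ‖w - z‖) (s := segment ℝ z w)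
    (fun u hu => ((hf u (hseg hu)).sub ((hasDerivAt_id u).const_mul (f' z))).hasDerivWithinAt)
    (fun u hu => ?_) (convex_segment z w) (left_mem_segment ℝ z w) (right_mem_segment ℝ z w)
  · have e : f w - f' z * w - (f z - f' z * z) = f w - f z - f' z * (w - z) := by ring
    simp only [e] at this
    linarith [this, show C * ‖w - z‖ ^ 2 = C * ‖w - z‖ * ‖w - z‖ by ring]
  · rw [mul_one]
    refine (lip_strip hf' hC hz (hseg hu)).trans (mul_le_mul_of_nonneg_left ?_ hC0)
    exact norm_sub_le_of_mem_segment hu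

theorem CS.KH {c T r m g : ℝ} {p P X : ℂ → ℂ} (S : CS c T r p P X) (hc : 0 < c) (hr : 0 < r)
    (hm : 0 < m) (hmY : ∀ x : ℝ, m ≤ ‖YY c p P x‖) :
    ∃ R d M, 0 < R ∧ R ≤ 1 ∧ 0 < d ∧ 0 ≤ M ∧
      KH (hh c g p P X) (hh1 c g p (deriv p) P X (YY c p P)) (hh2 c g p P (deriv P) X (YY c p P))
        (hh11 c g p (deriv p) (deriv (deriv p)) P X (YY c p P) (deriv (YY c p P)))
        (hh12 c g p (deriv p) P (deriv P) X (YY c p P))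
        (hh22 c g p P (deriv P) (deriv (deriv P)) X (YY c p P) (deriv (YY c p P))) R d M ∧
      (∀ τ σ, Dom R d τ σ → ContinuousAt
        (fun q : ℂ × ℂ => hh1 c g p (deriv p) P X (YY c p P) q.1 q.2) (τ, σ)) ∧
      (∀ τ σ, Dom R d τ σ → ContinuousAt
        (fun q : ℂ × ℂ => hh2 c g p P (deriv P) X (YY c p P) q.1 q.2) (τ, σ)) := by
  set Y := YY c p P with hYdef
  have hY : Hol r Y := S.holY
  have hs : r / 2 < r := by linarith
  obtain ⟨C1, hC1⟩ := S.hp.bdd hs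
  obtain ⟨C2, hC2⟩ := S.hP.bdd hs
  obtain ⟨C3, hC3⟩ := S.hP.deriv.bdd hs
  obtain ⟨C4, hC4⟩ := hY.bdd hs
  obtain ⟨C5, hC5⟩ := hY.deriv.bdd hs
  obtain ⟨C, hC0, l1, l2, l3, l4, l5⟩ : ∃ C : ℝ, 1 ≤ C ∧ C1 ≤ C ∧ C2 ≤ C ∧ C3 ≤ C ∧ C4 ≤ C ∧ C5 ≤ C :=
    ⟨1 + |C1| + |C2| + |C3| + |C4| + |C5|, by
      have := abs_nonneg C1; have := abs_nonneg C2; have := abs_nonneg C3; have := abs_nonneg C4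
      have := abs_nonneg C5; have := le_abs_self C1; have := le_abs_self C2
      have := le_abs_self C3; have := le_abs_self C4; have := le_abs_self C5
      refine ⟨?_, ?_, ?_, ?_, ?_, ?_⟩ <;> linarith⟩
  have hCp : 0 < C := by linarith
  set R := min (min (r/2) 1) (m/(2*C)) with hR
  set d := min 1 (m/(4*C)) with hd
  have hR0 : 0 < R := by positivity
  have hd0 : 0 < d := by positivity
  have hRr : R ≤ r/2 := (min_le_left _ _).trans (min_le_left _ _)
  have hR1 : R ≤ 1 := (min_le_left _ _).trans (min_le_right _ _)
  have hRm : C * R ≤ m/2 := by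
    have : R ≤ m/(2*C) := min_le_right _ _
    rw [le_div_iff₀ (by positivity)] at this; linarith
  have hd1 : d ≤ 1 := min_le_left _ _
  have hdm : C * d ≤ m/4 := by
    have : d ≤ m/(4*C) := min_le_right _ _
    rw [le_div_iff₀ (by positivity)] at this; linarith
  have hRs : strip R ⊆ strip (r/2) := strip_mono hRr
  have hRr' : strip R ⊆ strip r := strip_mono (by linarith)
  have dp : ∀ z ∈ strip r, HasDerivAt p (deriv p z) z := fun z hz => (S.hp.diffAt hz).hasDerivAt
  have dp1 : ∀ z ∈ strip r, HasDerivAt (deriv p) (deriv (deriv p) z) z :=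
    fun z hz => (S.hp.deriv.diffAt hz).hasDerivAt
  have dP : ∀ z ∈ strip r, HasDerivAt P (deriv P z) z := fun z hz => (S.hP.diffAt hz).hasDerivAt
  have dP1 : ∀ z ∈ strip r, HasDerivAt (deriv P) (deriv (deriv P) z) z :=
    fun z hz => (S.hP.deriv.diffAt hz).hasDerivAt
  have dY : ∀ z ∈ strip r, HasDerivAt Y (deriv Y z) z := fun z hz => (hY.diffAt hz).hasDerivAt
  have dX : ∀ z ∈ strip r, HasDerivAt X (Y z) z := S.hX
  have hYl : ∀ z ∈ strip R, m / 2 ≤ ‖Y z‖ := by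
    intro z hz
    have h1 := lip_strip (fun z hz => dY z (hRr' hz)) (fun z hz => (hC5 z (hRs hz)).trans l5)
      hz (ofReal_mem_strip hR0 z.re)
    have h2 := hmY z.re
    have h3 : ‖(z.re:ℂ) - z‖ ≤ R := by
      have : (z.re:ℂ) - z = -(z.im * I) := by
        apply Complex.ext <;> simp
      rw [this, norm_neg, norm_mul, norm_I, mul_one, norm_real]
      exact le_of_lt hz
    have h4 : C * ‖(z.re:ℂ) - z‖ ≤ C * R := mul_le_mul_of_nonneg_left h3 hCp.le
    have h5 := norm_sub_norm_le (Y z.re) (Y z)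
    linarith
  have hsec : ∀ τ ∈ strip R, ∀ σ ∈ strip R, ‖X σ - X τ - Y τ * (σ - τ)‖ ≤ C * ‖σ - τ‖ ^ 2 :=
    fun τ hτ σ hσ => second_strip (fun z hz => dX z (hRr' hz)) (fun z hz => dY z (hRr' hz)) hCp.le
      (fun z hz => (hC5 z (hRs hz)).trans l5) hτ hσ
  have hDl : ∀ τ σ, Dom R d τ σ → m / 4 * ‖σ - τ‖ ≤ ‖X σ - X τ‖ := by
    intro τ σ hD
    have h1 := hsec τ hD.1 σ hD.2.1
    have h2 := hYl τ hD.1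
    have h3 := norm_sub_norm_le (Y τ * (σ - τ)) (Y τ * (σ - τ) - (X σ - X τ))
    rw [sub_sub_cancel, norm_sub_rev, norm_mul] at h3
    have h4 := hD.2.2.2
    have h5 := norm_nonneg (σ - τ)
    have h6 : C * ‖σ - τ‖ ^ 2 ≤ m / 4 * ‖σ - τ‖ := by
      have : C * ‖σ - τ‖ ≤ m / 4 := (mul_le_mul_of_nonneg_left h4.le hCp.le).trans hdm
      nlinarith
    have h7 := mul_le_mul_of_nonneg_right h2 h5
    linarith
  have hD0 : ∀ τ σ, Dom R d τ σ → X σ - X τ ≠ 0 := by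
    intro τ σ hD
    have h1 := hDl τ σ hD
    have h2 : 0 < ‖σ - τ‖ := norm_pos_iff.2 (sub_ne_zero.2 hD.2.2.1.symm)
    have h3 : 0 < m / 4 * ‖σ - τ‖ := by positivity
    exact norm_pos_iff.1 (h3.trans_le h1)
  have c0 : ∀ (x y : ℂ → ℂ) (x' y' z : ℂ), HasDerivAt x x' z → HasDerivAt y y' z →
      Dom R d (x z) (y z) → HasDerivAt (fun z => hh c g p P X (x z) (y z))
      (hh1 c g p (deriv p) P X Y (x z) (y z) * x' + hh2 c g p P (deriv P) X Y (x z) (y z) * y') z :=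
    fun x y x' y' z hx hy hD => chain0 hx hy (dp _ (hRr' hD.1)) (dP _ (hRr' hD.2.1))
      (dX _ (hRr' hD.1)) (dX _ (hRr' hD.2.1)) (hD0 _ _ hD)
  have c1 : ∀ (x y : ℂ → ℂ) (x' y' z : ℂ), HasDerivAt x x' z → HasDerivAt y y' z →
      Dom R d (x z) (y z) → HasDerivAt (fun z => hh1 c g p (deriv p) P X Y (x z) (y z))
      (hh11 c g p (deriv p) (deriv (deriv p)) P X Y (deriv Y) (x z) (y z) * x'
        + hh12 c g p (deriv p) P (deriv P) X Y (x z) (y z) * y') z :=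
    fun x y x' y' z hx hy hD => chain1 hx hy (dp _ (hRr' hD.1)) (dP _ (hRr' hD.2.1))
      (dp1 _ (hRr' hD.1)) (dY _ (hRr' hD.1))
      (dX _ (hRr' hD.1)) (dX _ (hRr' hD.2.1)) (hD0 _ _ hD)
  have c2 : ∀ (x y : ℂ → ℂ) (x' y' z : ℂ), HasDerivAt x x' z → HasDerivAt y y' z →
      Dom R d (x z) (y z) → HasDerivAt (fun z => hh2 c g p P (deriv P) X Y (x z) (y z))
      (hh12 c g p (deriv p) P (deriv P) X Y (x z) (y z) * x'
        + hh22 c g p P (deriv P) (deriv (deriv P)) X Y (deriv Y) (x z) (y z) * y') z :=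
    fun x y x' y' z hx hy hD => chain2 hx hy (dp _ (hRr' hD.1)) (dP _ (hRr' hD.2.1))
      (dP1 _ (hRr' hD.2.1)) (dY _ (hRr' hD.2.1))
      (dX _ (hRr' hD.1)) (dX _ (hRr' hD.2.1)) (hD0 _ _ hD)
  have hDper : ∀ τ σ, Dom R d τ σ → X (σ + 1) - X (τ + 1) = X σ - X τ := by
    intro τ σ hD
    rw [S.per _ (hRr' hD.1), S.per _ (hRr' hD.2.1)]; ring
  have n0 : Nice R d (hh c g p P X) := by
    refine ⟨fun x y z hx hy hD =>
      (c0 x y _ _ z hx.hasDerivAt hy.hasDerivAt hD).differentiableAt, fun τ σ hD => ?_, fun τ σ hD => ?_⟩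
    · simp only [hh, hDper τ σ hD, S.hp.per _ (hRr' hD.1), S.hP.per _ (hRr' hD.2.1)]
    · simp only [hh, S.conj _ (hRr' hD.1), S.conj _ (hRr' hD.2.1), S.hp.conj _ (hRr' hD.1),
        S.hP.conj _ (hRr' hD.2.1)]
      simp only [map_mul, map_sub, map_add, map_pow, map_inv₀, map_div₀, map_neg, conj_ofReal, map_ofNat]
  have n1 : Nice R d (hh1 c g p (deriv p) P X Y) := by
    refine ⟨fun x y z hx hy hD =>
      (c1 x y _ _ z hx.hasDerivAt hy.hasDerivAt hD).differentiableAt, fun τ σ hD => ?_, fun τ σ hD => ?_⟩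
    · simp only [hh1, hDper τ σ hD, S.hp.per _ (hRr' hD.1), S.hP.per _ (hRr' hD.2.1),
        S.hp.deriv.per _ (hRr' hD.1), hY.per _ (hRr' hD.1)]
    · simp only [hh1, S.conj _ (hRr' hD.1), S.conj _ (hRr' hD.2.1), S.hp.conj _ (hRr' hD.1),
        S.hP.conj _ (hRr' hD.2.1), S.hp.deriv.conj _ (hRr' hD.1), hY.conj _ (hRr' hD.1)]
      simp only [map_mul, map_sub, map_add, map_pow, map_inv₀, map_div₀, map_neg, conj_ofReal, map_ofNat]
  have n2 : Nice R d (hh2 c g p P (deriv P) X Y) := by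
    refine ⟨fun x y z hx hy hD =>
      (c2 x y _ _ z hx.hasDerivAt hy.hasDerivAt hD).differentiableAt, fun τ σ hD => ?_, fun τ σ hD => ?_⟩
    · simp only [hh2, hDper τ σ hD, S.hp.per _ (hRr' hD.1), S.hP.per _ (hRr' hD.2.1),
        S.hP.deriv.per _ (hRr' hD.2.1), hY.per _ (hRr' hD.2.1)]
    · simp only [hh2, S.conj _ (hRr' hD.1), S.conj _ (hRr' hD.2.1), S.hp.conj _ (hRr' hD.1),
        S.hP.conj _ (hRr' hD.2.1), S.hP.deriv.conj _ (hRr' hD.2.1), hY.conj _ (hRr' hD.2.1)]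
      simp only [map_mul, map_sub, map_add, map_pow, map_inv₀, map_div₀, map_neg, conj_ofReal, map_ofNat]
  have n12 : Nice R d (hh12 c g p (deriv p) P (deriv P) X Y) := by
    refine ⟨fun x y z hx hy hD => ?_, fun τ σ hD => ?_, fun τ σ hD => ?_⟩
    · have h1 := hRr' hD.1
      have h2 := hRr' hD.2.1
      exact diff12 hx hy (dp _ h1).differentiableAt (dP _ h2).differentiableAt
        (dp1 _ h1).differentiableAt (dP1 _ h2).differentiableAt (dY _ h1).differentiableAt
        (dY _ h2).differentiableAt (dX _ h1).differentiableAt (dX _ h2).differentiableAt (hD0 _ _ hD)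
    · simp only [hh12, hDper τ σ hD, S.hp.per _ (hRr' hD.1), S.hP.per _ (hRr' hD.2.1),
        S.hP.deriv.per _ (hRr' hD.2.1), hY.per _ (hRr' hD.2.1),
        S.hp.deriv.per _ (hRr' hD.1), hY.per _ (hRr' hD.1)]
    · simp only [hh12, S.conj _ (hRr' hD.1), S.conj _ (hRr' hD.2.1), S.hp.conj _ (hRr' hD.1),
        S.hP.conj _ (hRr' hD.2.1), S.hP.deriv.conj _ (hRr' hD.2.1), hY.conj _ (hRr' hD.2.1),
        S.hp.deriv.conj _ (hRr' hD.1), hY.conj _ (hRr' hD.1)]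
      simp only [map_mul, map_sub, map_add, map_pow, map_inv₀, map_div₀, map_neg, conj_ofReal, map_ofNat]
  have hb : ∀ τ σ, Dom R d τ σ → ‖hh c g p P X τ σ - 1 / (σ - τ)‖ ≤
      (c * (4 * C * C) + C) * (4 / m) + 2 * c * (|g| * C * C + |g| ^ 2 * C ^ 3) := by
    intro τ σ hD
    have hw0 : σ - τ ≠ 0 := sub_ne_zero.2 hD.2.2.1.symm
    have hwp : 0 < ‖σ - τ‖ := norm_pos_iff.2 hw0
    have hD0' := hD0 τ σ hD
    have bp := (hC1 τ (hRs hD.1)).trans l1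
    have bP := (hC2 σ (hRs hD.2.1)).trans l2
    have bPτ := (hC2 τ (hRs hD.1)).trans l2
    have bD : ‖X σ - X τ‖ ≤ C := by
      have := lip_strip (fun z hz => dX z (hRr' hz)) (fun z hz => (hC4 z (hRs hz)).trans l4)
        hD.1 hD.2.1
      have h2 := hD.2.2.2
      nlinarith
    have bdP := lip_strip (fun z hz => dP z (hRr' hz)) (fun z hz => (hC3 z (hRs hz)).trans l3)
        hD.1 hD.2.1
    have e : hh c g p P X τ σ - 1 / (σ - τ) =
        (c * ((P σ - P τ) * (P σ + P τ - 2 * p τ)) * (σ - τ) - (X σ - X τ - Y τ * (σ - τ)))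
          / ((X σ - X τ) * (σ - τ)) -
        2 * c * (g / 2 * (p τ + P σ) * (X σ - X τ) + g ^ 2 * (X σ - X τ) ^ 3 / 24) := by
      have : Y τ = c * (P τ - p τ) ^ 2 := rfl
      rw [this]
      unfold hh
      generalize hDD : X σ - X τ = D at hD0' ⊢
      generalize hWW : σ - τ = W at hw0 ⊢
      field_simp
      ring
    rw [e]
    refine (norm_sub_le _ _).trans (add_le_add ?_ ?_)
    · rw [norm_div, div_le_iff₀ (norm_pos_iff.2 (mul_ne_zero hD0' hw0)), norm_mul]
      have t1 : ‖P σ + P τ - 2 * p τ‖ ≤ 4 * C := by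
        refine (norm_sub_le _ _).trans ?_
        have := norm_add_le (P σ) (P τ)
        rw [norm_mul]
        simp only [norm_ofNat]
        linarith
      have t2 : ‖(c:ℂ) * ((P σ - P τ) * (P σ + P τ - 2 * p τ)) * (σ - τ)‖ ≤
          c * ((C * ‖σ - τ‖) * (4 * C)) * ‖σ - τ‖ := by
        rw [norm_mul, norm_mul, norm_mul, norm_real, Real.norm_eq_abs, abs_of_pos hc]
        gcongr
      have t3 := hsec τ hD.1 σ hD.2.1
      have t4 := hDl τ σ hD
      calc _ ≤ c * ((C * ‖σ - τ‖) * (4 * C)) * ‖σ - τ‖ + C * ‖σ - τ‖ ^ 2 :=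
            (norm_sub_le _ _).trans (add_le_add t2 t3)
        _ = (c * (4 * C * C) + C) * (4 / m) * (m / 4 * ‖σ - τ‖ * ‖σ - τ‖) := by
            field_simp
        _ ≤ _ := by gcongr
    · rw [norm_mul, norm_mul, norm_real, Real.norm_eq_abs, abs_of_pos hc]
      simp only [norm_ofNat]
      refine mul_le_mul_of_nonneg_left ((norm_add_le _ _).trans (add_le_add ?_ ?_)) (by positivity)
      · rw [norm_mul, norm_mul, norm_div, norm_real, Real.norm_eq_abs]
        simp only [norm_ofNat]
        have := norm_add_le (p τ) (P σ)
        calc |g| / 2 * ‖p τ + P σ‖ * ‖X σ - X τ‖ ≤ |g| / 2 * (2 * C) * C := by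
              gcongr; linarith
          _ = _ := by ring
      · rw [norm_div, norm_mul, norm_pow, norm_pow, norm_real, Real.norm_eq_abs]
        simp only [norm_ofNat]
        rw [div_le_iff₀ (by norm_num)]
        have : |g| ^ 2 * ‖X σ - X τ‖ ^ 3 ≤ |g| ^ 2 * C ^ 3 := by gcongr
        have h0 : 0 ≤ |g| ^ 2 * C ^ 3 := by positivity
        linarith
  obtain ⟨d', M', hd', hdd, hM', K⟩ := KH_of hR0 hd0 n0 n1 n2 n12 c0 c1 c2 hb
  refine ⟨R / 4, d', M', by linarith, by linarith, hd', hM', K, ?_, ?_⟩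
  · intro τ σ hD
    have hD := hD.mono (show R/4 ≤ R by linarith) hdd
    have h1 := hRr' hD.1
    have h2 := hRr' hD.2.1
    exact cont1 (dp _ h1).continuousAt (dP _ h2).continuousAt (dp1 _ h1).continuousAt
      (dY _ h1).continuousAt (dX _ h1).continuousAt (dX _ h2).continuousAt (hD0 _ _ hD)
  · intro τ σ hD
    have hD := hD.mono (show R/4 ≤ R by linarith) hdd
    have h1 := hRr' hD.1
    have h2 := hRr' hD.2.1
    exact cont2 (dp _ h1).continuousAt (dP _ h2).continuousAt (dP1 _ h2).continuousAt
      (dY _ h2).continuousAt (dX _ h1).continuousAt (dX _ h2).continuousAt (hD0 _ _ hD)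

end FU

end

section

namespace FU
open Complex Filter Topology

lemma deriv_of_ext {F : ℂ → ℂ} {f : ℝ → ℝ} {f' x : ℝ} (hF : DifferentiableAt ℂ F x)
    (h : ∀ t : ℝ, F t = f t) (hf : HasDerivAt f f' x) : deriv F x = f' := by
  have h1 := hF.hasDerivAt.comp_ofReal
  have h2 := hf.ofReal_comp
  have e : (fun t : ℝ => F t) = fun t : ℝ => (f t : ℂ) := funext h
  rw [e] at h1
  exact h1.unique h2

/-- departure velocity at the lower plate -/
noncomputable def Va (g : ℝ) (f₁ f₂ : ℝ → ℝ) (t s : ℝ) : ℝ :=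
  (f₂ s - f₁ t) / (s - t) + g / 2 * (s - t)

/-- arrival velocity at the upper plate -/
noncomputable def Wa (g : ℝ) (f₁ f₂ : ℝ → ℝ) (t s : ℝ) : ℝ :=
  (f₂ s - f₁ t) / (s - t) - g / 2 * (s - t)

lemma lift_props {x : ℝ → ℝ} (hx : ∀ θ θ', θ ≤ θ' → |x θ' - x θ - (θ' - θ)| ≤ 1/50 * (θ' - θ)) :
    Continuous x ∧ StrictMono x ∧ Function.Surjective x := by
  have lo : ∀ θ θ', θ ≤ θ' → 49/50 * (θ' - θ) ≤ x θ' - x θ := fun θ θ' h => by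
    have := (abs_le.1 (hx θ θ' h)).1; linarith
  have hi : ∀ θ θ', θ ≤ θ' → x θ' - x θ ≤ 51/50 * (θ' - θ) := fun θ θ' h => by
    have := (abs_le.1 (hx θ θ' h)).2; linarith
  have hm : StrictMono x := fun a b hab => by have := lo a b hab.le; linarith
  have hc : Continuous x := by
    refine LipschitzWith.continuous (K := 2) (LipschitzWith.of_dist_le_mul fun a b => ?_)
    rw [Real.dist_eq, Real.dist_eq]
    rcases le_total a b with h | h
    · rw [abs_sub_comm, abs_sub_comm a b, abs_of_nonneg (sub_nonneg.2 h),
        abs_of_nonneg (sub_nonneg.2 (hm.monotone h))]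
      have := hi a b h; push_cast; linarith
    · rw [abs_of_nonneg (sub_nonneg.2 h), abs_of_nonneg (sub_nonneg.2 (hm.monotone h))]
      have := hi b a h; push_cast; linarith
  refine ⟨hc, hm, ?_⟩
  apply hc.surjective
  · refine tendsto_atTop_mono' _ (f₁ := fun θ => x 0 + 49/50 * θ) ?_ ?_
    · filter_upwards [eventually_ge_atTop 0] with θ hθ
      have := lo 0 θ hθ; linarith
    · exact tendsto_atTop_add_const_left _ _ (tendsto_id.const_mul_atTop (by norm_num))
  · refine tendsto_atBot_mono' _ (f₁ := fun θ => x 0 + 49/50 * θ) ?_ ?_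
    · filter_upwards [eventually_le_atBot 0] with θ hθ
      have := lo θ 0 hθ; linarith
    · exact tendsto_atBot_add_const_left _ _ (tendsto_id.const_mul_atBot (by norm_num))

theorem curves {g T : ℝ} (hT : 0 < T) {f₁ f₂ : ℝ → ℝ}
    (hA₁ : ∀ x : ℝ, AnalyticAt ℝ f₁ x) (hA₂ : ∀ x : ℝ, AnalyticAt ℝ f₂ x)
    (hper₁ : Function.Periodic f₁ T) (hper₂ : Function.Periodic f₂ T)
    (hlt : ∀ s : ℝ, f₁ s < f₂ s) (η : ℝ) (hη : 0 < η) :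
    ∃ ω > 0, ∃ x y : ℝ → ℝ, (Continuous x ∧ StrictMono x ∧ Function.Surjective x) ∧
      (Continuous y ∧ StrictMono y ∧ Function.Surjective y) ∧
      (∃ ε > 0, ∀ θ, ε ≤ y θ - x θ) ∧ (∀ θ, y θ < x (θ + ω)) ∧ (∀ θ, x (θ + ω) < x θ + η) ∧
      (∀ θ, Va g f₁ f₂ (x θ) (y θ) ^ 2 / 2 - Va g f₁ f₂ (x θ) (y θ) * deriv f₁ (x θ) =
        Va g f₁ f₂ (x θ) (y (θ - ω)) ^ 2 / 2 - Va g f₁ f₂ (x θ) (y (θ - ω)) * deriv f₁ (x θ)) ∧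
      (∀ θ, Wa g f₁ f₂ (x θ) (y θ) ^ 2 / 2 - Wa g f₁ f₂ (x θ) (y θ) * deriv f₂ (y θ) =
        Wa g f₁ f₂ (x (θ + ω)) (y θ) ^ 2 / 2 - Wa g f₁ f₂ (x (θ + ω)) (y θ) * deriv f₂ (y θ)) := by
  obtain ⟨c, hc, X, hXa, hXd, hXp, hXm, hXs⟩ := time_change hT (l := fun t => f₂ t - f₁ t)
    (fun x => (hA₂ x).sub (hA₁ x)) (fun t => by simp only [hper₁ t, hper₂ t])
    (fun t => sub_pos.2 (hlt t))
  obtain ⟨r1, hr1, p, hp, hpr⟩ := ext_periodic (f := fun θ => f₁ (X θ))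
    (fun θ => (hA₁ (X θ)).comp (hXa θ)) (fun θ => by simp only [hXp, hper₁ (X θ)])
  obtain ⟨r2, hr2, P, hP, hPr⟩ := ext_periodic (f := fun θ => f₂ (X θ))
    (fun θ => (hA₂ (X θ)).comp (hXa θ)) (fun θ => by simp only [hXp, hper₂ (X θ)])
  obtain ⟨r3, hr3, U, hU, hUr⟩ := ext_periodic (f := fun θ => X θ - T * θ)
    (fun θ => (hXa θ).sub (analyticAt_const.mul analyticAt_id)) (fun θ => by simp only [hXp]; ring)
  set r := min r1 (min r2 r3) with hr
  have hr0 : 0 < r := by positivity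
  replace hp := hp.mono (show r ≤ r1 from min_le_left _ _)
  replace hP := hP.mono (show r ≤ r2 from (min_le_right _ _).trans (min_le_left _ _))
  replace hU := hU.mono (show r ≤ r3 from (min_le_right _ _).trans (min_le_right _ _))
  set XX : ℂ → ℂ := fun z => U z + T * z with hXX
  have hXXr : ∀ t : ℝ, XX t = X t := fun t => by simp only [hXX, hUr]; push_cast; ring
  have hXXd : ∀ z ∈ strip r, DifferentiableAt ℂ XX z := fun z hz =>
    (hU.diffAt hz).add (by fun_prop)
  have hYr : ∀ t : ℝ, YY c p P t = ((c * (f₂ (X t) - f₁ (X t)) ^ 2 : ℝ) : ℂ) := fun t => by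
    simp only [YY, hpr, hPr]; push_cast; ring
  have hXXc : DifferentiableOn ℂ XX (strip r) := fun z hz => (hXXd z hz).differentiableWithinAt
  have S : CS c T r p P XX := by
    refine ⟨hp, hP, ?_, ?_, ?_⟩
    · intro z hz
      have e : deriv XX z = YY c p P z := by
        refine eq_of_eq_real hr0 (hXXc.deriv (isOpen_strip r)) ?_ (fun t => ?_) hz
        · unfold YY
          exact ((hP.diff.sub hp.diff).pow 2).const_mul _
        · rw [hYr, deriv_of_ext (hXXd t (ofReal_mem_strip hr0 t)) hXXr (hXd t)]
      have := (hXXd z hz).hasDerivAt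
      rw [e] at this
      exact this
    · intro z hz
      simp only [hXX, hU.per z hz]; ring
    · intro z hz
      simp only [hXX, hU.conj z hz, map_add, map_mul, conj_ofReal]
  -- bounds for X'
  obtain ⟨m, m2, hm, hXl, hXu⟩ : ∃ m m2 : ℝ, 0 < m ∧
      (∀ t, m ≤ c * (f₂ t - f₁ t) ^ 2) ∧ (∀ t, c * (f₂ t - f₁ t) ^ 2 ≤ m2) := by
    have hcont : Continuous fun t => c * (f₂ t - f₁ t) ^ 2 := by
      have h1 : Continuous f₁ := continuous_iff_continuousAt.2 fun x => (hA₁ x).continuousAt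
      have h2 : Continuous f₂ := continuous_iff_continuousAt.2 fun x => (hA₂ x).continuousAt
      fun_prop
    have hper : Function.Periodic (fun t => c * (f₂ t - f₁ t) ^ 2) T := fun t => by
      simp only [hper₁ t, hper₂ t]
    obtain ⟨a, _, ha⟩ := isCompact_Icc.exists_isMinOn (s := Set.Icc 0 T)
      (Set.nonempty_Icc.2 hT.le) hcont.continuousOn
    obtain ⟨b, _, hb⟩ := isCompact_Icc.exists_isMaxOn (s := Set.Icc 0 T)
      (Set.nonempty_Icc.2 hT.le) hcont.continuousOn
    refine ⟨c * (f₂ a - f₁ a) ^ 2, c * (f₂ b - f₁ b) ^ 2, ?_, ?_, ?_⟩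
    · have := sub_pos.2 (hlt a); positivity
    · intro t
      obtain ⟨s, hs, he⟩ := hper.exists_mem_Ico₀ hT t
      rw [he]
      exact ha (Set.Ico_subset_Icc_self hs)
    · intro t
      obtain ⟨s, hs, he⟩ := hper.exists_mem_Ico₀ hT t
      rw [he]
      exact hb (Set.Ico_subset_Icc_self hs)
  have hm2 : 0 < m2 := hm.trans_le ((hXl 0).trans (hXu 0))
  have hXdiff : Differentiable ℝ X := fun t => (hXd t).differentiableAt
  have Xlo : ∀ a b, a ≤ b → m * (b - a) ≤ X b - X a := fun a b hab =>
    mul_sub_le_image_sub_of_le_deriv hXdiff (fun t => by rw [(hXd t).deriv]; exact hXl _) hab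
  have Xhi : ∀ a b, a ≤ b → X b - X a ≤ m2 * (b - a) := fun a b hab =>
    image_sub_le_mul_sub_of_deriv_le hXdiff (fun t => by rw [(hXd t).deriv]; exact hXu _) hab
  have hmY : ∀ t : ℝ, m ≤ ‖YY c p P t‖ := fun t => by
    rw [hYr, norm_real, Real.norm_eq_abs]
    exact (hXl _).trans (le_abs_self _)
  obtain ⟨R, d, M, hR, hR1, hd, hM, K, ct1, ct2⟩ := S.KH (g := g) hc hr0 hm hmY
  obtain ⟨ω, hω, hωε, x, y, hx1, hy1, hx, hy, hxy, E1, E2⟩ :=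
    kam K hR hR1 hd hM ct1 ct2 (η / (2 * m2)) (by positivity)
  have Px := lift_props hx
  have Py := lift_props hy
  have hXc : Continuous X := hXdiff.continuous
  rw [lt_div_iff₀ (by positivity)] at hωε
  have hxlo : ∀ θ, 49/50 * ω ≤ x (θ + ω) - x θ := fun θ => by
    have := (abs_le.1 (hx θ (θ + ω) (by linarith))).1; linarith
  have hxhi : ∀ θ, x (θ + ω) - x θ ≤ 51/50 * ω := fun θ => by
    have := (abs_le.1 (hx θ (θ + ω) (by linarith))).2; linarith
  have xy : ∀ θ, 49/100 * ω ≤ y θ - x θ := fun θ => by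
    have := (abs_le.1 (hxy θ)).1; linarith
  have yx : ∀ θ, y θ < x (θ + ω) := fun θ => by
    have := (abs_le.1 (hxy θ)).2; have := hxlo θ; linarith
  -- derivatives on the real line
  have hp1 : ∀ t : ℝ, deriv p t = ((deriv f₁ (X t) * (c * (f₂ (X t) - f₁ (X t)) ^ 2) : ℝ) : ℂ) :=
    fun t => deriv_of_ext (hp.diffAt (ofReal_mem_strip hr0 t)) hpr
      ((hA₁ (X t)).differentiableAt.hasDerivAt.comp t (hXd t))
  have hP1 : ∀ t : ℝ, deriv P t = ((deriv f₂ (X t) * (c * (f₂ (X t) - f₁ (X t)) ^ 2) : ℝ) : ℂ) :=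
    fun t => deriv_of_ext (hP.diffAt (ofReal_mem_strip hr0 t)) hPr
      ((hA₂ (X t)).differentiableAt.hasDerivAt.comp t (hXd t))
  have form1 : ∀ a b : ℝ, a ≠ b → hh1 c g p (deriv p) P XX (YY c p P) a b =
      ((2 * c * (c * (f₂ (X a) - f₁ (X a)) ^ 2) * (Va g f₁ f₂ (X a) (X b) ^ 2 / 2
        - Va g f₁ f₂ (X a) (X b) * deriv f₁ (X a) + g * f₁ (X a)) : ℝ) : ℂ) := by
    intro a b hab
    have hne : X b - X a ≠ 0 := sub_ne_zero.2 fun h => hab (hXm.injective h).symm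
    unfold hh1 Va
    rw [hp1, hYr, hXXr, hXXr, hpr, hPr]
    norm_cast
    generalize X b - X a = D at hne ⊢
    field_simp
    ring
  have form2 : ∀ a b : ℝ, a ≠ b → hh2 c g p P (deriv P) XX (YY c p P) a b =
      ((-(2 * c * (c * (f₂ (X b) - f₁ (X b)) ^ 2)) * (Wa g f₁ f₂ (X a) (X b) ^ 2 / 2
        - Wa g f₁ f₂ (X a) (X b) * deriv f₂ (X b) + g * f₂ (X b)) : ℝ) : ℂ) := by
    intro a b hab
    have hne : X b - X a ≠ 0 := sub_ne_zero.2 fun h => hab (hXm.injective h).symm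
    unfold hh2 Wa
    rw [hP1, hYr, hXXr, hXXr, hpr, hPr]
    norm_cast
    generalize X b - X a = D at hne ⊢
    field_simp
    ring
  refine ⟨ω, hω, fun θ => X (x θ), fun θ => X (y θ),
    ⟨hXc.comp Px.1, hXm.comp Px.2.1, hXs.comp Px.2.2⟩,
    ⟨hXc.comp Py.1, hXm.comp Py.2.1, hXs.comp Py.2.2⟩,
    ⟨m * (49/100 * ω), by positivity, fun θ => ?_⟩, fun θ => hXm (yx θ), fun θ => ?_,
    fun θ => ?_, fun θ => ?_⟩
  · have h1 := xy θ
    have h2 := Xlo (x θ) (y θ) (by nlinarith)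
    exact (mul_le_mul_of_nonneg_left h1 hm.le).trans h2
  · have h1 := hxhi θ
    have h2 := Xhi (x θ) (x (θ + ω)) (by have := hxlo θ; linarith)
    have h3 := mul_le_mul_of_nonneg_left h1 hm2.le
    nlinarith
  · have h1 := E1 θ
    have n1 : x θ ≠ y θ := by have := xy θ; intro h; linarith
    have n2 : x θ ≠ y (θ - ω) := by
      have := yx (θ - ω); rw [sub_add_cancel] at this; exact this.ne'
    rw [form1 _ _ n1, form1 _ _ n2] at h1
    have h2 := ofReal_injective h1
    have h3 : 2 * c * (c * (f₂ (X (x θ)) - f₁ (X (x θ))) ^ 2) ≠ 0 := by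
      have := sub_pos.2 (hlt (X (x θ))); positivity
    have h4 := mul_left_cancel₀ h3 h2
    linarith
  · have h1 := E2 θ
    have n1 : x θ ≠ y θ := by have := xy θ; intro h; linarith
    have n2 : x (θ + ω) ≠ y θ := (yx θ).ne'
    rw [form2 _ _ n1, form2 _ _ n2] at h1
    have h2 := ofReal_injective h1
    have h3 : -(2 * c * (c * (f₂ (X (y θ)) - f₁ (X (y θ))) ^ 2)) ≠ 0 := by
      have := sub_pos.2 (hlt (X (y θ))); exact neg_ne_zero.2 (by positivity)
    have h4 := mul_left_cancel₀ h3 h2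
    linarith

end FU

end

section

namespace FU
open Filter Topology

lemma bdd_of_periodic {f : ℝ → ℝ} {T : ℝ} (hT : 0 < T) (hf : Continuous f)
    (hp : Function.Periodic f T) : ∃ B, ∀ t, |f t| ≤ B := by
  obtain ⟨b, _, hb⟩ := isCompact_Icc.exists_isMaxOn (s := Set.Icc 0 T)
    (Set.nonempty_Icc.2 hT.le) hf.abs.continuousOn
  refine ⟨|f b|, fun t => ?_⟩
  obtain ⟨s, hs, he⟩ := hp.exists_mem_Ico₀ hT t
  rw [he]
  exact hb (Set.Ico_subset_Icc_self hs)

lemma deriv_periodic {f : ℝ → ℝ} {T : ℝ} (hp : Function.Periodic f T) :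
    Function.Periodic (deriv f) T := fun t => by
  have h : (fun x => f (x + T)) = f := funext hp
  rw [← deriv_comp_add_const f T t, h]

lemma speed_mono {N1 N2 δ1 δ2 κ B g d l : ℝ} (h12 : δ1 < δ2) (hs : 0 < δ1 * δ2)
    (hN : |N2 - N1| ≤ B * (δ2 - δ1)) (hl : l / 2 ≤ N1) (h1 : |δ1| ≤ d) (h2 : |δ2| ≤ d)
    (hκ : |κ| ≤ g / 2) (hB : 0 ≤ B) (hd : B * d + g / 2 * d ^ 2 < l / 2) :
    N2 / δ2 + κ * δ2 < N1 / δ1 + κ * δ1 := by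
  have n1 : δ1 ≠ 0 := by rintro rfl; simp at hs
  have n2 : δ2 ≠ 0 := by rintro rfl; simp at hs
  have hd0 : 0 ≤ d := (abs_nonneg _).trans h1
  have e : N2 / δ2 + κ * δ2 - (N1 / δ1 + κ * δ1) =
      ((N2 - N1) * δ1 - N1 * (δ2 - δ1) + κ * (δ1 * δ2) * (δ2 - δ1)) / (δ1 * δ2) := by
    field_simp; ring
  have t1 : (N2 - N1) * δ1 ≤ B * (δ2 - δ1) * d := by
    refine (le_abs_self _).trans ?_
    rw [abs_mul]
    have : 0 ≤ B * (δ2 - δ1) := mul_nonneg hB (by linarith)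
    gcongr
  have t2 : κ * (δ1 * δ2) ≤ g / 2 * d ^ 2 := by
    refine (le_abs_self _).trans ?_
    rw [abs_mul, abs_mul, pow_two]
    have : 0 ≤ g / 2 := (abs_nonneg _).trans hκ
    gcongr
  have t3 : (N2 - N1) * δ1 - N1 * (δ2 - δ1) + κ * (δ1 * δ2) * (δ2 - δ1) < 0 := by
    have h0 : 0 < δ2 - δ1 := by linarith
    have := mul_le_mul_of_nonneg_right t2 h0.le
    nlinarith
  have := div_neg_of_neg_of_pos t3 hs
  linarith

set_option maxHeartbeats 8000000 in
theorem main_bound (g T : ℝ) (hg : 0 ≤ g) (hT : 0 < T) (f₁ f₂ : ℝ → ℝ)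
    (hA₁ : ∀ x : ℝ, AnalyticAt ℝ f₁ x) (hA₂ : ∀ x : ℝ, AnalyticAt ℝ f₂ x)
    (hper₁ : Function.Periodic f₁ T) (hper₂ : Function.Periodic f₂ T)
    (hlt : ∀ s : ℝ, f₁ s < f₂ s)
    (t v tt vv : ℕ → ℝ) (htraj : IsFUTrajectory g f₁ f₂ t v tt vv) :
    ∃ C : ℝ, ∀ n : ℕ, v n ≤ C := by
  have c1 : Continuous f₁ := continuous_iff_continuousAt.2 fun x => (hA₁ x).continuousAt
  have c2 : Continuous f₂ := continuous_iff_continuousAt.2 fun x => (hA₂ x).continuousAt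
  have c1' : Continuous (deriv f₁) := continuous_iff_continuousAt.2 fun x => (hA₁ x).deriv.continuousAt
  have c2' : Continuous (deriv f₂) := continuous_iff_continuousAt.2 fun x => (hA₂ x).deriv.continuousAt
  obtain ⟨B1, hB1⟩ := bdd_of_periodic hT c1 hper₁
  obtain ⟨B2, hB2⟩ := bdd_of_periodic hT c2 hper₂
  obtain ⟨B3, hB3⟩ := bdd_of_periodic hT c1' (deriv_periodic hper₁)
  obtain ⟨B4, hB4⟩ := bdd_of_periodic hT c2' (deriv_periodic hper₂)
  obtain ⟨B, hB0, b1, b2, b3, b4⟩ : ∃ B : ℝ, 0 ≤ B ∧ (∀ t, |f₁ t| ≤ B) ∧ (∀ t, |f₂ t| ≤ B) ∧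
      (∀ t, |deriv f₁ t| ≤ B) ∧ (∀ t, |deriv f₂ t| ≤ B) := by
    have p1 := (abs_nonneg _).trans (hB1 0)
    have p2 := (abs_nonneg _).trans (hB2 0)
    have p3 := (abs_nonneg _).trans (hB3 0)
    have p4 := (abs_nonneg _).trans (hB4 0)
    exact ⟨B1 + B2 + B3 + B4, by linarith, fun t => (hB1 t).trans (by linarith),
      fun t => (hB2 t).trans (by linarith), fun t => (hB3 t).trans (by linarith),
      fun t => (hB4 t).trans (by linarith)⟩
  have lip1 : ∀ a b, |f₁ a - f₁ b| ≤ B * |a - b| := fun a b =>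
    Convex.norm_image_sub_le_of_norm_deriv_le (fun x _ => (hA₁ x).differentiableAt)
      (fun x _ => b3 x) convex_univ (Set.mem_univ b) (Set.mem_univ a)
  have lip2 : ∀ a b, |f₂ a - f₂ b| ≤ B * |a - b| := fun a b =>
    Convex.norm_image_sub_le_of_norm_deriv_le (fun x _ => (hA₂ x).differentiableAt)
      (fun x _ => b4 x) convex_univ (Set.mem_univ b) (Set.mem_univ a)
  obtain ⟨l, hl0, hl⟩ : ∃ l > 0, ∀ t, l ≤ f₂ t - f₁ t := by
    have hper : Function.Periodic (fun t => f₂ t - f₁ t) T := fun t => by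
      simp only [hper₁ t, hper₂ t]
    obtain ⟨a, _, ha⟩ := isCompact_Icc.exists_isMinOn (s := Set.Icc 0 T)
      (Set.nonempty_Icc.2 hT.le) (c2.sub c1).continuousOn
    refine ⟨f₂ a - f₁ a, sub_pos.2 (hlt a), fun t => ?_⟩
    obtain ⟨s, hs, he⟩ := hper.exists_mem_Ico₀ hT t
    rw [he]
    exact ha (Set.Ico_subset_Icc_self hs)
  set d := min 1 (l / (4 * (B + g + 1))) with hd
  have hBg : 0 < B + g + 1 := by linarith
  have hd0 : 0 < d := by positivity
  have hd1 : d ≤ 1 := min_le_left _ _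
  have hdl : (B + g + 1) * d ≤ l / 4 := by
    have : d ≤ l / (4 * (B + g + 1)) := min_le_right _ _
    rw [le_div_iff₀ (by positivity)] at this; linarith
  have hd2 : d ^ 2 ≤ d := by nlinarith
  have hgd : g * d ^ 2 ≤ g * d := mul_le_mul_of_nonneg_left hd2 hg
  have hgd0 : 0 ≤ g * d ^ 2 := by positivity
  have hBd0 : 0 ≤ B * d := by positivity
  have hcond : B * d + g / 2 * d ^ 2 < l / 2 := by nlinarith
  have hN : ∀ a s, |s - a| ≤ d → l / 2 ≤ f₂ s - f₁ a := by
    intro a s h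
    have h1 := (abs_le.1 (lip2 s a)).1
    have h2 := hl a
    have h3 := mul_le_mul_of_nonneg_left h hB0
    nlinarith
  have hN' : ∀ a s, f₂ s - f₁ a ≤ 2 * B := by
    intro a s
    have := (abs_le.1 (b2 s)).2
    have := (abs_le.1 (b1 a)).1
    linarith
  have hVW : ∀ a s, Wa g f₁ f₂ a s = (f₂ s - f₁ a) / (s - a) + (-(g / 2)) * (s - a) := fun a s => by
    unfold Wa; ring
  have hκ1 : |g / 2| ≤ g / 2 := by rw [abs_of_nonneg (by linarith)]
  have hκ2 : |-(g / 2)| ≤ g / 2 := by rw [abs_neg]; exact hκ1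
  -- V decreasing in s
  have Vm : ∀ a s1 s2, s1 < s2 → 0 < (s1 - a) * (s2 - a) → |s1 - a| ≤ d → |s2 - a| ≤ d →
      Va g f₁ f₂ a s2 < Va g f₁ f₂ a s1 := by
    intro a s1 s2 h12 hs h1 h2
    refine speed_mono (by linarith) hs ?_ (hN a s1 h1) h1 h2 hκ1 hB0 hcond
    have := lip2 s2 s1
    rw [abs_of_pos (sub_pos.2 h12)] at this
    convert this using 2 <;> ring
  -- W increasing in t
  have Wm : ∀ s a1 a2, a1 < a2 → 0 < (s - a2) * (s - a1) → |s - a1| ≤ d → |s - a2| ≤ d →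
      Wa g f₁ f₂ a1 s < Wa g f₁ f₂ a2 s := by
    intro s a1 a2 h12 hs h1 h2
    rw [hVW, hVW]
    refine speed_mono (by linarith) hs ?_ (hN a2 s h2) h2 h1 hκ2 hB0 hcond
    have := lip1 a2 a1
    rw [abs_of_pos (sub_pos.2 h12)] at this
    convert this using 2 <;> ring
  -- trajectories
  have tv : ∀ n, v n = Va g f₁ f₂ (t n) (tt n) := by
    intro n
    obtain ⟨_, _, h1, _, h2, _⟩ := htraj n
    have : tt n - t n ≠ 0 := (sub_pos.2 h1).ne'
    unfold Va; rw [h2]; field_simp; ring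
  have tw : ∀ n, vv n = Wa g f₁ f₂ (t (n+1)) (tt n) := by
    intro n
    obtain ⟨_, _, _, h1, _, _, _, h2, _⟩ := htraj n
    have : tt n - t (n+1) ≠ 0 := (sub_neg.2 h1).ne
    unfold Wa; rw [h2]; field_simp; ring
  have EL2 : ∀ n, Wa g f₁ f₂ (t n) (tt n) + Wa g f₁ f₂ (t (n+1)) (tt n) = 2 * deriv f₂ (tt n) := by
    intro n
    have h1 := tv n
    have h2 := tw n
    obtain ⟨_, _, _, _, _, _, h3, _⟩ := htraj n
    unfold Va at h1
    unfold Wa at h2 ⊢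
    linarith
  have EL1 : ∀ n, Va g f₁ f₂ (t (n+1)) (tt n) + v (n+1) = 2 * deriv f₁ (t (n+1)) := by
    intro n
    have h2 := tw n
    obtain ⟨_, _, _, _, _, _, h3, _, _, h4⟩ := htraj n
    unfold Wa at h2
    unfold Va
    linarith
  -- slow growth
  have grow : ∀ n, v (n+1) ≤ v n + (g + 8 * B) := by
    intro n
    obtain ⟨_, h0, h1, h2, _, _, _, h3, _, h4⟩ := htraj n
    have h5 := hN' (t (n+1)) (tt n)
    have p : 0 < t (n+1) - tt n := sub_pos.2 h2
    have h6 : 0 < -(vv n) * (t (n+1) - tt n) := mul_pos (by linarith) p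
    have h7 : g * (t (n+1) - tt n) ≤ g * (1 + (t (n+1) - tt n) ^ 2) :=
      mul_le_mul_of_nonneg_left (by nlinarith [sq_nonneg (t (n+1) - tt n - 1)]) hg
    have h8 : 0 ≤ g * (tt n - t n) := mul_nonneg hg (by linarith)
    have h9 := (abs_le.1 (b3 (t (n+1)))).2
    have h10 := (abs_le.1 (b4 (tt n))).1
    nlinarith
  set V0 := 2 * B / d + g * d + 2 * B with hV0
  -- short flights
  have short1 : ∀ n, V0 ≤ v n → tt n - t n ≤ d := by
    intro n hv
    obtain ⟨_, h0, h1, h2, _, h3, _⟩ := htraj n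
    have hcn : ContinuousOn (fun s => v n * (s - t n) - g / 2 * (s - t n) ^ 2 - (f₂ s - f₁ (t n)))
      (Set.Icc (t n) (t n + d)) := by fun_prop
    have hv2 : 2 * B ≤ v n * d - g / 2 * d ^ 2 := by
      have := mul_le_mul_of_nonneg_right hv hd0.le
      have e : V0 * d = 2 * B + g * d ^ 2 + 2 * B * d := by rw [hV0]; field_simp
      nlinarith
    obtain ⟨s, hs, he⟩ := intermediate_value_Icc (by linarith) hcn
      (show (0:ℝ) ∈ Set.Icc _ _ from ⟨by have := hlt (t n); simp; linarith, by
        have := hN' (t n) (t n + d); simp only [add_sub_cancel_left]; linarith⟩)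
    simp only at he
    have hst : t n < s := by
      refine lt_of_le_of_ne hs.1 fun h => ?_
      rw [← h] at he; have := hlt (t n); simp at he; linarith
    have := h3 s hst (by linarith)
    have := hs.2
    linarith
  have short2 : ∀ n, V0 ≤ v n → t (n+1) - tt n ≤ d := by
    intro n hv
    have hsh := short1 n hv
    obtain ⟨_, h0, h1, h2, _, _, hvv, _, h3, _⟩ := htraj n
    have hcn : ContinuousOn (fun s => -(vv n) * (s - tt n) + g / 2 * (s - tt n) ^ 2 - (f₂ (tt n) - f₁ s))
      (Set.Icc (tt n) (tt n + d)) := by fun_prop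
    have hv2 : 2 * B ≤ -(vv n) * d + g / 2 * d ^ 2 := by
      have h5 := (abs_le.1 (b4 (tt n))).2
      have h6 := mul_le_mul_of_nonneg_left hsh hg
      have h7 : 2 * B / d ≤ -(vv n) := by linarith
      rw [div_le_iff₀ hd0] at h7
      have h8 : 0 ≤ g / 2 * d ^ 2 := by positivity
      linarith
    obtain ⟨s, hs, he⟩ := intermediate_value_Icc (by linarith) hcn
      (show (0:ℝ) ∈ Set.Icc _ _ from ⟨by have := hlt (tt n); simp; linarith, by
        have := hN' (tt n + d) (tt n); simp only [add_sub_cancel_left]; linarith⟩)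
    simp only at he
    have hst : tt n < s := by
      refine lt_of_le_of_ne hs.1 fun h => ?_
      rw [← h] at he; have := hlt (tt n); simp at he; linarith
    have := h3 s hst (by linarith)
    have := hs.2
    linarith
  -- the invariant curve
  set H := |v 0| + |V0| + (g + 8 * B) + 1 with hH
  have hHp : 0 < H := by positivity
  set η := min d (l / (2 * H)) with hη
  have hη0 : 0 < η := by positivity
  have hηd : η ≤ d := min_le_left _ _
  have hηH : H * η ≤ l / 2 := by
    have : η ≤ l / (2 * H) := min_le_right _ _
    rw [le_div_iff₀ (by positivity)] at this; linarith
  obtain ⟨ω, hω, x, y, ⟨hxc, hxm, hxs⟩, ⟨hyc, hym, hys⟩, ⟨ε, hε, hxy⟩, hyx, hxη, E1, E2⟩ :=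
    curves (g := g) hT hA₁ hA₂ hper₁ hper₂ hlt η hη0
  have xy0 : ∀ θ, 0 < y θ - x θ := fun θ => hε.trans_le (hxy θ)
  have xyd : ∀ θ, y θ - x θ < η := fun θ => by have := hyx θ; have := hxη θ; linarith
  have yxd : ∀ θ, x (θ + ω) - y θ < η := fun θ => by have := xy0 θ; have := hxη θ; linarith
  have yx' : ∀ θ, y (θ - ω) < x θ := fun θ => by have := hyx (θ - ω); rwa [sub_add_cancel] at this
  have yxd' : ∀ θ, x θ - y (θ - ω) < η := fun θ => by
    have := yxd (θ - ω); rwa [sub_add_cancel] at this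
  -- curve speeds
  have Plow : ∀ θ, H ≤ Va g f₁ f₂ (x θ) (y θ) := by
    intro θ
    have h1 := xy0 θ
    have h2 := xyd θ
    have h3 := hN (x θ) (y θ) (by rw [abs_of_pos h1]; linarith)
    have h4 : H ≤ (f₂ (y θ) - f₁ (x θ)) / (y θ - x θ) := by
      rw [le_div_iff₀ h1]; nlinarith
    have h5 : 0 ≤ g / 2 * (y θ - x θ) := by positivity
    unfold Va; linarith
  have sq_split : ∀ a b k : ℝ, a ≠ b → a ^ 2 / 2 - a * k = b ^ 2 / 2 - b * k → a + b = 2 * k := by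
    intro a b k hab h
    have h1 : (a - b) * (a + b - 2 * k) = 0 := by linarith
    rcases mul_eq_zero.1 h1 with h2 | h2
    · exact absurd (sub_eq_zero.1 h2) hab
    · linarith
  have C1 : ∀ θ, Va g f₁ f₂ (x θ) (y θ) + Va g f₁ f₂ (x θ) (y (θ - ω)) = 2 * deriv f₁ (x θ) := by
    intro θ
    refine sq_split _ _ _ ?_ (E1 θ)
    have h1 := Plow θ
    have h2 : Va g f₁ f₂ (x θ) (y (θ - ω)) < 0 := by
      have h3 : y (θ - ω) - x θ < 0 := sub_neg.2 (yx' θ)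
      have h4 := hN (x θ) (y (θ - ω)) (by rw [abs_of_neg h3]; have := yxd' θ; linarith)
      have h5 := div_neg_of_pos_of_neg (show 0 < f₂ (y (θ - ω)) - f₁ (x θ) by linarith) h3
      have h6 : g / 2 * (y (θ - ω) - x θ) ≤ 0 := mul_nonpos_of_nonneg_of_nonpos (by linarith) h3.le
      unfold Va; linarith
    intro h; linarith
  have Wpos : ∀ N δ : ℝ, 0 < δ → δ ≤ d → l / 2 ≤ N → 0 < N / δ - g / 2 * δ := by
    intro N δ h1 h2 h3
    have h4 : g / 2 * δ < N / δ := by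
      rw [lt_div_iff₀ h1]
      have : g / 2 * δ * δ ≤ g / 2 * d * d := by gcongr
      nlinarith
    linarith
  have C2 : ∀ θ, Wa g f₁ f₂ (x θ) (y θ) + Wa g f₁ f₂ (x (θ + ω)) (y θ) = 2 * deriv f₂ (y θ) := by
    intro θ
    refine sq_split _ _ _ ?_ (E2 θ)
    have h1 : 0 < Wa g f₁ f₂ (x θ) (y θ) := by
      have h2 := xyd θ
      exact Wpos _ _ (xy0 θ) (by linarith) (hN _ _ (by rw [abs_of_pos (xy0 θ)]; linarith))
    have h2 : Wa g f₁ f₂ (x (θ + ω)) (y θ) < 0 := by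
      have h3 : 0 < x (θ + ω) - y θ := sub_pos.2 (hyx θ)
      have h4 := yxd θ
      have h5 := Wpos (f₂ (y θ) - f₁ (x (θ + ω))) _ h3 (by linarith) (hN _ _ (by
        rw [abs_sub_comm, abs_of_pos h3]; linarith))
      have e : Wa g f₁ f₂ (x (θ + ω)) (y θ) = -((f₂ (y θ) - f₁ (x (θ + ω))) / (x (θ + ω) - y θ)
          - g / 2 * (x (θ + ω) - y θ)) := by
        unfold Wa
        rw [← neg_sub (x (θ + ω)) (y θ), div_neg]; ring
      linarith
    intro h; linarith
  -- invariant
  have inv : ∀ n, ∀ θ, x θ = t n → v n < Va g f₁ f₂ (x θ) (y θ) := by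
    intro n
    induction n with
    | zero =>
      intro θ _
      have := Plow θ
      have := le_abs_self (v 0)
      have := abs_nonneg V0
      linarith
    | succ n ih =>
      intro ψ hψ
      by_cases hv : v n < V0
      · have h1 := grow n
        have h2 := Plow ψ
        have := le_abs_self V0
        have := abs_nonneg (v 0)
        linarith
      rw [not_lt] at hv
      have s1 := short1 n hv
      have s2 := short2 n hv
      have o1 : t n < tt n := (htraj n).2.2.1
      have o2 : tt n < t (n+1) := (htraj n).2.2.2.1
      obtain ⟨θ, hθ⟩ := hxs (t n)
      obtain ⟨φ, hφ⟩ := hys (tt n)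
      have i0 := ih θ hθ
      -- step 1
      have st1 : y θ < tt n := by
        by_contra hcon
        rw [not_lt] at hcon
        rw [tv n, hθ] at i0
        rcases hcon.eq_or_lt with h | h
        · rw [h] at i0; exact lt_irrefl _ i0
        · have q1 : 0 < tt n - t n := by linarith
          have q2 : 0 < y θ - t n := by linarith
          have := Vm (t n) (tt n) (y θ) h (mul_pos q1 q2) (by rw [abs_of_pos q1]; exact s1)
            (by rw [abs_of_pos q2]; have := xyd θ; rw [hθ] at this; linarith)
          linarith
      have hθφ : θ < φ := hym.lt_iff_lt.1 (by rw [hφ]; exact st1)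
      -- step 2
      have hxφ : t n < x φ := by rw [← hθ]; exact hxm hθφ
      have q1 : 0 < tt n - x φ := by have := xy0 φ; rw [hφ] at this; exact this
      have w1 : Wa g f₁ f₂ (t n) (tt n) < Wa g f₁ f₂ (x φ) (tt n) := by
        have q2 : 0 < tt n - t n := by linarith
        exact Wm (tt n) (t n) (x φ) hxφ (mul_pos q1 q2) (by rw [abs_of_pos q2]; exact s1)
          (by rw [abs_of_pos q1]; linarith)
      have w2 : Wa g f₁ f₂ (x (φ + ω)) (tt n) < Wa g f₁ f₂ (t (n+1)) (tt n) := by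
        have := C2 φ
        rw [hφ] at this
        have := EL2 n
        linarith
      have st2 : x (φ + ω) < t (n+1) := by
        by_contra hcon
        rw [not_lt] at hcon
        rcases hcon.eq_or_lt with h | h
        · rw [h] at w2; exact lt_irrefl _ w2
        · have k1 : tt n - t (n+1) < 0 := by linarith
          have k2 : tt n - x (φ + ω) < 0 := by linarith
          have := Wm (tt n) (t (n+1)) (x (φ + ω)) h (mul_pos_of_neg_of_neg k2 k1)
            (by rw [abs_of_neg k1]; linarith)
            (by rw [abs_of_neg k2]; have := yxd φ; rw [hφ] at this; linarith)
          linarith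
      have hφψ : φ + ω < ψ := hxm.lt_iff_lt.1 (by rw [hψ]; exact st2)
      -- step 3
      have k0 : tt n < y (ψ - ω) := by rw [← hφ]; exact hym (by linarith)
      have k1 : tt n - x ψ < 0 := by rw [hψ]; linarith
      have k2 : y (ψ - ω) - x ψ < 0 := sub_neg.2 (yx' ψ)
      have w3 := Vm (x ψ) (tt n) (y (ψ - ω)) k0 (mul_pos_of_neg_of_neg k1 k2)
        (by rw [abs_of_neg k1, hψ]; linarith)
        (by rw [abs_of_neg k2]; have := yxd' ψ; linarith)
      have := C1 ψ
      have h2 := EL1 n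
      rw [← hψ] at h2
      linarith
  refine ⟨2 * B / ε + g / 2 * η, fun n => ?_⟩
  obtain ⟨θ, hθ⟩ := hxs (t n)
  refine (inv n θ hθ).le.trans ?_
  unfold Va
  have h1 := xyd θ
  have h2 := hxy θ
  have h3 := hN' (x θ) (y θ)
  have h4 := xy0 θ
  gcongr

end FU

end

/-- Theorem 2,1: in the Fermi–Ulam model in an external field with analytic,
`T`-periodic plate motions which never touch, every trajectory has bounded
velocity. -/
theorem fermi_ulam_external_field_bounded_velocity
    (g T : ℝ) (hg : 0 ≤ g) (hT : 0 < T) (f₁ f₂ : ℝ → ℝ)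
    (hA₁ : ∀ x : ℝ, AnalyticAt ℝ f₁ x) (hA₂ : ∀ x : ℝ, AnalyticAt ℝ f₂ x)
    (hper₁ : Function.Periodic f₁ T) (hper₂ : Function.Periodic f₂ T)
    (hlt : ∀ s : ℝ, f₁ s < f₂ s)
    (t v tt vv : ℕ → ℝ) (htraj : IsFUTrajectory g f₁ f₂ t v tt vv) :
    ∃ C : ℝ, ∀ n : ℕ, v n ≤ C := by
  exact FU.main_bound g T hg hT f₁ f₂ hA₁ hA₂ hper₁ hper₂ hlt t v tt vv htraj
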